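/- arXiv:2508.08335 — 2 statements merged into one kernel-verified Lean document; each statement's English description precedes it below -/
import Mathlib

section
/- If c_1 < c_2 < c_3 < ... is the increasing enumeration of the cyclic numbers, then c_n is asymptotically equivalent to e^γ · n · log log log n as n → ∞, where γ is the Euler–Mascheroni constant. -/
open Filter Asymptotics Real

/-- A positive integer `n` is *cyclic* if `gcd(n, φ(n)) = 1`. -/
def IsCyclicNum (n : ℕ) : Prop := 0 < n ∧ Nat.gcd n (Nat.totient n) = 1

instance : DecidablePred IsCyclicNum := fun n =>
  decidable_of_iff (0 < n ∧ Nat.gcd n (Nat.totient n) = 1) Iff.rfl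

/-- The `n`-th cyclic number, indexed from 1: `cyclicNum 1 = 1`, `cyclicNum 2 = 2`, .... -/
noncomputable def cyclicNum (n : ℕ) : ℕ := Nat.nth IsCyclicNum (n - 1)

/-- The number of cyclic numbers less than or equal to the real number `x`. -/
noncomputable def cyclicCount (x : ℝ) : ℕ :=
  ((Finset.range (⌊x⌋₊ + 1)).filter IsCyclicNum).card

/-!
A positive integer is cyclic exactly when it is squarefree and has no two prime factors `p`, `q`
with `q ≡ 1 (mod p)`. Put `t = log log N` and count the cyclic numbers up to `N`.

The sum of `1 / q` over the primes `q ≤ N` with `q ≡ 1 (mod p)` is about `t / p`. For primes `p` up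
to `t / (log t) ^ 2` this is large, so by Turán's second moment method almost no multiple of `p`
avoids all those `q`: the cyclic numbers are, up to a negligible set, free of such prime factors.
Summed over the primes `p` beyond `t (log t) ^ 2`, the densities `t / p ^ 2` of the integers
divisible by `p` and by such a `q` are negligible, so almost every integer all of whose prime
factors exceed this level is cyclic. Both levels have logarithm asymptotic to `log t`; Legendre's
sieve and Mertens' third theorem therefore give `e ^ (-γ) N / log t` cyclic numbers up to `N`, and
inverting this relation proves the theorem.

The prime sums must be estimated with explicit dependence on `p`. The part of the series of
`log ζ(s)` supported on `n ≡ 1 (mod p)` is the average of `log |L(s, χ)|` over the characters modulo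
`p`, and `|L(s, χ)|` is bounded below near `s = 1` by a power of `1 + log p` through
`ζ(s)³ |L(s, χ)|⁴ |L(s, χ²)| ≥ 1` when `χ² ≠ 1`, and by a power of `p` through the Lambert series
`∑ χ(n) / (e ^ (n δ) - 1)` for the single quadratic `χ`. Mertens' constant is identified by Abel's
theorem, grouping the `n` with the same `⌈log n⌉` to compare `∑ Λ(n) / (n log n)` with `∑ 1 / c`.
-/

namespace CyclicNumber

/-! ### Dirichlet `L`-functions to the right of `1` -/

theorem norm_sum_Ico_smul_le_of_antitoneOn {E : Type*} [NormedAddCommGroup E] [NormedSpace ℝ E]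
    {a : ℕ → E} {f : ℕ → ℝ} {B : ℝ} {N M : ℕ} (hNM : N ≤ M) (hf₀ : ∀ n ≥ N, 0 ≤ f n)
    (hf : AntitoneOn f (Set.Ici N)) (ha : ∀ n ≥ N, ‖∑ i ∈ Finset.Ico N n, a i‖ ≤ B) :
    ‖∑ i ∈ Finset.Ico N M, f i • a i‖ ≤ B * f N := by
  have summation_by_parts : ∑ i ∈ Finset.Ico N M, f i • a i = f M • ∑ i ∈ Finset.Ico N M, a i +
      ∑ i ∈ Finset.Ico N M, (f i - f (i + 1)) • ∑ j ∈ Finset.Ico N (i + 1), a j := by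
    induction M, hNM using Nat.le_induction with
    | base => simp
    | succ M hM ih =>
      simp only [Finset.sum_Ico_succ_top hM, ih]
      module
  have hdiff : ∀ i ∈ Finset.Ico N M, 0 ≤ f i - f (i + 1) := fun i hi ↦ by
    have hNi := (Finset.mem_Ico.1 hi).1
    exact sub_nonneg.2 (hf hNi (Nat.le_succ_of_le hNi) i.le_succ)
  calc ‖∑ i ∈ Finset.Ico N M, f i • a i‖
      ≤ ‖f M • ∑ i ∈ Finset.Ico N M, a i‖ +
          ∑ i ∈ Finset.Ico N M, ‖(f i - f (i + 1)) • ∑ j ∈ Finset.Ico N (i + 1), a j‖ := by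
        rw [summation_by_parts]
        exact (norm_add_le _ _).trans (by gcongr; exact norm_sum_le _ _)
    _ ≤ f M * B + ∑ i ∈ Finset.Ico N M, (f i - f (i + 1)) * B := by
        gcongr with i hi
        · rw [norm_smul, Real.norm_of_nonneg (hf₀ M hNM)]
          exact mul_le_mul_of_nonneg_left (ha M hNM) (hf₀ M hNM)
        · rw [norm_smul, Real.norm_of_nonneg (hdiff i hi)]
          exact mul_le_mul_of_nonneg_left (ha _ (by grind)) (hdiff i hi)
    _ = B * f N := by
        rw [← Finset.sum_mul, Finset.sum_Ico_eq_sum_range, ← neg_neg (Finset.sum _ _),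
          ← Finset.sum_neg_distrib]
        simp only [neg_sub, add_assoc N, Finset.sum_range_sub (fun i ↦ f (N + i))]
        rw [add_zero, Nat.add_sub_cancel' hNM]
        ring

section CharacterSums

variable {m : ℕ} {χ : DirichletCharacter ℂ m}

theorem norm_apply_mul_ofReal_le (χ : DirichletCharacter ℂ m) {x : ℝ} (hx : 0 ≤ x) (n : ℕ) :
    ‖χ n * (x : ℂ)‖ ≤ x := by
  rw [norm_mul, Complex.norm_real, Real.norm_of_nonneg hx]
  exact mul_le_of_le_one_left hx (χ.norm_le_one _)

variable [NeZero m]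

theorem sum_Ico_add_level_eq_zero (hχ : χ ≠ 1) (N : ℕ) :
    ∑ i ∈ Finset.Ico N (N + m), χ i = 0 := by
  induction N with
  | zero =>
    rw [← MulChar.sum_eq_zero_of_ne_one hχ, zero_add, ← Finset.range_eq_Ico]
    refine Finset.sum_nbij' (fun i ↦ (i : ZMod m)) ZMod.val ?_ ?_ ?_ ?_ ?_
    all_goals simp +contextual [ZMod.val_lt, ZMod.val_natCast, Nat.mod_eq_of_lt]
  | succ N ih =>
    have hm := NeZero.pos m
    rw [Finset.sum_eq_sum_Ico_succ_bot (by omega)] at ih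
    rw [add_right_comm, Finset.sum_Ico_succ_top (by omega), ← ih]
    simp [add_comm]

theorem norm_sum_Ico_apply_le (hχ : χ ≠ 1) (N n : ℕ) : ‖∑ i ∈ Finset.Ico N n, χ i‖ ≤ m := by
  have hm := NeZero.pos m
  induction hk : n - N using Nat.strong_induction_on generalizing N with
  | _ k ih =>
    by_cases hkm : k < m
    · calc ‖∑ i ∈ Finset.Ico N n, χ i‖ ≤ ∑ i ∈ Finset.Ico N n, ‖χ i‖ := norm_sum_le _ _
        _ ≤ ∑ _i ∈ Finset.Ico N n, (1 : ℝ) := by gcongr; exact χ.norm_le_one _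
        _ ≤ m := by simpa [hk] using hkm.le
    · rw [← Finset.sum_Ico_consecutive _ (N.le_add_right m) (by omega),
        sum_Ico_add_level_eq_zero hχ, zero_add]
      exact ih (k - m) (by omega) (N + m) (by omega)

theorem norm_tsum_apply_mul_le_of_antitoneOn (hχ : χ ≠ 1) {f : ℕ → ℝ} {N : ℕ}
    (hf₀ : ∀ n, 0 ≤ f n) (hf : AntitoneOn f (Set.Ici N)) (hs : Summable fun n : ℕ ↦ χ n * f n) :
    ‖∑' n : ℕ, χ n * f n‖ ≤ ∑ n ∈ Finset.range N, f n + m * f N := by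
  refine le_of_tendsto hs.hasSum.tendsto_sum_nat.norm ?_
  filter_upwards [eventually_ge_atTop N] with M hM
  rw [← Finset.sum_range_add_sum_Ico _ hM]
  refine norm_add_le_of_le
    (norm_sum_le_of_le _ fun n _ ↦ norm_apply_mul_ofReal_le χ (hf₀ n) n) ?_
  simp only [mul_comm (χ _), ← Complex.real_smul]
  exact norm_sum_Ico_smul_le_of_antitoneOn hM (fun n _ ↦ hf₀ n) hf
    fun n _ ↦ norm_sum_Ico_apply_le hχ N n

end CharacterSums

/-- The quantity `1 + log m`; the bounds for `L(s, χ)` with `χ` of level `m` and `s` near `1` are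
powers of it. -/
noncomputable def logLevel (m : ℕ) : ℝ := 1 + Real.log m

theorem one_le_logLevel (m : ℕ) : 1 ≤ logLevel m :=
  le_add_of_nonneg_right (Real.log_natCast_nonneg m)

theorem sum_range_rpow_neg_le_logLevel (m : ℕ) {s : ℝ} (hs : 1 < s) :
    ∑ n ∈ Finset.range (m + 1), (n : ℝ) ^ (-s) ≤ logLevel m := by
  refine le_trans ?_ (harmonic_le_one_add_log m)
  rw [Finset.sum_range_succ', harmonic]
  push_cast
  rw [Real.zero_rpow (by linarith), add_zero]
  gcongr with i
  rw [← Real.rpow_neg_one]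
  gcongr
  linarith [(Nat.cast_nonneg i : (0 : ℝ) ≤ i)]

theorem mul_add_one_rpow_neg_le_one (m : ℕ) {s : ℝ} (hs : 1 < s) :
    (m : ℝ) * ((m + 1 : ℕ) : ℝ) ^ (-s) ≤ 1 := by
  have hm : (1 : ℝ) ≤ (m + 1 : ℕ) := by simp
  calc (m : ℝ) * ((m + 1 : ℕ) : ℝ) ^ (-s) ≤ (m + 1 : ℕ) * ((m + 1 : ℕ) : ℝ) ^ (-1 : ℝ) := by
        gcongr
        omega
    _ = 1 := by rw [Real.rpow_neg_one, mul_inv_cancel₀ (by positivity)]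

theorem log_add_one_le_logLevel {m : ℕ} (hm : m ≠ 0) : Real.log (m + 1 : ℕ) ≤ logLevel m := by
  have hm1 : (1 : ℝ) ≤ m := by exact_mod_cast Nat.one_le_iff_ne_zero.2 hm
  have hle : ((m + 1 : ℕ) : ℝ) ≤ Real.exp 1 * m := by
    push_cast
    nlinarith [Real.add_one_le_exp (1 : ℝ)]
  calc Real.log (m + 1 : ℕ) ≤ Real.log (Real.exp 1 * m) := by gcongr
    _ = logLevel m := by rw [Real.log_mul (by positivity) (by positivity), Real.log_exp, logLevel]

section LFunctionBounds

open DirichletCharacter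

variable {m : ℕ} [NeZero m] {χ : DirichletCharacter ℂ m} {s t : ℝ}

theorem one_lt_of_character_ne_one (hχ : χ ≠ 1) : 1 < m := by
  by_contra! hm
  obtain rfl : m = 1 := le_antisymm hm (NeZero.pos m)
  exact hχ (level_one χ)

theorem LSeries_term_ofReal (a : ℕ → ℂ) (hs : s ≠ 0) (n : ℕ) :
    LSeries.term a s n = a n * ((n : ℝ) ^ (-s) : ℝ) := by
  rw [LSeries.term_of_ne_zero' (by exact_mod_cast hs), Complex.ofReal_cpow n.cast_nonneg,
    div_eq_mul_inv, ← Complex.cpow_neg]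
  norm_num

theorem summable_rpow_neg (hs : 1 < s) : Summable fun n : ℕ ↦ (n : ℝ) ^ (-s) := by
  simpa [Real.rpow_neg] using Real.summable_nat_rpow_inv.2 hs

theorem hasSum_LFunction (hs : 1 < s) :
    HasSum (fun n : ℕ ↦ χ n * ((n : ℝ) ^ (-s) : ℝ)) (LFunction χ s) := by
  have hs' : 1 < (s : ℂ).re := by simpa
  rw [LFunction_eq_LSeries χ hs']
  exact (LSeriesSummable_of_one_lt_re χ hs').hasSum.congr_fun fun n ↦
    (LSeries_term_ofReal (fun n : ℕ ↦ χ n) (by positivity) n).symm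

theorem hasSum_deriv_LFunction (hs : 1 < s) :
    HasSum (fun n : ℕ ↦ χ n * (Real.log n * (n : ℝ) ^ (-s) : ℝ)) (-deriv (LFunction χ) s) := by
  have hs' : 1 < (s : ℂ).re := by simpa
  have habs : LSeries.abscissaOfAbsConv (fun n : ℕ ↦ χ n) < (s : ℂ).re := by
    rw [absicssaOfAbsConv_eq_one (NeZero.ne m)]
    exact_mod_cast hs
  rw [deriv_LFunction_eq_deriv_LSeries χ hs', LSeries_deriv habs, neg_neg]
  refine (LSeriesSummable_logMul_of_lt_re habs).hasSum.congr_fun fun n ↦ ?_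
  rw [LSeries_term_ofReal _ (by positivity), LSeries.logMul, ← Complex.natCast_log]
  push_cast
  ring

theorem tsum_rpow_neg_le (hs : 1 < s) : ∑' n : ℕ, (n : ℝ) ^ (-s) ≤ 1 + (s - 1)⁻¹ := by
  have hlim := ZetaAsymptotics.zeta_limit_aux1 hs
  have hterm : 0 ≤ ZetaAsymptotics.termTSum s :=
    tsum_nonneg fun n ↦ ZetaAsymptotics.term_nonneg _ _
  rw [(summable_rpow_neg hs).tsum_eq_zero_add, Nat.cast_zero, Real.zero_rpow (by linarith)]
  simp only [zero_add, Nat.cast_add, Nat.cast_one, one_div,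
    Real.rpow_neg (Nat.cast_add_one_pos _).le] at hlim ⊢
  nlinarith

theorem norm_LFunction_le_one_add_inv (χ : DirichletCharacter ℂ m) (hs : 1 < s) :
    ‖LFunction χ s‖ ≤ 1 + (s - 1)⁻¹ := by
  rw [← (hasSum_LFunction hs).tsum_eq]
  exact (tsum_of_norm_bounded (summable_rpow_neg hs).hasSum fun n ↦
    norm_apply_mul_ofReal_le χ (by positivity) n).trans (tsum_rpow_neg_le hs)

theorem norm_LFunction_le (hχ : χ ≠ 1) (hs : 1 < s) : ‖LFunction χ s‖ ≤ 2 * logLevel m := by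
  have hanti : AntitoneOn (fun n : ℕ ↦ (n : ℝ) ^ (-s)) (Set.Ici (m + 1)) := fun a ha b _ hab ↦ by
    have ha₀ : 0 < a := (Nat.succ_pos m).trans_le ha
    exact Real.rpow_le_rpow_of_nonpos (by positivity) (by exact_mod_cast hab) (by linarith)
  rw [← (hasSum_LFunction hs).tsum_eq]
  linarith [norm_tsum_apply_mul_le_of_antitoneOn hχ (fun n ↦ by positivity) hanti
    (hasSum_LFunction hs).summable, sum_range_rpow_neg_le_logLevel m hs,
    mul_add_one_rpow_neg_le_one m hs, one_le_logLevel m]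

theorem antitoneOn_log_mul_rpow_neg (hs : 1 < s) :
    AntitoneOn (fun n : ℕ ↦ Real.log n * (n : ℝ) ^ (-s)) (Set.Ici 3) := by
  have hexp {n : ℕ} (hn : 3 ≤ n) : Real.exp s⁻¹ ≤ n := by
    have hn' : (3 : ℝ) ≤ n := by exact_mod_cast hn
    have : Real.exp s⁻¹ ≤ Real.exp 1 := Real.exp_le_exp.2 (inv_le_one_of_one_le₀ hs.le)
    linarith [Real.exp_one_lt_d9]
  intro a ha b hb hab
  simpa only [Real.rpow_neg (Nat.cast_nonneg _), div_eq_mul_inv] using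
    Real.log_div_self_rpow_antitoneOn (by linarith) (hexp ha) (hexp hb)
      (by exact_mod_cast hab : (a : ℝ) ≤ b)

theorem norm_deriv_LFunction_le (hχ : χ ≠ 1) (hs : 1 < s) :
    ‖deriv (LFunction χ) s‖ ≤ 2 * logLevel m ^ 2 := by
  have hm := one_lt_of_character_ne_one hχ
  have hhead : ∑ n ∈ Finset.range (m + 1), Real.log n * (n : ℝ) ^ (-s) ≤
      Real.log m * logLevel m := calc
    _ ≤ ∑ n ∈ Finset.range (m + 1), Real.log m * (n : ℝ) ^ (-s) := by
      refine Finset.sum_le_sum fun n hn ↦ mul_le_mul_of_nonneg_right ?_ (by positivity)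
      rcases n.eq_zero_or_pos with rfl | hn₀
      · simpa using Real.log_natCast_nonneg m
      · gcongr
        exact Nat.lt_succ_iff.1 (Finset.mem_range.1 hn)
    _ ≤ _ := by
      rw [← Finset.mul_sum]
      gcongr
      exact sum_range_rpow_neg_le_logLevel m hs
  have htail : (m : ℝ) * (Real.log (m + 1 : ℕ) * ((m + 1 : ℕ) : ℝ) ^ (-s)) ≤ logLevel m := calc
    _ = Real.log (m + 1 : ℕ) * (m * ((m + 1 : ℕ) : ℝ) ^ (-s)) := by ring
    _ ≤ logLevel m * 1 := mul_le_mul (log_add_one_le_logLevel (by omega))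
      (mul_add_one_rpow_neg_le_one m hs) (by positivity) (by linarith [one_le_logLevel m])
    _ = logLevel m := mul_one _
  have hanti : AntitoneOn (fun n : ℕ ↦ Real.log n * (n : ℝ) ^ (-s)) (Set.Ici (m + 1)) :=
    (antitoneOn_log_mul_rpow_neg hs).mono (Set.Ici_subset_Ici.2 (by omega))
  have hbound := norm_tsum_apply_mul_le_of_antitoneOn hχ
    (fun n ↦ mul_nonneg (Real.log_natCast_nonneg n) (by positivity)) hanti
    (hasSum_deriv_LFunction hs).summable
  rw [(hasSum_deriv_LFunction hs).tsum_eq, norm_neg] at hbound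
  have := one_le_logLevel m
  have : Real.log m = logLevel m - 1 := (add_sub_cancel_left _ _).symm
  nlinarith

theorem norm_LFunction_sub_le (hχ : χ ≠ 1) (hs : 1 < s) (ht : 1 < t) :
    ‖LFunction χ s - LFunction χ t‖ ≤ 2 * logLevel m ^ 2 * |s - t| := by
  simpa using Convex.norm_image_sub_le_of_norm_hasDerivWithin_le (s := Set.Ioi (1 : ℝ))
    (f := fun x : ℝ ↦ LFunction χ x) (C := 2 * logLevel m ^ 2)
    (fun x _ ↦ (differentiable_LFunction hχ x).hasDerivAt.comp_ofReal.hasDerivWithinAt)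
    (fun x hx ↦ norm_deriv_LFunction_le hχ hx) (convex_Ioi 1) ht hs

theorem one_le_norm_LFunction_pow_mul (χ : DirichletCharacter ℂ m) (hs : 1 < s) :
    1 ≤ (1 + (s - 1)⁻¹) ^ 3 * ‖LFunction χ s‖ ^ 4 * ‖LFunction (χ ^ 2) s‖ := by
  have hprod := norm_LFunction_product_ge_one χ (sub_pos.2 hs) 0
  have htriv := norm_LFunction_le_one_add_inv (1 : DirichletCharacter ℂ m) hs
  simp only [Complex.ofReal_sub, Complex.ofReal_one, add_sub_cancel, Complex.ofReal_zero, mul_zero,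
    add_zero, norm_mul, norm_pow] at hprod
  refine hprod.trans ?_
  gcongr

theorem inv_one_add_inv_le_norm_LFunction (χ : DirichletCharacter ℂ m) (hs : 1 < s) :
    (1 + (s - 1)⁻¹)⁻¹ ≤ ‖LFunction χ s‖ := by
  have hx : 0 < (s - 1)⁻¹ := inv_pos.2 (sub_pos.2 hs)
  have hpow : 1 ≤ ((1 + (s - 1)⁻¹) * ‖LFunction χ s‖) ^ 4 := by
    refine (one_le_norm_LFunction_pow_mul χ hs).trans ?_
    grw [norm_LFunction_le_one_add_inv (χ ^ 2) hs]
    exact le_of_eq (by ring)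
  rw [inv_le_iff_one_le_mul₀' (by positivity)]
  exact (one_le_pow_iff_of_nonneg (by positivity) (by norm_num)).1 hpow

theorem one_le_mul_norm_LFunction_of_inv_le (hχ : χ ^ 2 ≠ 1) (hs : 1 < s) (hs₂ : s ≤ 2)
    (hfar : (s - 1)⁻¹ ≤ 2 ^ 12 * logLevel m ^ 9) :
    1 ≤ 2 ^ 10 * logLevel m ^ 7 * ‖LFunction χ s‖ := by
  have hℓ := one_le_logLevel m
  have hζ : 1 + (s - 1)⁻¹ ≤ 2 * (2 ^ 12 * logLevel m ^ 9) := by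
    linarith [(one_le_inv₀ (sub_pos.2 hs)).2 (by linarith : s - 1 ≤ 1)]
  have : 0 < (s - 1)⁻¹ := inv_pos.2 (sub_pos.2 hs)
  have hpow : 1 ≤ (2 ^ 10 * logLevel m ^ 7 * ‖LFunction χ s‖) ^ 4 := calc
    1 ≤ (1 + (s - 1)⁻¹) ^ 3 * ‖LFunction χ s‖ ^ 4 * ‖LFunction (χ ^ 2) s‖ :=
      one_le_norm_LFunction_pow_mul χ hs
    _ ≤ (2 * (2 ^ 12 * logLevel m ^ 9)) ^ 3 * ‖LFunction χ s‖ ^ 4 * (2 * logLevel m) := by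
      gcongr
      exact norm_LFunction_le hχ hs
    _ = _ := by ring
  exact (one_le_pow_iff_of_nonneg (by positivity) (by norm_num)).1 hpow

/-- Near `1` the inequality `ζ(s)³ |L(s, χ)|⁴ |L(s, χ²)| ≥ 1` degenerates, so there `L(s, χ)` is
compared with its value at `1 + 2⁻¹² ℓ⁻⁹`, where `ℓ = logLevel m`: at this point the Lipschitz bound
costs at most half of the lower bound. -/
theorem one_le_mul_norm_LFunction (hχ : χ ^ 2 ≠ 1) (hs : 1 < s) (hs₂ : s ≤ 2) :
    1 ≤ 2 ^ 11 * logLevel m ^ 7 * ‖LFunction χ s‖ := by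
  have hℓ := one_le_logLevel m
  rcases le_or_gt (s - 1)⁻¹ (2 ^ 12 * logLevel m ^ 9) with hfar | hnear
  · have := one_le_mul_norm_LFunction_of_inv_le hχ hs hs₂ hfar
    have : 0 ≤ logLevel m ^ 7 * ‖LFunction χ s‖ := by positivity
    linarith
  set t : ℝ := 1 + (2 ^ 12 * logLevel m ^ 9)⁻¹ with ht
  have hst : s ≤ t := by
    linarith [(le_inv_comm₀ (by positivity) (sub_pos.2 hs)).1 hnear.le]
  have ht₂ : t ≤ 2 := by
    have : (2 ^ 12 * logLevel m ^ 9)⁻¹ ≤ 1 :=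
      inv_le_one_of_one_le₀ (by linarith [one_le_pow₀ (n := 9) hℓ])
    linarith
  have hatt := one_le_mul_norm_LFunction_of_inv_le hχ (hs.trans_le hst) ht₂ (by simp [ht])
  have hlip : ‖LFunction χ t‖ ≤ ‖LFunction χ s‖ + 2 * logLevel m ^ 2 * (t - 1) := by
    have hχ₁ : χ ≠ 1 := by rintro rfl; exact hχ (one_pow 2)
    have hdiff := norm_LFunction_sub_le hχ₁ (hs.trans_le hst) hs
    have hmono : 2 * logLevel m ^ 2 * (t - s) ≤ 2 * logLevel m ^ 2 * (t - 1) := by gcongr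
    rw [abs_of_nonneg (by linarith)] at hdiff
    linarith [norm_sub_norm_le (LFunction χ t) (LFunction χ s)]
  have hcost : 2 ^ 10 * logLevel m ^ 7 * (2 * logLevel m ^ 2 * (t - 1)) = 1 / 2 := by
    rw [ht, add_sub_cancel_left]
    field_simp
  have := mul_le_mul_of_nonneg_left hlip (show 0 ≤ 2 ^ 10 * logLevel m ^ 7 by positivity)
  linarith

end LFunctionBounds

/-! ### Quadratic characters -/

section Lambert

variable {a : ℕ → ℂ} {r : ℂ}

theorem summable_prod_apply_mul_pow (ha : ∀ n, ‖a n‖ ≤ 1) (hr : ‖r‖ < 1) :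
    Summable fun c : ℕ+ × ℕ+ ↦ a c.1 * r ^ (c.1 * c.2 : ℕ) := by
  refine Summable.of_norm_bounded (summable_prod_mul_pow 0 hr).norm fun c ↦ ?_
  rw [norm_mul, pow_zero, one_mul]
  exact mul_le_of_le_one_left (norm_nonneg _) (ha _)

theorem tsum_prod_apply_mul_pow (ha : ∀ n, ‖a n‖ ≤ 1) (hr : ‖r‖ < 1) :
    ∑' c : ℕ+ × ℕ+, a c.1 * r ^ (c.1 * c.2 : ℕ) =
      ∑' d : ℕ+, a d * (r ^ (d : ℕ) / (1 - r ^ (d : ℕ))) := by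
  rw [(summable_prod_apply_mul_pow ha hr).tsum_prod]
  refine tsum_congr fun d ↦ ?_
  dsimp only
  have hrd : ‖r ^ (d : ℕ)‖ < 1 := by
    simpa using pow_lt_one₀ (norm_nonneg r) hr d.ne_zero
  rw [tsum_pnat_eq_tsum_succ (f := fun k ↦ a d * r ^ ((d : ℕ) * k)), div_eq_mul_inv,
    ← tsum_geometric_of_norm_lt_one hrd]
  simp only [pow_mul, pow_succ', tsum_mul_left]

theorem hasSum_sum_divisors_mul_pow (ha : ∀ n, ‖a n‖ ≤ 1) (hr : ‖r‖ < 1) :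
    HasSum (fun n : ℕ+ ↦ (∑ d ∈ (n : ℕ).divisors, a d) * r ^ (n : ℕ))
      (∑' d : ℕ+, a d * (r ^ (d : ℕ) / (1 - r ^ (d : ℕ)))) := by
  rw [← tsum_prod_apply_mul_pow ha hr]
  refine (sigmaAntidiagonalEquivProd.hasSum_iff.2
    (summable_prod_apply_mul_pow ha hr).hasSum).sigma fun n ↦ ?_
  have hfiber : (∑ d ∈ (n : ℕ).divisors, a d) * r ^ (n : ℕ) =
      ∑ c : (n : ℕ).divisorsAntidiagonal, a c.1.1 * r ^ (c.1.1 * c.1.2) := by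
    rw [Finset.univ_eq_attach, (n : ℕ).divisorsAntidiagonal.sum_attach
      fun x ↦ a x.1 * r ^ (x.1 * x.2), Nat.sum_divisorsAntidiagonal fun x y ↦ a x * r ^ (x * y),
      Finset.sum_mul]
    exact Finset.sum_congr rfl fun d hd ↦ by rw [Nat.mul_div_cancel' (Nat.dvd_of_mem_divisors hd)]
  rw [hfiber]
  exact hasSum_fintype _

end Lambert

section ZetaMul

open DirichletCharacter
open scoped ComplexOrder

variable {m : ℕ} {χ : DirichletCharacter ℂ m}

theorem zetaMul_eq_sum_divisors (χ : DirichletCharacter ℂ m) (n : ℕ) :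
    zetaMul χ n = ∑ d ∈ n.divisors, χ d := by
  rw [zetaMul, ArithmeticFunction.coe_zeta_mul_apply]
  refine Finset.sum_congr rfl fun d hd ↦ ?_
  simp [toArithmeticFunction, (Nat.pos_of_mem_divisors hd).ne']

theorem one_le_zetaMul_prime_pow_two_mul (hχ : χ ^ 2 = 1) {q : ℕ} (hq : q.Prime) (k : ℕ) :
    1 ≤ zetaMul χ (q ^ (2 * k)) := by
  rw [zetaMul_eq_sum_divisors, Nat.sum_divisors_prime_pow hq]
  simp only [Nat.cast_pow, map_pow]
  rcases MulChar.isQuadratic_iff_sq_eq_one.mpr hχ q with h | h | h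
  · simp [h, Finset.sum_range_succ']
  · simp [h, Complex.nonneg_iff]
  · simp [h, neg_one_geom_sum]

theorem one_le_zetaMul_sq (hχ : χ ^ 2 = 1) {n : ℕ} (hn : n ≠ 0) : 1 ≤ zetaMul χ (n ^ 2) := by
  rw [χ.isMultiplicative_zetaMul.multiplicative_factorization _ (pow_ne_zero 2 hn), Finsupp.prod]
  refine Finset.prod_induction _ (fun z : ℂ ↦ 1 ≤ z) (fun _ _ ↦ one_le_mul_of_one_le_of_one_le)
    le_rfl fun q hq ↦ ?_
  rw [Nat.factorization_pow, Finsupp.smul_apply, smul_eq_mul]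
  exact one_le_zetaMul_prime_pow_two_mul hχ (Nat.prime_of_mem_primeFactors hq) _

end ZetaMul

section LambertKernel

/-- The kernel `1 / (eᵘ - 1)` of the Lambert series `∑ χ(n) / (e^{nδ} - 1)`. -/
noncomputable def lambertKernel (u : ℝ) : ℝ := (Real.exp u - 1)⁻¹

variable {u δ : ℝ}

theorem lambertKernel_nonneg (hu : 0 ≤ u) : 0 ≤ lambertKernel u :=
  inv_nonneg.2 (sub_nonneg.2 (Real.one_le_exp hu))

theorem lambertKernel_natCast_mul (δ : ℝ) (n : ℕ) :
    (lambertKernel (n * δ) : ℂ) =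
      ((Real.exp (-δ) : ℝ) : ℂ) ^ n / (1 - ((Real.exp (-δ) : ℝ) : ℂ) ^ n) := by
  have : lambertKernel (n * δ) = Real.exp (-δ) ^ n / (1 - Real.exp (-δ) ^ n) := by
    rw [lambertKernel, ← Real.exp_nat_mul, mul_neg, Real.exp_neg]
    field_simp
  rw [this]
  push_cast
  rfl

theorem norm_exp_neg_lt_one (hδ : 0 < δ) : ‖((Real.exp (-δ) : ℝ) : ℂ)‖ < 1 := by
  rw [Complex.norm_real, Real.norm_of_nonneg (Real.exp_pos _).le]
  exact Real.exp_lt_one_iff.2 (neg_lt_zero.2 hδ)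

theorem summable_lambertKernel (hδ : 0 < δ) : Summable fun n : ℕ ↦ lambertKernel (n * δ) := by
  rw [← Complex.summable_ofReal]
  simpa [lambertKernel_natCast_mul] using
    summable_norm_pow_mul_geometric_div_one_sub 0 (norm_exp_neg_lt_one hδ)

theorem lambertKernel_le_inv (hu : 0 < u) : lambertKernel u ≤ u⁻¹ :=
  inv_anti₀ hu (by linarith [Real.add_one_le_exp u])

theorem inv_sub_lambertKernel_le_one (hu : 0 < u) : u⁻¹ - lambertKernel u ≤ 1 := by
  have hexp : 0 < Real.exp u - 1 := by linarith [Real.add_one_lt_exp hu.ne']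
  have hmul : Real.exp (-u) * Real.exp u = 1 := by rw [← Real.exp_add]; simp
  have hle : Real.exp u - 1 ≤ u * Real.exp u := by
    nlinarith [Real.add_one_le_exp (-u), Real.exp_pos u]
  rw [lambertKernel, ← sub_nonneg]
  calc (0 : ℝ) ≤ (u * Real.exp u - (Real.exp u - 1)) / (u * (Real.exp u - 1)) := by
        exact div_nonneg (by linarith) (by positivity)
    _ = 1 - (u⁻¹ - (Real.exp u - 1)⁻¹) := by field_simp; ring

theorem sq_mul_exp_le_sq_exp_sub_one (hu : 0 ≤ u) :
    u ^ 2 * Real.exp u ≤ (Real.exp u - 1) ^ 2 := by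
  have hsinh : u / 2 ≤ Real.sinh (u / 2) := Real.self_le_sinh_iff.2 (by linarith)
  have hsq : Real.exp u = Real.exp (u / 2) ^ 2 := by rw [← Real.exp_nat_mul]; ring_nf
  have hexp : u * Real.exp (u / 2) ≤ Real.exp u - 1 := calc
    u * Real.exp (u / 2) ≤ (2 * Real.sinh (u / 2)) * Real.exp (u / 2) := by gcongr; linarith
    _ = Real.exp u - 1 := by rw [Real.sinh_eq, hsq, Real.exp_neg]; field_simp
  calc u ^ 2 * Real.exp u = (u * Real.exp (u / 2)) ^ 2 := by rw [hsq]; ring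
    _ ≤ _ := by gcongr

theorem antitoneOn_inv_sub_lambertKernel :
    AntitoneOn (fun u ↦ u⁻¹ - lambertKernel u) (Set.Ioi 0) := by
  have hderiv (u : ℝ) (hu : 0 < u) : HasDerivAt (fun u ↦ u⁻¹ - lambertKernel u)
      (-(u ^ 2)⁻¹ - -Real.exp u / (Real.exp u - 1) ^ 2) u :=
    (hasDerivAt_inv hu.ne').sub (((Real.hasDerivAt_exp u).sub_const 1).fun_inv
      (by linarith [Real.add_one_lt_exp hu.ne']))
  refine antitoneOn_of_deriv_nonpos (convex_Ioi 0)
    (fun u hu ↦ (hderiv u hu).continuousAt.continuousWithinAt)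
    (fun u hu ↦ (hderiv u (interior_subset hu)).differentiableAt.differentiableWithinAt)
    fun u hu ↦ ?_
  replace hu : 0 < u := by simpa using hu
  have : 0 < Real.exp u - 1 := by linarith [Real.add_one_lt_exp hu.ne']
  rw [(hderiv u hu).deriv, neg_div, sub_neg_eq_add, neg_add_nonpos_iff, inv_eq_one_div,
    div_le_div_iff₀ (by positivity) (by positivity)]
  linarith [sq_mul_exp_le_sq_exp_sub_one hu.le]

end LambertKernel

section QuadraticCharacter

open DirichletCharacter
open scoped ComplexOrder

variable {m : ℕ} {χ : DirichletCharacter ℂ m} {σ δ : ℝ}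

theorem hasSum_zetaMul_mul_exp_neg (χ : DirichletCharacter ℂ m) (hδ : 0 < δ) :
    HasSum (fun n : ℕ+ ↦ zetaMul χ n * ((Real.exp (-δ) ^ (n : ℕ) : ℝ) : ℂ))
      (∑' n : ℕ+, χ n * lambertKernel (n * δ)) := by
  simpa only [zetaMul_eq_sum_divisors, lambertKernel_natCast_mul, Complex.ofReal_pow] using
    hasSum_sum_divisors_mul_pow (a := fun n : ℕ ↦ χ n) (fun n ↦ χ.norm_le_one n)
      (norm_exp_neg_lt_one hδ)

theorem mul_exp_neg_le_norm_tsum_lambertKernel (hχ : χ ^ 2 = 1) (hδ : 0 < δ) (M : ℕ) :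
    M * Real.exp (-δ) ^ M ^ 2 ≤ ‖∑' n : ℕ+, χ n * lambertKernel (n * δ)‖ := by
  have hsum := hasSum_zetaMul_mul_exp_neg χ hδ
  have hre := Complex.hasSum_re hsum
  refine le_trans ?_ (Complex.re_le_norm _)
  have hinj : Set.InjOn (fun n : ℕ ↦ n.succPNat ^ 2) (Finset.range M) := fun a _ b _ hab ↦ by
    simpa [← PNat.coe_inj] using hab
  have hsquare (n : ℕ) (hn : n ∈ Finset.range M) : Real.exp (-δ) ^ M ^ 2 ≤
      (zetaMul χ ((n.succPNat ^ 2 : ℕ+) : ℕ) *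
        ((Real.exp (-δ) ^ ((n.succPNat ^ 2 : ℕ+) : ℕ) : ℝ) : ℂ)).re := by
    have hζ := (Complex.le_def.1 (one_le_zetaMul_sq hχ n.succ_ne_zero)).1
    rw [Complex.re_mul_ofReal, PNat.pow_coe, Nat.succPNat_coe]
    have hpow : Real.exp (-δ) ^ M ^ 2 ≤ Real.exp (-δ) ^ n.succ ^ 2 :=
      pow_le_pow_of_le_one (Real.exp_pos _).le (Real.exp_le_one_iff.2 (neg_nonpos.2 hδ.le))
        (Nat.pow_le_pow_left (Finset.mem_range.1 hn) 2)
    exact hpow.trans (le_mul_of_one_le_left (by positivity) hζ)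
  calc M * Real.exp (-δ) ^ M ^ 2 = ∑ _n ∈ Finset.range M, Real.exp (-δ) ^ M ^ 2 := by simp
    _ ≤ _ := Finset.sum_le_sum hsquare
    _ = _ := (Finset.sum_image (f := fun n : ℕ+ ↦ (zetaMul χ n *
        ((Real.exp (-δ) ^ (n : ℕ) : ℝ) : ℂ)).re) hinj).symm
    _ ≤ _ := sum_le_hasSum _ (fun n _ ↦ ?_) hre
  rw [Complex.re_mul_ofReal]
  exact mul_nonneg (Complex.nonneg_iff.1 (zetaMul_nonneg hχ n)).1 (by positivity)

theorem tsum_pnat_lambertKernel (χ : DirichletCharacter ℂ m) (δ : ℝ) :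
    ∑' n : ℕ+, χ n * lambertKernel (n * δ) = ∑' n : ℕ, χ n * lambertKernel (n * δ) := by
  refine PNat.coe_injective.tsum_eq (f := fun n : ℕ ↦ χ n * (lambertKernel (n * δ) : ℂ))
    fun n hn ↦ ⟨⟨n, Nat.pos_of_ne_zero ?_⟩, rfl⟩
  rintro rfl
  simp [lambertKernel] at hn

theorem natCast_rpow_neg_le_one (hσ : 0 < σ) (n : ℕ) : (n : ℝ) ^ (-σ) ≤ 1 := by
  rcases n.eq_zero_or_pos with rfl | hn
  · simp [Real.zero_rpow (neg_ne_zero.2 hσ.ne')]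
  · exact Real.rpow_le_one_of_one_le_of_nonpos (by exact_mod_cast hn) (by linarith)

theorem summable_rpow_neg_mul_lambertKernel (χ : DirichletCharacter ℂ m) (hσ : 0 < σ)
    (hδ : 0 < δ) :
    Summable fun n : ℕ ↦ χ n * ((n : ℝ) ^ (-σ) * lambertKernel (n * δ) : ℝ) := by
  refine Summable.of_norm_bounded (summable_lambertKernel hδ) fun n ↦ ?_
  have hK : 0 ≤ lambertKernel (n * δ) := lambertKernel_nonneg (by positivity)
  exact (norm_apply_mul_ofReal_le χ (by positivity) n).trans
    (mul_le_of_le_one_left hK (natCast_rpow_neg_le_one hσ n))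

theorem one_sub_rpow_neg_mul_lambertKernel_le (hσ : 0 < σ) (hδ : 0 < δ) (n : ℕ) :
    (1 - (n : ℝ) ^ (-σ)) * lambertKernel (n * δ) ≤ 6 * σ / δ ^ 3 * (n : ℝ) ^ (-2 : ℝ) := by
  rcases n.eq_zero_or_pos with rfl | hn
  · simp [lambertKernel]
  have hn' : (0 : ℝ) < n := by exact_mod_cast hn
  have hpow : 1 - (n : ℝ) ^ (-σ) ≤ σ * n := by
    have hexp := Real.add_one_le_exp (Real.log n * -σ)
    rw [← Real.rpow_def_of_pos hn'] at hexp
    nlinarith [Real.log_le_sub_one_of_pos hn']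
  have hK : lambertKernel (n * δ) ≤ ((n * δ) ^ 3 / 6)⁻¹ := by
    have hexp := Real.sum_le_exp_of_nonneg (x := n * δ) (by positivity) 4
    simp only [Finset.sum_range_succ, Finset.sum_range_zero, Nat.factorial] at hexp
    refine inv_anti₀ (by positivity) ?_
    norm_num at hexp ⊢
    nlinarith [sq_nonneg (n * δ), mul_pos hn' hδ]
  calc (1 - (n : ℝ) ^ (-σ)) * lambertKernel (n * δ) ≤ σ * n * ((n * δ) ^ 3 / 6)⁻¹ := by
        gcongr
        exact lambertKernel_nonneg (by positivity)
    _ = 6 * σ / δ ^ 3 * (n : ℝ) ^ (-2 : ℝ) := by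
        rw [Real.rpow_neg hn'.le, Real.rpow_two]
        field_simp

theorem norm_tsum_lambertKernel_sub_le (χ : DirichletCharacter ℂ m) (hσ : 0 < σ) (hδ : 0 < δ) :
    ‖∑' n : ℕ, χ n * lambertKernel (n * δ) -
      ∑' n : ℕ, χ n * ((n : ℝ) ^ (-σ) * lambertKernel (n * δ) : ℝ)‖ ≤ 12 * σ / δ ^ 3 := by
  have hsum : Summable fun n : ℕ ↦ χ n * (lambertKernel (n * δ) : ℂ) :=
    .of_norm_bounded (summable_lambertKernel hδ) fun n ↦
      norm_apply_mul_ofReal_le χ (lambertKernel_nonneg (by positivity)) n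
  rw [← hsum.tsum_sub (summable_rpow_neg_mul_lambertKernel χ hσ hδ)]
  refine (tsum_of_norm_bounded ((summable_rpow_neg one_lt_two).mul_left (6 * σ / δ ^ 3)).hasSum
    fun n ↦ ?_).trans ?_
  · have hK : 0 ≤ (1 - (n : ℝ) ^ (-σ)) * lambertKernel (n * δ) :=
      mul_nonneg (sub_nonneg.2 (natCast_rpow_neg_le_one hσ n))
        (lambertKernel_nonneg (by positivity))
    rw [← mul_sub, ← Complex.ofReal_sub, ← one_sub_mul]
    exact (norm_apply_mul_ofReal_le χ hK n).trans (one_sub_rpow_neg_mul_lambertKernel_le hσ hδ n)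
  · rw [tsum_mul_left]
    calc 6 * σ / δ ^ 3 * ∑' n : ℕ, (n : ℝ) ^ (-2 : ℝ) ≤ 6 * σ / δ ^ 3 * (1 + (2 - 1)⁻¹) := by
          gcongr
          exact tsum_rpow_neg_le one_lt_two
      _ = 12 * σ / δ ^ 3 := by ring

theorem antitoneOn_rpow_neg_mul_inv_sub_lambertKernel (hσ : 0 < σ) (hδ : 0 < δ) :
    AntitoneOn (fun n : ℕ ↦ (n : ℝ) ^ (-σ) * ((n * δ)⁻¹ - lambertKernel (n * δ)))
      (Set.Ici 1) := fun a ha b hb hab ↦ by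
  have ha' : (0 : ℝ) < a := by exact_mod_cast Nat.lt_of_lt_of_le one_pos ha
  have hb' : (0 : ℝ) < b := by exact_mod_cast Nat.lt_of_lt_of_le one_pos hb
  have hab' : (a : ℝ) ≤ b := by exact_mod_cast hab
  exact mul_le_mul (Real.rpow_le_rpow_of_nonpos ha' hab' (by linarith))
    (antitoneOn_inv_sub_lambertKernel (mul_pos ha' hδ) (mul_pos hb' hδ) (by gcongr))
    (sub_nonneg.2 (lambertKernel_le_inv (by positivity))) (by positivity)

variable [NeZero m]

theorem norm_LFunction_div_sub_tsum_le (hχ : χ ≠ 1) (hσ : 0 < σ) (hδ : 0 < δ) :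
    ‖LFunction χ (1 + σ : ℝ) / δ -
      ∑' n : ℕ, χ n * ((n : ℝ) ^ (-σ) * lambertKernel (n * δ) : ℝ)‖ ≤ m := by
  have hL := (hasSum_LFunction (χ := χ) (lt_add_of_pos_right 1 hσ)).div_const (δ : ℂ)
  have hK := (summable_rpow_neg_mul_lambertKernel χ hσ hδ).hasSum
  have hterm (n : ℕ) : χ n * ((n : ℝ) ^ (-σ) * ((n * δ)⁻¹ - lambertKernel (n * δ)) : ℝ) =
      χ n * ((n : ℝ) ^ (-(1 + σ)) : ℝ) / δ -
        χ n * ((n : ℝ) ^ (-σ) * lambertKernel (n * δ) : ℝ) := by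
    have : (n : ℝ) ^ (-(1 + σ)) / δ = (n : ℝ) ^ (-σ) * (n * δ)⁻¹ := by
      rcases n.eq_zero_or_pos with rfl | hn
      · rw [Nat.cast_zero, Real.zero_rpow (by linarith), zero_mul, inv_zero, mul_zero, zero_div]
      · rw [neg_add, Real.rpow_add (by exact_mod_cast hn), Real.rpow_neg_one]
        field_simp
    rw [mul_sub, ← this]
    push_cast
    ring
  have hsum := (hL.sub hK).congr_fun hterm
  have hpos (n : ℕ) : 0 ≤ (n : ℝ) ^ (-σ) * ((n * δ)⁻¹ - lambertKernel (n * δ)) := by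
    rcases n.eq_zero_or_pos with rfl | hn
    · simp [lambertKernel]
    · exact mul_nonneg (by positivity) (sub_nonneg.2 (lambertKernel_le_inv (by positivity)))
  have hbound := norm_tsum_apply_mul_le_of_antitoneOn hχ hpos
    (antitoneOn_rpow_neg_mul_inv_sub_lambertKernel hσ hδ) hsum.summable
  rw [hsum.tsum_eq] at hbound
  refine hbound.trans ?_
  simpa [Real.zero_rpow (neg_ne_zero.2 hσ.ne')] using
    mul_le_of_le_one_right m.cast_nonneg (inv_sub_lambertKernel_le_one hδ)

theorem natCast_div_three_le_mul_norm_LFunction (hχ : χ ≠ 1) (hχ₂ : χ ^ 2 = 1) (hσ : 0 < σ)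
    {M : ℕ} (hM : M ≠ 0) :
    (M : ℝ) / 3 ≤ M ^ 2 * ‖LFunction χ (1 + σ : ℝ)‖ + m + 12 * σ * M ^ 6 := by
  set δ : ℝ := ((M : ℝ) ^ 2)⁻¹ with hδ_def
  have hδ : 0 < δ := by positivity
  have hlower := mul_exp_neg_le_norm_tsum_lambertKernel hχ₂ hδ M
  have hσ_err := norm_tsum_lambertKernel_sub_le χ hσ hδ
  have hL_err := norm_LFunction_div_sub_tsum_le hχ hσ hδ
  rw [tsum_pnat_lambertKernel] at hlower
  have hexp : (1 : ℝ) / 3 ≤ Real.exp (-δ) ^ M ^ 2 := by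
    have : ((M ^ 2 : ℕ) : ℝ) * -δ = -1 := by
      rw [hδ_def]
      push_cast
      field_simp
    rw [← Real.exp_nat_mul, this, Real.exp_neg, one_div]
    exact inv_anti₀ (Real.exp_pos 1) (by linarith [Real.exp_one_lt_d9])
  have hL : ‖LFunction χ (1 + σ : ℝ) / δ‖ = M ^ 2 * ‖LFunction χ (1 + σ : ℝ)‖ := by
    rw [norm_div, Complex.norm_real, Real.norm_of_nonneg hδ.le, hδ_def, div_inv_eq_mul, mul_comm]
  have hδ_err : 12 * σ / δ ^ 3 = 12 * σ * M ^ 6 := by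
    rw [hδ_def]
    field_simp
  have hMexp : (M : ℝ) * (1 / 3) ≤ M * Real.exp (-δ) ^ M ^ 2 := by gcongr
  have hKL := norm_sub_le_norm_sub_add_norm_sub (∑' n : ℕ, χ n * (lambertKernel (n * δ) : ℂ))
    (∑' n : ℕ, χ n * ((n : ℝ) ^ (-σ) * lambertKernel (n * δ) : ℝ)) (LFunction χ (1 + σ : ℝ) / δ)
  rw [norm_sub_rev] at hL_err
  linarith [norm_sub_norm_le (∑' n : ℕ, χ n * (lambertKernel (n * δ) : ℂ))
    (LFunction χ (1 + σ : ℝ) / δ)]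

/-- Where the Lambert series argument loses too much, `σ` is already so large that the trivial bound
suffices. -/
theorem one_le_mul_norm_LFunction_of_sq_eq_one (hχ : χ ≠ 1) (hχ₂ : χ ^ 2 = 1) (hσ : 0 < σ) :
    1 ≤ 2 ^ 23 * m ^ 6 * ‖LFunction χ (1 + σ : ℝ)‖ := by
  have hm : (1 : ℝ) ≤ m := by exact_mod_cast NeZero.one_le
  have hm₆ : (m : ℝ) ^ 2 ≤ m ^ 6 := pow_le_pow_right₀ hm (by norm_num)
  set X := ‖LFunction χ (1 + σ : ℝ)‖
  rcases le_or_gt (12 * σ * (9 * m) ^ 6) 1 with hnear | hfar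
  · have hlambert := natCast_div_three_le_mul_norm_LFunction hχ hχ₂ hσ (M := 9 * m)
      (mul_ne_zero (by norm_num) (NeZero.ne m))
    rw [Nat.cast_mul, Nat.cast_ofNat] at hlambert
    calc 1 ≤ 81 * m ^ 2 * X := by linarith
      _ ≤ 2 ^ 23 * m ^ 6 * X := by gcongr; norm_num
  · have htrivial := inv_one_add_inv_le_norm_LFunction χ (lt_add_of_pos_right 1 hσ)
    rw [add_sub_cancel_left, inv_le_iff_one_le_mul₀' (by positivity)] at htrivial
    have hσ_inv : σ⁻¹ ≤ 12 * (9 * m) ^ 6 := by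
      rw [inv_le_iff_one_le_mul₀ hσ]
      linarith
    calc 1 ≤ (1 + σ⁻¹) * X := htrivial
      _ ≤ 2 ^ 23 * m ^ 6 * X := by
        gcongr
        linarith [one_le_pow₀ (n := 6) hm]

end QuadraticCharacter

/-! ### The logarithm of `ζ` along the residue class `1` -/

/-- The coefficient `Λ(n) / log n` of `n⁻ˢ` in the Dirichlet series of `log ζ(s)`; it is `1 / k` if
`n = qᵏ` is a power of a prime `q`, and `0` otherwise. -/
noncomputable def logZetaCoeff (n : ℕ) : ℝ := ArithmeticFunction.vonMangoldt n / Real.log n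

theorem logZetaCoeff_nonneg (n : ℕ) : 0 ≤ logZetaCoeff n :=
  div_nonneg ArithmeticFunction.vonMangoldt_nonneg (Real.log_natCast_nonneg n)

theorem logZetaCoeff_le_one (n : ℕ) : logZetaCoeff n ≤ 1 :=
  div_le_one_of_le₀ ArithmeticFunction.vonMangoldt_le_log (Real.log_natCast_nonneg n)

theorem logZetaCoeff_prime {q : ℕ} (hq : q.Prime) : logZetaCoeff q = 1 := by
  rw [logZetaCoeff, ArithmeticFunction.vonMangoldt_apply_prime hq, div_self hq.log_ne_zero]

theorem logZetaCoeff_mul_rpow_neg_nonneg (s : ℝ) (n : ℕ) : 0 ≤ logZetaCoeff n * (n : ℝ) ^ (-s) :=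
  mul_nonneg (logZetaCoeff_nonneg n) (by positivity)

theorem logZetaCoeff_mul_rpow_neg_le (s : ℝ) (n : ℕ) :
    logZetaCoeff n * (n : ℝ) ^ (-s) ≤ (n : ℝ) ^ (-s) :=
  mul_le_of_le_one_left (by positivity) (logZetaCoeff_le_one n)

/-- The part of the Dirichlet series of `log ζ(s)` supported on the `n ≡ 1 (mod m)`. -/
noncomputable def logZetaModOne (m : ℕ) (s : ℝ) : ℝ :=
  ∑' n : ℕ, if (n : ZMod m) = 1 then logZetaCoeff n * (n : ℝ) ^ (-s) else 0

section LogZetaModOne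

variable {m : ℕ} {s : ℝ}

theorem summable_logZetaModOne (m : ℕ) (hs : 1 < s) :
    Summable fun n : ℕ ↦ if (n : ZMod m) = 1 then logZetaCoeff n * (n : ℝ) ^ (-s) else 0 := by
  refine (summable_rpow_neg hs).of_nonneg_of_le (fun n ↦ ?_) fun n ↦ ?_ <;> split_ifs
  exacts [logZetaCoeff_mul_rpow_neg_nonneg s n, le_rfl, logZetaCoeff_mul_rpow_neg_le s n,
    by positivity]

variable [NeZero m]

open DirichletCharacter

theorem hasSum_log_norm_LFunction (χ : DirichletCharacter ℂ m) (hs : 1 < s) :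
    HasSum (fun n : ℕ ↦ (χ n * (logZetaCoeff n * (n : ℝ) ^ (-s) : ℝ)).re)
      (Real.log ‖LFunction χ s‖) := by
  have hs' : 1 < (s : ℂ).re := by simpa
  have hexp := LSeries_eq_exp_LSeries χ hs'
  rw [← LFunction_eq_LSeries χ hs'] at hexp
  rw [← hexp, Complex.norm_exp, Real.log_exp]
  have hsummable : Summable fun n : ℕ ↦ χ n * (logZetaCoeff n * (n : ℝ) ^ (-s) : ℝ) :=
    (summable_rpow_neg hs).of_norm_bounded fun n ↦
      (norm_apply_mul_ofReal_le χ (logZetaCoeff_mul_rpow_neg_nonneg s n) n).trans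
        (logZetaCoeff_mul_rpow_neg_le s n)
  convert Complex.hasSum_re hsummable.hasSum using 2
  refine tsum_congr fun n ↦ ?_
  rw [LSeries_term_ofReal _ (by positivity), logZetaCoeff]
  push_cast
  ring

theorem totient_mul_logZetaModOne (hs : 1 < s) :
    m.totient * logZetaModOne m s = ∑ χ : DirichletCharacter ℂ m, Real.log ‖LFunction χ s‖ := by
  rw [logZetaModOne, ← tsum_mul_left]
  refine ((hasSum_sum fun χ _ ↦ hasSum_log_norm_LFunction χ hs).congr_fun fun n ↦ ?_).tsum_eq
  rw [← Complex.re_sum, ← Finset.sum_mul, sum_characters_eq, mul_ite, mul_zero, ite_mul, zero_mul]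
  split_ifs
  · rw [← Complex.ofReal_natCast, ← Complex.ofReal_mul, Complex.ofReal_re]
  · rfl

end LogZetaModOne

theorem card_filter_quadratic_le_one {p : ℕ} [Fact p.Prime] :
    (Finset.univ.filter fun χ : DirichletCharacter ℂ p ↦ χ ≠ 1 ∧ χ ^ 2 = 1).card ≤ 1 := by
  obtain ⟨g, hg⟩ := IsCyclic.exists_generator (α := (ZMod p)ˣ)
  have apply_generator (χ : DirichletCharacter ℂ p) (hχ : χ ≠ 1) (hχ₂ : χ ^ 2 = 1) :
      χ g = -1 := by
    rcases MulChar.isQuadratic_iff_sq_eq_one.mpr hχ₂ g with h | h | h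
    · exact absurd h (g.isUnit.map χ).ne_zero
    · exact absurd ((MulChar.eq_iff hg χ 1).2 (by simp [h])) hχ
    · exact h
  refine Finset.card_le_one.2 fun χ hχ ψ hψ ↦ ?_
  simp only [Finset.mem_filter_univ] at hχ hψ
  exact (MulChar.eq_iff hg χ ψ).2
    ((apply_generator χ hχ.1 hχ.2).trans (apply_generator ψ hψ.1 hψ.2).symm)

section PrimeLevel

open DirichletCharacter

variable {p : ℕ} [Fact p.Prime] {σ τ : ℝ}

theorem sum_characters_le {f : DirichletCharacter ℂ p → ℝ} {T Q C : ℝ} (htriv : f 1 ≤ T)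
    (hQ : 0 ≤ Q) (hquad : ∀ χ, χ ≠ 1 → χ ^ 2 = 1 → f χ ≤ Q)
    (hC : 0 ≤ C) (hcomplex : ∀ χ, χ ^ 2 ≠ 1 → f χ ≤ C) :
    ∑ χ, f χ ≤ T + Q + p.totient * C := by
  have hf (χ : DirichletCharacter ℂ p) :
      f χ ≤ (if χ = 1 then T else 0) + (if χ ≠ 1 ∧ χ ^ 2 = 1 then Q else 0) + C := by
    by_cases hχ : χ = 1
    · simp only [hχ, if_true, ne_eq, not_true_eq_false, false_and, if_false]
      linarith
    by_cases hχ₂ : χ ^ 2 = 1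
    · simpa [hχ, hχ₂] using (hquad χ hχ hχ₂).trans (le_add_of_nonneg_right hC)
    · simpa [hχ, hχ₂] using hcomplex χ hχ₂
  have hcard : ((Finset.univ.filter fun χ : DirichletCharacter ℂ p ↦
      χ ≠ 1 ∧ χ ^ 2 = 1).card : ℝ) ≤ 1 := by
    exact_mod_cast card_filter_quadratic_le_one
  refine (Finset.sum_le_sum fun χ _ ↦ hf χ).trans ?_
  rw [Finset.sum_add_distrib, Finset.sum_add_distrib, Finset.sum_ite_eq',
    if_pos (Finset.mem_univ _), ← Finset.sum_filter, Finset.sum_const, Finset.sum_const,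
    nsmul_eq_mul, nsmul_eq_mul, Finset.card_univ, ← Nat.card_eq_fintype_card,
    card_eq_totient_of_hasEnoughRootsOfUnity]
  grw [hcard, one_mul]

theorem inv_le_three_mul_tsum_rpow_neg (hσ : 0 < σ) :
    σ⁻¹ ≤ 3 * ∑' n : ℕ, (n : ℝ) ^ (-(1 + σ)) := by
  set M := ⌊Real.exp σ⁻¹⌋₊
  have hlog : σ⁻¹ ≤ harmonic M := by
    refine le_trans ?_ (log_add_one_le_harmonic M)
    rw [Real.le_log_iff_exp_le (by positivity)]
    exact_mod_cast (Nat.lt_floor_add_one _).le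
  have hterm {n : ℕ} (hn : n < M) :
      ((n + 1 : ℕ) : ℝ)⁻¹ ≤ 3 * ((n + 1 : ℕ) : ℝ) ^ (-(1 + σ)) := by
    have hn₀ : (0 : ℝ) < (n + 1 : ℕ) := by positivity
    have hpow : ((n + 1 : ℕ) : ℝ) ^ σ ≤ 3 := calc
      ((n + 1 : ℕ) : ℝ) ^ σ ≤ Real.exp σ⁻¹ ^ σ := by
        gcongr
        exact (Nat.le_floor_iff (Real.exp_pos _).le).1 hn
      _ = Real.exp 1 := by rw [← Real.exp_mul, inv_mul_cancel₀ hσ.ne']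
      _ ≤ 3 := by linarith [Real.exp_one_lt_d9]
    rw [Real.rpow_neg hn₀.le, Real.rpow_add hn₀, Real.rpow_one, mul_inv, mul_left_comm]
    refine le_mul_of_one_le_right (by positivity) ?_
    rwa [← div_eq_mul_inv, one_le_div (by positivity)]
  calc σ⁻¹ ≤ ∑ n ∈ Finset.range M, ((n + 1 : ℕ) : ℝ)⁻¹ := by simpa [harmonic] using hlog
    _ ≤ ∑ n ∈ Finset.range M, 3 * ((n + 1 : ℕ) : ℝ) ^ (-(1 + σ)) :=
      Finset.sum_le_sum fun n hn ↦ hterm (Finset.mem_range.1 hn)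
    _ = 3 * ∑ n ∈ Finset.range M, ((n + 1 : ℕ) : ℝ) ^ (-(1 + σ)) := (Finset.mul_sum _ _ _).symm
    _ ≤ 3 * ∑ n ∈ Finset.range (M + 1), (n : ℝ) ^ (-(1 + σ)) := by
      rw [Finset.sum_range_succ' _ M]
      gcongr
      exact le_add_of_nonneg_right (by positivity)
    _ ≤ 3 * ∑' n : ℕ, (n : ℝ) ^ (-(1 + σ)) := by
      gcongr
      exact (summable_rpow_neg (by linarith)).sum_le_tsum _ fun _ _ ↦ by positivity

theorem inv_le_six_mul_norm_LFunction_one (hσ : 0 < σ) :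
    σ⁻¹ ≤ 6 * ‖LFunction (1 : DirichletCharacter ℂ p) (1 + σ : ℝ)‖ := by
  have hs : 1 < 1 + σ := by linarith
  have hs' : ((1 + σ : ℝ) : ℂ) ≠ 1 := by exact_mod_cast hs.ne'
  have hp : p.Prime := Fact.out
  have hζ : riemannZeta (1 + σ : ℝ) = (∑' n : ℕ, (n : ℝ) ^ (-(1 + σ)) : ℝ) := by
    rw [← LFunction_modOne_eq (χ := 1), ← (hasSum_LFunction hs).tsum_eq, Complex.ofReal_tsum]
    exact tsum_congr fun n ↦ by rw [MulChar.one_apply (isUnit_of_subsingleton _), one_mul]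
  have heuler : (1 / 2 : ℝ) ≤ ‖1 - (p : ℂ) ^ (-((1 + σ : ℝ) : ℂ))‖ := by
    have := Complex.norm_prime_cpow_le_one_half ⟨p, hp⟩ (s := (1 + σ : ℝ)) (by simpa)
    have := norm_sub_norm_le 1 ((p : ℂ) ^ (-((1 + σ : ℝ) : ℂ)))
    rw [norm_one] at this
    linarith
  have htriv := LFunctionTrivChar_eq_mul_riemannZeta (N := p) hs'
  rw [hp.primeFactors, Finset.prod_singleton, hζ] at htriv
  rw [← LFunctionTrivChar, htriv, norm_mul, Complex.norm_real,
    Real.norm_of_nonneg (tsum_nonneg fun n ↦ by positivity)]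
  grw [← heuler]
  linarith [inv_le_three_mul_tsum_rpow_neg hσ]

theorem neg_log_le_of_one_le_mul {a x : ℝ} (h : 1 ≤ a * x) (ha : 0 < a) :
    -Real.log x ≤ Real.log a := by
  have hx : 0 < x := pos_of_mul_pos_right (one_pos.trans_le h) ha.le
  have := Real.log_nonneg h
  rw [Real.log_mul ha.ne' hx.ne'] at this
  linarith

theorem log_inv_sub_le_totient_mul_logZetaModOne (hσ : 0 < σ) (hσ₁ : σ ≤ 1) :
    Real.log σ⁻¹ - (19 + 6 * Real.log p) - p.totient * (8 + 7 * Real.log (logLevel p)) ≤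
      p.totient * logZetaModOne p (1 + σ) := by
  have hp₁ : (1 : ℝ) ≤ p := by exact_mod_cast (Fact.out : p.Prime).one_le
  have hℓ := one_le_logLevel p
  have hs : 1 < 1 + σ := by linarith
  have hlog₂ := Real.log_two_lt_d9
  have htriv : 1 ≤ 2 ^ 3 * σ * ‖LFunction (1 : DirichletCharacter ℂ p) (1 + σ : ℝ)‖ := by
    have := mul_le_mul_of_nonneg_right (inv_le_six_mul_norm_LFunction_one (p := p) hσ) hσ.le
    rw [inv_mul_cancel₀ hσ.ne'] at this
    nlinarith [norm_nonneg (LFunction (1 : DirichletCharacter ℂ p) (1 + σ : ℝ))]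
  have hsum := sum_characters_le (p := p) (f := fun χ ↦ -Real.log ‖LFunction χ (1 + σ : ℝ)‖)
    (neg_log_le_of_one_le_mul htriv (by positivity))
    (Real.log_nonneg (by nlinarith [one_le_pow₀ (n := 6) hp₁] : 1 ≤ 2 ^ 23 * (p : ℝ) ^ 6))
    (fun χ hχ hχ₂ ↦ neg_log_le_of_one_le_mul
      (one_le_mul_norm_LFunction_of_sq_eq_one hχ hχ₂ hσ) (by positivity))
    (Real.log_nonneg (by nlinarith [one_le_pow₀ (n := 7) hℓ] : 1 ≤ 2 ^ 11 * logLevel p ^ 7))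
    (fun χ hχ ↦ neg_log_le_of_one_le_mul
      (one_le_mul_norm_LFunction hχ hs (by linarith)) (by positivity))
  rw [Finset.sum_neg_distrib, ← totient_mul_logZetaModOne hs,
    Real.log_mul (by positivity) (by positivity), Real.log_mul (by positivity) (by positivity),
    Real.log_mul (by positivity) (by positivity), Real.log_pow, Real.log_pow, Real.log_pow,
    Real.log_pow, Real.log_pow] at hsum
  have hcomplex : (p.totient : ℝ) * (11 * Real.log 2 + 7 * Real.log (logLevel p)) ≤
      p.totient * (8 + 7 * Real.log (logLevel p)) := by
    gcongr
    linarith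
  rw [Real.log_inv]
  push_cast at hsum
  linarith

theorem log_inv_div_sub_le_logZetaModOne (hσ : 0 < σ) (hσ₁ : σ ≤ 1) :
    Real.log σ⁻¹ / p - 30 * logLevel p ≤ logZetaModOne p (1 + σ) := by
  have hp : p.Prime := Fact.out
  have hφ : (1 : ℝ) ≤ p.totient := by exact_mod_cast p.totient_pos.2 hp.pos
  have hℓ := one_le_logLevel p
  have hlogℓ : Real.log (logLevel p) ≤ logLevel p - 1 := Real.log_le_sub_one_of_pos (by linarith)
  have hlogp : Real.log p = logLevel p - 1 := (add_sub_cancel_left _ _).symm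
  have hcost : 19 + 6 * Real.log p + p.totient * (8 + 7 * Real.log (logLevel p)) ≤
      p.totient * (30 * logLevel p) := by
    nlinarith
  have hdiv : Real.log σ⁻¹ / p ≤ Real.log σ⁻¹ / p.totient := by
    have := Real.log_nonneg ((one_le_inv₀ hσ).2 hσ₁)
    gcongr
    exact p.totient_le
  have hmain : Real.log σ⁻¹ / p.totient ≤ logZetaModOne p (1 + σ) + 30 * logLevel p := by
    rw [div_le_iff₀ (by positivity)]
    linarith [log_inv_sub_le_totient_mul_logZetaModOne (p := p) hσ hσ₁]
  linarith

theorem log_norm_sub_log_norm_le {z w : ℂ} {a : ℝ} (hz : z ≠ 0) (hw : 1 ≤ a * ‖w‖) :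
    Real.log ‖z‖ - Real.log ‖w‖ ≤ a * ‖z - w‖ := by
  have hw₀ : 0 < ‖w‖ := norm_pos_iff.2 (by rintro rfl; norm_num at hw)
  calc Real.log ‖z‖ - Real.log ‖w‖ = Real.log (‖z‖ / ‖w‖) :=
        (Real.log_div (by simpa) hw₀.ne').symm
    _ ≤ ‖z‖ / ‖w‖ - 1 := Real.log_le_sub_one_of_pos (div_pos (by simpa) hw₀)
    _ = (‖z‖ - ‖w‖) / ‖w‖ := by rw [sub_div, div_self hw₀.ne']
    _ ≤ ‖z - w‖ / ‖w‖ := by gcongr; exact norm_sub_norm_le z w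
    _ ≤ a * ‖z - w‖ := by
      rw [div_le_iff₀ hw₀, mul_right_comm]
      exact le_mul_of_one_le_left (norm_nonneg _) hw

theorem one_le_mul_norm_LFunction_one_add (χ : DirichletCharacter ℂ p) (hσ : 0 < σ) :
    1 ≤ (1 + σ⁻¹) * ‖LFunction χ (1 + σ : ℝ)‖ := by
  have := inv_one_add_inv_le_norm_LFunction χ (lt_add_of_pos_right 1 hσ)
  rwa [add_sub_cancel_left, inv_le_iff_one_le_mul₀' (by positivity)] at this

theorem norm_LFunction_one_add_pos (χ : DirichletCharacter ℂ p) (hσ : 0 < σ) :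
    0 < ‖LFunction χ (1 + σ : ℝ)‖ :=
  pos_of_mul_pos_right (one_pos.trans_le (one_le_mul_norm_LFunction_one_add χ hσ)) (by positivity)

theorem totient_mul_logZetaModOne_sub_le (hσ : 0 < σ) (hστ : σ ≤ τ) (hτ : τ ≤ 1) :
    p.totient * (logZetaModOne p (1 + σ) - logZetaModOne p (1 + τ)) ≤
      Real.log (1 + σ⁻¹) + 2 * Real.log (1 + τ⁻¹) + Real.log (2 * logLevel p) +
        p.totient * (2 ^ 12 * logLevel p ^ 9 * τ) := by
  have hℓ := one_le_logLevel p
  have hτ₀ : 0 < τ := hσ.trans_le hστ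
  have hs : 1 < 1 + σ := by linarith
  have ht : 1 < 1 + τ := by linarith
  have hlower (χ : DirichletCharacter ℂ p) :
      -Real.log ‖LFunction χ (1 + τ : ℝ)‖ ≤ Real.log (1 + τ⁻¹) :=
    neg_log_le_of_one_le_mul (one_le_mul_norm_LFunction_one_add χ hτ₀) (by positivity)
  have hsum := sum_characters_le (p := p)
    (f := fun χ ↦ Real.log ‖LFunction χ (1 + σ : ℝ)‖ - Real.log ‖LFunction χ (1 + τ : ℝ)‖)
    (T := Real.log (1 + σ⁻¹) + Real.log (1 + τ⁻¹))
    (Q := Real.log (2 * logLevel p) + Real.log (1 + τ⁻¹)) (C := 2 ^ 12 * logLevel p ^ 9 * τ)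
    ?_ ?_ (fun χ hχ _ ↦ ?_) (by positivity) fun χ hχ ↦ ?_
  · rw [Finset.sum_sub_distrib, ← totient_mul_logZetaModOne hs,
      ← totient_mul_logZetaModOne ht] at hsum
    linarith
  · have := Real.log_le_log (norm_LFunction_one_add_pos (1 : DirichletCharacter ℂ p) hσ)
      (norm_LFunction_le_one_add_inv 1 hs)
    rw [add_sub_cancel_left] at this
    linarith [hlower 1]
  · exact add_nonneg (Real.log_nonneg (by linarith))
      (Real.log_nonneg (by linarith [inv_pos.2 hτ₀]))
  · linarith [hlower χ, Real.log_le_log (norm_LFunction_one_add_pos χ hσ) (norm_LFunction_le hχ hs)]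
  · have hχ₁ : χ ≠ 1 := by rintro rfl; exact hχ (one_pow 2)
    have hlip := norm_LFunction_sub_le hχ₁ hs ht
    rw [add_sub_add_left_eq_sub, abs_of_nonpos (by linarith)] at hlip
    calc _ ≤ 2 ^ 11 * logLevel p ^ 7 * ‖LFunction χ (1 + σ : ℝ) - LFunction χ (1 + τ : ℝ)‖ :=
          log_norm_sub_log_norm_le (norm_pos_iff.1 (norm_LFunction_one_add_pos χ hσ))
            (one_le_mul_norm_LFunction hχ ht (by linarith))
      _ ≤ 2 ^ 11 * logLevel p ^ 7 * (2 * logLevel p ^ 2 * τ) := by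
          gcongr
          refine hlip.trans ?_
          gcongr
          linarith
      _ = 2 ^ 12 * logLevel p ^ 9 * τ := by ring

end PrimeLevel

/-! ### Primes congruent to `1` -/

/-- The primes `q ≤ N` with `q ≡ 1 (mod m)`. A cyclic number divisible by `m` has none of them as a
factor. -/
def primesModOne (m N : ℕ) : Finset ℕ :=
  (Finset.Iic N).filter fun q ↦ q.Prime ∧ (q : ZMod m) = 1

/-- The sum of `1 / q` over the primes `q ≤ N` with `q ≡ 1 (mod m)`. -/
noncomputable def sumInvPrimesModOne (m N : ℕ) : ℝ := ∑ q ∈ primesModOne m N, (q : ℝ)⁻¹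

theorem mem_primesModOne {m N q : ℕ} :
    q ∈ primesModOne m N ↔ q ≤ N ∧ q.Prime ∧ (q : ZMod m) = 1 := by
  simp [primesModOne]

theorem summable_nonprime_logZetaCoeff_div :
    Summable fun n : ℕ ↦ if n.Prime then 0 else logZetaCoeff n / n := by
  refine (ArithmeticFunction.vonMangoldt.summable_residueClass_non_primes_div
    (1 : ZMod 1)).of_nonneg_of_le (fun n ↦ ?_) fun n ↦ ?_ <;> split_ifs with hn
  · exact le_rfl
  · exact div_nonneg (logZetaCoeff_nonneg n) n.cast_nonneg
  · rw [zero_div]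
  · have hres : ArithmeticFunction.vonMangoldt.residueClass (1 : ZMod 1) n =
        ArithmeticFunction.vonMangoldt n :=
      Set.indicator_of_mem (s := {n : ℕ | (n : ZMod 1) = 1}) (Subsingleton.elim _ _) _
    rw [hres, logZetaCoeff]
    gcongr
    rcases le_or_gt n 3 with hn₃ | hn₃
    · interval_cases n <;> simp_all [Nat.prime_two, Nat.prime_three]
    · refine div_le_self ArithmeticFunction.vonMangoldt_nonneg ?_
      rw [Real.le_log_iff_exp_le (by positivity)]
      have : (4 : ℝ) ≤ n := by exact_mod_cast hn₃
      linarith [Real.exp_one_lt_d9]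

section

variable {m N : ℕ} {σ τ : ℝ}

theorem rpow_neg_one_add {n : ℕ} (hn : n ≠ 0) (σ : ℝ) :
    (n : ℝ) ^ (-(1 + σ)) = (n : ℝ)⁻¹ * Real.exp (-(σ * Real.log n)) := by
  have hn₀ : (0 : ℝ) < n := by positivity
  rw [neg_add, Real.rpow_add hn₀, Real.rpow_neg_one, Real.rpow_def_of_pos hn₀]
  ring_nf

theorem rpow_neg_one_add_le_of_lt (hσ : 0 ≤ σ) (hN : N ≠ 0) {n : ℕ} (hn : N < n) :
    (n : ℝ) ^ (-(1 + σ)) ≤ (N : ℝ) ^ (-(σ / 2)) * (n : ℝ) ^ (-(1 + σ / 2)) := by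
  have hn₀ : (0 : ℝ) < n := by exact_mod_cast (Nat.zero_le N).trans_lt hn
  calc (n : ℝ) ^ (-(1 + σ)) = (n : ℝ) ^ (-(σ / 2)) * (n : ℝ) ^ (-(1 + σ / 2)) := by
        rw [← Real.rpow_add hn₀]
        ring_nf
    _ ≤ (N : ℝ) ^ (-(σ / 2)) * (n : ℝ) ^ (-(1 + σ / 2)) := by
        gcongr ?_ * _
        exact Real.rpow_le_rpow_of_nonpos (by positivity) (by exact_mod_cast hn.le) (by linarith)

theorem rpow_neg_one_add_le_inv (hσ : 0 ≤ σ) (n : ℕ) : (n : ℝ) ^ (-(1 + σ)) ≤ (n : ℝ)⁻¹ := by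
  rcases eq_or_ne n 0 with rfl | hn
  · rw [Nat.cast_zero, Real.zero_rpow (by linarith), inv_zero]
  · rw [rpow_neg_one_add hn]
    exact mul_le_of_le_one_right (by positivity)
      (Real.exp_le_one_iff.2 (neg_nonpos.2 (mul_nonneg hσ (Real.log_natCast_nonneg n))))

theorem logZetaModOne_le_sumInvPrimesModOne_add (m : ℕ) (hσ : 0 < σ) (hN : N ≠ 0) :
    logZetaModOne m (1 + σ) ≤ sumInvPrimesModOne m N +
      (∑' n : ℕ, if n.Prime then 0 else logZetaCoeff n / n) +
      (N : ℝ) ^ (-(σ / 2)) * (1 + (σ / 2)⁻¹) := by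
  have hprimes : HasSum (fun n : ℕ ↦ if n ∈ primesModOne m N then (n : ℝ)⁻¹ else 0)
      (sumInvPrimesModOne m N) := by
    simpa [sumInvPrimesModOne] using
      hasSum_sum_of_ne_finset_zero (s := primesModOne m N) fun n hn ↦ if_neg hn
  have htail : HasSum (fun n : ℕ ↦ (N : ℝ) ^ (-(σ / 2)) * (n : ℝ) ^ (-(1 + σ / 2)))
      ((N : ℝ) ^ (-(σ / 2)) * ∑' n : ℕ, (n : ℝ) ^ (-(1 + σ / 2))) :=
    (summable_rpow_neg (by linarith)).hasSum.mul_left _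
  refine (hasSum_le (fun n ↦ ?_) (summable_logZetaModOne m (by linarith)).hasSum
    ((hprimes.add summable_nonprime_logZetaCoeff_div.hasSum).add htail)).trans ?_
  · have hsieve₀ : 0 ≤ if n ∈ primesModOne m N then (n : ℝ)⁻¹ else 0 := by
      split_ifs <;> positivity
    have htail₀ : 0 ≤ (N : ℝ) ^ (-(σ / 2)) * (n : ℝ) ^ (-(1 + σ / 2)) := by positivity
    by_cases hprime : n.Prime
    · rw [if_pos hprime, logZetaCoeff_prime hprime, one_mul, add_zero]
      split_ifs with hmod hmem hmem
      · exact (rpow_neg_one_add_le_inv hσ.le n).trans (le_add_of_nonneg_right htail₀)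
      · have hn : N < n := by
          by_contra! hn
          exact hmem (mem_primesModOne.2 ⟨hn, hprime, hmod⟩)
        linarith [rpow_neg_one_add_le_of_lt hσ.le hN hn]
      all_goals positivity
    · have hterm : logZetaCoeff n * (n : ℝ) ^ (-(1 + σ)) ≤ logZetaCoeff n / n :=
        mul_le_mul_of_nonneg_left (rpow_neg_one_add_le_inv hσ.le n) (logZetaCoeff_nonneg n)
      have := div_nonneg (logZetaCoeff_nonneg n) n.cast_nonneg
      rw [if_neg hprime]
      by_cases hmod : (n : ZMod m) = 1
      · rw [if_pos hmod]
        linarith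
      · rw [if_neg hmod]
        positivity
  · have := tsum_rpow_neg_le (s := 1 + σ / 2) (by linarith)
    rw [add_sub_cancel_left] at this
    gcongr

theorem log_two_mul_le_half {t : ℝ} (ht : 5 ≤ t) : Real.log (2 * t) ≤ t / 2 := by
  have hquarter := Real.log_le_sub_one_of_pos (x := t / 4) (by linarith)
  calc Real.log (2 * t) = 3 * Real.log 2 + Real.log (t / 4) := by
        rw [show 2 * t = 2 ^ 3 * (t / 4) by ring, Real.log_mul (by norm_num) (by linarith),
          Real.log_pow, Nat.cast_ofNat]
    _ ≤ t / 2 := by linarith [Real.log_two_lt_d9]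

theorem half_le_log_inv_two_mul_div_exp {t : ℝ} (ht : 5 ≤ t) :
    t / 2 ≤ Real.log (2 * t / Real.exp t)⁻¹ := by
  rw [inv_div, Real.log_div (Real.exp_ne_zero t) (by linarith), Real.log_exp]
  linarith [log_two_mul_le_half ht]

theorem log_eq_exp_log_log (hN : 0 < Real.log (Real.log N)) :
    Real.log N = Real.exp (Real.log (Real.log N)) := by
  refine (Real.exp_log ((Real.log_natCast_nonneg N).lt_of_ne' fun h ↦ ?_)).symm
  rw [h, Real.log_zero] at hN
  exact hN.false

theorem rpow_neg_mul_one_add_inv_le_two {t : ℝ} (ht : 1 ≤ t) (hN : N ≠ 0)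
    (hlogN : Real.log N = Real.exp t) :
    (N : ℝ) ^ (-(t / Real.exp t)) * (1 + (t / Real.exp t)⁻¹) ≤ 2 := by
  have hpow : (N : ℝ) ^ (-(t / Real.exp t)) = Real.exp (-t) := by
    rw [Real.rpow_def_of_pos (by positivity), hlogN]
    congr 1
    field_simp
  have hle : Real.exp (-t) ≤ 1 := Real.exp_le_one_iff.2 (by linarith)
  calc (N : ℝ) ^ (-(t / Real.exp t)) * (1 + (t / Real.exp t)⁻¹) = Real.exp (-t) + t⁻¹ := by
        rw [hpow, inv_div, Real.exp_neg]
        field_simp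
    _ ≤ 2 := by linarith [inv_le_one_of_one_le₀ ht]

end

theorem exists_le_sumInvPrimesModOne : ∃ C > 0, ∀ p N : ℕ, p.Prime →
    C * p * logLevel p ≤ Real.log (Real.log N) →
      Real.log (Real.log N) / (4 * p) ≤ sumInvPrimesModOne p N := by
  set K := ∑' n : ℕ, if n.Prime then 0 else logZetaCoeff n / n
  have hK : 0 ≤ K := tsum_nonneg fun n ↦ by
    split_ifs
    exacts [le_rfl, div_nonneg (logZetaCoeff_nonneg n) n.cast_nonneg]
  refine ⟨4 * (32 + K), by positivity, fun p N hp hN ↦ ?_⟩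
  have : Fact p.Prime := ⟨hp⟩
  have hp₁ : (1 : ℝ) ≤ p := by exact_mod_cast hp.one_le
  have hℓ := one_le_logLevel p
  have hpℓ : 1 ≤ p * logLevel p := one_le_mul_of_one_le_of_one_le hp₁ hℓ
  set t := Real.log (Real.log N) with ht_def
  have ht : 128 ≤ t := by nlinarith
  have hlogN : Real.log N = Real.exp t := log_eq_exp_log_log (by linarith)
  have hN₀ : N ≠ 0 := by
    rintro rfl
    rw [Nat.cast_zero, Real.log_zero] at hlogN
    exact (Real.exp_pos t).ne hlogN
  set σ := 2 * t / Real.exp t with hσ_def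
  have hσ : 0 < σ := by positivity
  have hσ_log : t / 2 ≤ Real.log σ⁻¹ := half_le_log_inv_two_mul_div_exp (by linarith)
  have hσ₁ : σ ≤ 1 := by
    rw [Real.log_inv] at hσ_log
    exact (Real.log_nonpos_iff hσ.le).1 (by linarith)
  have htail : (N : ℝ) ^ (-(σ / 2)) * (1 + (σ / 2)⁻¹) ≤ 2 := by
    rw [show σ / 2 = t / Real.exp t by rw [hσ_def]; ring]
    exact rpow_neg_mul_one_add_inv_le_two (by linarith) hN₀ hlogN
  have hlower := log_inv_div_sub_le_logZetaModOne (p := p) hσ hσ₁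
  have hupper := logZetaModOne_le_sumInvPrimesModOne_add p hσ hN₀
  have hmain : t / (2 * p) ≤ Real.log σ⁻¹ / p := by
    rw [← div_div]
    gcongr
  have hcost : (32 + K) * logLevel p ≤ t / (4 * p) := by
    rw [le_div_iff₀ (by positivity)]
    linarith
  have hhalf : t / (2 * p) = 2 * (t / (4 * p)) := by field_simp; norm_num
  nlinarith

theorem exists_eq_mul_add_one_of_mem_primesModOne {m N q : ℕ} (hq : q ∈ primesModOne m N) :
    ∃ k < N, q = (k + 1) * m + 1 := by
  obtain ⟨hqN, hprime, hmod⟩ := mem_primesModOne.1 hq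
  have hdvd : m ∣ q - 1 := by
    rw [← ZMod.natCast_eq_zero_iff, Nat.cast_sub hprime.one_le, hmod, Nat.cast_one, sub_self]
  obtain ⟨k, hk⟩ := hdvd
  have hq₂ := hprime.two_le
  have hk₀ : k ≠ 0 := by
    rintro rfl
    omega
  have hm₀ : m ≠ 0 := by
    rintro rfl
    omega
  have hkm : k ≤ m * k := Nat.le_mul_of_pos_left k (Nat.pos_of_ne_zero hm₀)
  refine ⟨k - 1, by omega, ?_⟩
  rw [Nat.sub_add_cancel (Nat.pos_of_ne_zero hk₀), mul_comm]
  omega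

theorem sumInvPrimesModOne_le_one_add_log_div {m : ℕ} (hm : m ≠ 0) (N : ℕ) :
    sumInvPrimesModOne m N ≤ (1 + Real.log N) / m := by
  have hsub : primesModOne m N ⊆ (Finset.range N).image fun k ↦ (k + 1) * m + 1 := fun q hq ↦ by
    obtain ⟨k, hk, rfl⟩ := exists_eq_mul_add_one_of_mem_primesModOne hq
    exact Finset.mem_image_of_mem _ (Finset.mem_range.2 hk)
  have hinj : Function.Injective fun k ↦ (k + 1) * m + 1 := fun a b hab ↦
    Nat.succ_injective (Nat.eq_of_mul_eq_mul_right (Nat.pos_of_ne_zero hm) (Nat.succ_injective hab))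
  have hharmonic : ∑ k ∈ Finset.range N, ((k : ℝ) + 1)⁻¹ ≤ 1 + Real.log N := by
    simpa [harmonic] using harmonic_le_one_add_log N
  calc sumInvPrimesModOne m N
      ≤ ∑ q ∈ (Finset.range N).image fun k ↦ (k + 1) * m + 1, (q : ℝ)⁻¹ :=
        Finset.sum_le_sum_of_subset_of_nonneg hsub fun _ _ _ ↦ by positivity
    _ = ∑ k ∈ Finset.range N, (((k + 1) * m + 1 : ℕ) : ℝ)⁻¹ := Finset.sum_image hinj.injOn
    _ ≤ ∑ k ∈ Finset.range N, ((k : ℝ) + 1)⁻¹ / m := by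
        refine Finset.sum_le_sum fun k _ ↦ ?_
        rw [div_eq_mul_inv, ← mul_inv]
        push_cast
        exact inv_anti₀ (by positivity) (by linarith)
    _ ≤ (1 + Real.log N) / m := by
        rw [← Finset.sum_div]
        gcongr

section

variable {m N : ℕ} {σ τ : ℝ}

theorem inv_le_five_mul_sub_rpow {q : ℕ} (hq : q ≠ 0) (hσ : σ * Real.log q ≤ 1)
    (hτ : 2 ≤ τ * Real.log q) :
    (q : ℝ)⁻¹ ≤ 5 * ((q : ℝ) ^ (-(1 + σ)) - (q : ℝ) ^ (-(1 + τ))) := by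
  have hexp_one : 0.36 ≤ Real.exp (-1) := by
    rw [Real.exp_neg, le_inv_comm₀ (by norm_num) (Real.exp_pos 1)]
    linarith [Real.exp_one_lt_d9]
  have hexp_two : Real.exp (-2) ≤ 0.16 := by
    rw [show (-2 : ℝ) = -1 + -1 by norm_num, Real.exp_add]
    have : Real.exp (-1) ≤ 0.4 := by
      rw [Real.exp_neg, inv_le_comm₀ (Real.exp_pos 1) (by norm_num)]
      linarith [Real.exp_one_gt_d9]
    nlinarith [Real.exp_pos (-1)]
  have hσ_exp : Real.exp (-1) ≤ Real.exp (-(σ * Real.log q)) := Real.exp_le_exp.2 (by linarith)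
  have hτ_exp : Real.exp (-(τ * Real.log q)) ≤ Real.exp (-2) := Real.exp_le_exp.2 (by linarith)
  have hgap : 1 ≤ 5 * (Real.exp (-(σ * Real.log q)) - Real.exp (-(τ * Real.log q))) := by linarith
  rw [rpow_neg_one_add hq, rpow_neg_one_add hq, ← mul_sub, mul_left_comm]
  exact le_mul_of_one_le_right (by positivity) hgap

theorem sum_sub_rpow_le_logZetaModOne_sub (hσ : 0 < σ) (hστ : σ ≤ τ) {s : Finset ℕ}
    (hs : s ⊆ primesModOne m N) :
    ∑ q ∈ s, ((q : ℝ) ^ (-(1 + σ)) - (q : ℝ) ^ (-(1 + τ))) ≤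
      logZetaModOne m (1 + σ) - logZetaModOne m (1 + τ) := by
  have hsummable_σ := summable_logZetaModOne m (s := 1 + σ) (by linarith)
  have hsummable_τ := summable_logZetaModOne m (s := 1 + τ) (by linarith)
  rw [logZetaModOne, logZetaModOne, ← hsummable_σ.tsum_sub hsummable_τ]
  have hterm : ∀ q ∈ s, (q : ℝ) ^ (-(1 + σ)) - (q : ℝ) ^ (-(1 + τ)) =
      (if (q : ZMod m) = 1 then logZetaCoeff q * (q : ℝ) ^ (-(1 + σ)) else 0) -
        (if (q : ZMod m) = 1 then logZetaCoeff q * (q : ℝ) ^ (-(1 + τ)) else 0) := by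
    intro q hq
    obtain ⟨-, hprime, hmod⟩ := mem_primesModOne.1 (hs hq)
    rw [if_pos hmod, if_pos hmod, logZetaCoeff_prime hprime, one_mul, one_mul]
  rw [Finset.sum_congr rfl hterm]
  refine (hsummable_σ.sub hsummable_τ).sum_le_tsum s fun n _ ↦ ?_
  split_ifs
  · rw [← mul_sub]
    refine mul_nonneg (logZetaCoeff_nonneg n) (sub_nonneg.2 ?_)
    rcases eq_or_ne n 0 with rfl | hn
    · rw [Nat.cast_zero, Real.zero_rpow (by linarith), Real.zero_rpow (by linarith)]
    · refine Real.rpow_le_rpow_of_exponent_le ?_ (by linarith)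
      exact_mod_cast Nat.one_le_iff_ne_zero.2 hn
  · rw [sub_zero]

theorem sumInvPrimesModOne_le (hm : m ≠ 0) (hσ : 0 < σ) (hστ : σ ≤ τ)
    (hN : σ * Real.log N ≤ 1) :
    sumInvPrimesModOne m N ≤
      (1 + 2 / τ) / m + 5 * (logZetaModOne m (1 + σ) - logZetaModOne m (1 + τ)) := by
  have hτ : 0 < τ := hσ.trans_le hστ
  set K := ⌊Real.exp (2 / τ)⌋₊
  have hlogK : Real.log K ≤ 2 / τ := by
    have hK : 0 < K := Nat.floor_pos.2 (Real.one_le_exp (by positivity))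
    rw [Real.log_le_iff_le_exp (by exact_mod_cast hK)]
    exact Nat.floor_le (Real.exp_pos _).le
  rw [sumInvPrimesModOne, ← Finset.sum_filter_add_sum_filter_not _ (· ≤ K)]
  refine add_le_add ?_ ?_
  · calc ∑ q ∈ (primesModOne m N).filter (· ≤ K), (q : ℝ)⁻¹ ≤ sumInvPrimesModOne m K := by
          refine Finset.sum_le_sum_of_subset_of_nonneg (fun q hq ↦ ?_) fun _ _ _ ↦ by positivity
          obtain ⟨hq, hqK⟩ := Finset.mem_filter.1 hq
          exact mem_primesModOne.2 ⟨hqK, (mem_primesModOne.1 hq).2⟩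
      _ ≤ (1 + Real.log K) / m := sumInvPrimesModOne_le_one_add_log_div hm K
      _ ≤ (1 + 2 / τ) / m := by gcongr
  · refine le_trans ?_ (mul_le_mul_of_nonneg_left (sum_sub_rpow_le_logZetaModOne_sub hσ hστ
      (Finset.filter_subset (¬ · ≤ K) (primesModOne m N))) (by norm_num))
    rw [Finset.mul_sum]
    refine Finset.sum_le_sum fun q hq ↦ ?_
    obtain ⟨hmem, hKq⟩ := Finset.mem_filter.1 hq
    obtain ⟨hqN, hprime, -⟩ := mem_primesModOne.1 hmem
    have hq₀ : (0 : ℝ) < q := by exact_mod_cast hprime.pos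
    have hlog_le : Real.log q ≤ Real.log N := Real.log_le_log hq₀ (by exact_mod_cast hqN)
    have hlt_log : 2 / τ < Real.log q :=
      (Real.lt_log_iff_exp_lt hq₀).2 ((Nat.floor_lt (Real.exp_pos _).le).1 (not_le.1 hKq))
    refine inv_le_five_mul_sub_rpow hprime.ne_zero (by nlinarith) ?_
    rw [div_lt_iff₀ hτ] at hlt_log
    linarith

end

theorem logLevel_le {p : ℕ} (hp : p ≠ 0) {ε : ℝ} (hε : 0 < ε) :
    logLevel p ≤ (1 + ε⁻¹) * (p : ℝ) ^ ε := by
  have hp₁ : (1 : ℝ) ≤ p := by exact_mod_cast Nat.one_le_iff_ne_zero.2 hp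
  have hlog := Real.log_le_rpow_div (x := p) (by positivity) hε
  have hone := Real.one_le_rpow hp₁ hε.le
  rw [logLevel, add_mul, one_mul, inv_mul_eq_div]
  exact add_le_add hone hlog

theorem logLevel_pow_nine_le {p : ℕ} (hp : p ≠ 0) :
    logLevel p ^ 9 ≤ 37 ^ 9 * (p : ℝ) ^ (1 / 4 : ℝ) := by
  have hle := logLevel_le hp (ε := 1 / 36) (by norm_num)
  have hpow : ((p : ℝ) ^ (1 / 36 : ℝ)) ^ 9 = (p : ℝ) ^ (1 / 4 : ℝ) := by
    rw [← Real.rpow_natCast, ← Real.rpow_mul (by positivity)]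
    norm_num
  calc logLevel p ^ 9 ≤ ((1 + (1 / 36 : ℝ)⁻¹) * (p : ℝ) ^ (1 / 36 : ℝ)) ^ 9 := by
        gcongr
        exact zero_le_one.trans (one_le_logLevel p)
    _ = 37 ^ 9 * (p : ℝ) ^ (1 / 4 : ℝ) := by
        rw [mul_pow, hpow]
        norm_num

theorem log_two_mul_logLevel_le {p : ℕ} (hp : p ≠ 0) :
    Real.log (2 * logLevel p) ≤ 6 * (p : ℝ) ^ (1 / 2 : ℝ) := by
  have hle := logLevel_le hp (ε := 1 / 2) (by norm_num)
  have hlog := Real.log_le_sub_one_of_pos (x := 2 * logLevel p) (by linarith [one_le_logLevel p])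
  norm_num at hle hlog ⊢
  linarith

theorem rpow_half_div_self_le {p : ℕ} (hp : p ≠ 0) :
    (p : ℝ) ^ (1 / 2 : ℝ) / p ≤ (p : ℝ) ^ (-(1 / 4) : ℝ) := by
  rw [← Real.rpow_sub_one (by positivity)]
  exact Real.rpow_le_rpow_of_exponent_le (by exact_mod_cast Nat.one_le_iff_ne_zero.2 hp)
    (by norm_num)

section

variable {p N : ℕ} [Fact p.Prime] {σ : ℝ}

theorem sumInvPrimesModOne_le_of_log_le (h : Real.log N ≤ (p : ℝ) ^ (1 / 2 : ℝ)) :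
    sumInvPrimesModOne p N ≤ 2 * (p : ℝ) ^ (-(1 / 4) : ℝ) := by
  have hp : p.Prime := Fact.out
  have hp₁ : (1 : ℝ) ≤ p := by exact_mod_cast hp.one_le
  have hone : 1 ≤ (p : ℝ) ^ (1 / 2 : ℝ) := Real.one_le_rpow hp₁ (by norm_num)
  calc sumInvPrimesModOne p N ≤ (1 + Real.log N) / p :=
        sumInvPrimesModOne_le_one_add_log_div hp.ne_zero N
    _ ≤ 2 * ((p : ℝ) ^ (1 / 2 : ℝ) / p) := by
        rw [← mul_div_assoc]
        gcongr
        linarith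
    _ ≤ 2 * (p : ℝ) ^ (-(1 / 4) : ℝ) := by
        gcongr
        exact rpow_half_div_self_le hp.ne_zero

theorem logZetaModOne_sub_le {τ : ℝ} (hσ : 0 < σ) (hστ : σ ≤ τ) (hτ : τ ≤ 1) :
    logZetaModOne p (1 + σ) - logZetaModOne p (1 + τ) ≤
      2 / p * (Real.log (1 + σ⁻¹) + 2 * Real.log (1 + τ⁻¹) + Real.log (2 * logLevel p)) +
        2 ^ 12 * logLevel p ^ 9 * τ := by
  have hp : p.Prime := Fact.out
  have hp₂ : (2 : ℝ) ≤ p := by exact_mod_cast hp.two_le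
  have htotient : (p : ℝ) / 2 ≤ (p.totient : ℝ) := by
    rw [Nat.totient_prime hp, Nat.cast_sub hp.one_le, Nat.cast_one]
    linarith
  have htotient₀ : (0 : ℝ) < p.totient := by linarith
  have hlog_nonneg : ∀ {x : ℝ}, 0 < x → 0 ≤ Real.log (1 + x⁻¹) := fun hx ↦
    Real.log_nonneg (by linarith [inv_pos.2 hx])
  have hℓ : 0 ≤ Real.log (2 * logLevel p) := Real.log_nonneg (by linarith [one_le_logLevel p])
  set L := Real.log (1 + σ⁻¹) + 2 * Real.log (1 + τ⁻¹) + Real.log (2 * logLevel p)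
  have hL : 0 ≤ L := by
    linarith [hlog_nonneg hσ, hlog_nonneg (hσ.trans_le hστ)]
  have hle := totient_mul_logZetaModOne_sub_le (p := p) hσ hστ hτ
  refine le_of_mul_le_mul_left (hle.trans ?_) htotient₀
  rw [mul_add]
  gcongr
  calc L = (p : ℝ) / 2 * (2 / p * L) := by field_simp
    _ ≤ p.totient * (2 / p * L) := by gcongr

theorem logZetaModOne_sub_le_rpow (hσ : 0 < σ) (hσp : σ ≤ (p : ℝ) ^ (-(1 / 2) : ℝ)) :
    logZetaModOne p (1 + σ) - logZetaModOne p (1 + (p : ℝ) ^ (-(1 / 2) : ℝ)) ≤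
      2 / p * Real.log (1 + σ⁻¹) + (16 + 2 ^ 12 * 37 ^ 9) * (p : ℝ) ^ (-(1 / 4) : ℝ) := by
  have hp : p.Prime := Fact.out
  have hp₁ : (1 : ℝ) ≤ p := by exact_mod_cast hp.one_le
  have hp₀ : (0 : ℝ) < p := by positivity
  have hinv : ((p : ℝ) ^ (-(1 / 2) : ℝ))⁻¹ = (p : ℝ) ^ (1 / 2 : ℝ) := by
    rw [Real.rpow_neg hp₀.le, inv_inv]
  have hτ : (p : ℝ) ^ (-(1 / 2) : ℝ) ≤ 1 := Real.rpow_le_one_of_one_le_of_nonpos hp₁ (by norm_num)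
  have hlog_τ : Real.log (1 + (p : ℝ) ^ (1 / 2 : ℝ)) ≤ (p : ℝ) ^ (1 / 2 : ℝ) := by
    linarith [Real.log_le_sub_one_of_pos (x := 1 + (p : ℝ) ^ (1 / 2 : ℝ)) (by positivity)]
  have hlog_ℓ := log_two_mul_logLevel_le hp.ne_zero
  have hℓ := logLevel_pow_nine_le hp.ne_zero
  have hle := logZetaModOne_sub_le (p := p) hσ hσp hτ
  rw [hinv] at hle
  have hquarter : (p : ℝ) ^ (1 / 4 : ℝ) * (p : ℝ) ^ (-(1 / 2) : ℝ) = (p : ℝ) ^ (-(1 / 4) : ℝ) := by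
    rw [← Real.rpow_add hp₀]
    norm_num
  calc _ ≤ 2 / p * (Real.log (1 + σ⁻¹) + 2 * (p : ℝ) ^ (1 / 2 : ℝ) + 6 * (p : ℝ) ^ (1 / 2 : ℝ)) +
        2 ^ 12 * (37 ^ 9 * (p : ℝ) ^ (1 / 4 : ℝ)) * (p : ℝ) ^ (-(1 / 2) : ℝ) :=
        hle.trans (by gcongr)
    _ = 2 / p * Real.log (1 + σ⁻¹) + (16 * ((p : ℝ) ^ (1 / 2 : ℝ) / p) +
          2 ^ 12 * 37 ^ 9 * ((p : ℝ) ^ (1 / 4 : ℝ) * (p : ℝ) ^ (-(1 / 2) : ℝ))) := by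
        ring
    _ ≤ 2 / p * Real.log (1 + σ⁻¹) + (16 + 2 ^ 12 * 37 ^ 9) * (p : ℝ) ^ (-(1 / 4) : ℝ) := by
        rw [hquarter, add_mul]
        gcongr
        exact rpow_half_div_self_le hp.ne_zero

end

theorem exists_sumInvPrimesModOne_le : ∃ C > 0, ∀ p N : ℕ, p.Prime →
    1 ≤ Real.log (Real.log N) →
      sumInvPrimesModOne p N ≤ C * (Real.log (Real.log N) / p + (p : ℝ) ^ (-(1 / 4) : ℝ)) := by
  refine ⟨100 + 5 * (2 ^ 12 * 37 ^ 9), by norm_num, fun p N hp hN ↦ ?_⟩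
  have : Fact p.Prime := ⟨hp⟩
  have hp₁ : (1 : ℝ) ≤ p := by exact_mod_cast hp.one_le
  set t := Real.log (Real.log N)
  have hlogN : Real.log N = Real.exp t := log_eq_exp_log_log (by linarith)
  have hmain : 0 ≤ t / p := by positivity
  have hquarter : 0 < (p : ℝ) ^ (-(1 / 4) : ℝ) := by positivity
  set τ := (p : ℝ) ^ (-(1 / 2) : ℝ) with hτ_def
  have hτ_inv : τ⁻¹ = (p : ℝ) ^ (1 / 2 : ℝ) := by rw [hτ_def, Real.rpow_neg p.cast_nonneg, inv_inv]
  rcases le_total (Real.log N) ((p : ℝ) ^ (1 / 2 : ℝ)) with hsmall | hlarge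
  · nlinarith [sumInvPrimesModOne_le_of_log_le hsmall]
  set σ := (Real.log N)⁻¹ with hσ_def
  have hlogN₀ : 0 < Real.log N := hlogN ▸ Real.exp_pos t
  have hσ : 0 < σ := inv_pos.2 hlogN₀
  have hστ : σ ≤ τ := by
    rw [← inv_inv τ, hτ_inv]
    exact inv_anti₀ (by positivity) hlarge
  have hsum := sumInvPrimesModOne_le hp.ne_zero hσ hστ (inv_mul_cancel₀ hlogN₀.ne').le
  have hdiff := logZetaModOne_sub_le_rpow hσ hστ
  have hlog : Real.log (1 + σ⁻¹) ≤ 2 * t := by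
    rw [hσ_def, inv_inv, hlogN, ← Real.log_exp (2 * t), two_mul, Real.exp_add]
    refine Real.log_le_log (by positivity) ?_
    nlinarith [Real.add_one_le_exp t]
  have hlog_div : 2 / p * Real.log (1 + σ⁻¹) ≤ 4 * (t / p) := by
    calc 2 / p * Real.log (1 + σ⁻¹) ≤ 2 / p * (2 * t) := by gcongr
      _ = 4 * (t / p) := by ring
  have hsmall : (1 + 2 / τ) / p ≤ 3 * (p : ℝ) ^ (-(1 / 4) : ℝ) := by
    have hone : 1 ≤ (p : ℝ) ^ (1 / 2 : ℝ) := Real.one_le_rpow hp₁ (by norm_num)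
    calc (1 + 2 / τ) / p ≤ 3 * ((p : ℝ) ^ (1 / 2 : ℝ) / p) := by
          rw [div_eq_mul_inv 2 τ, hτ_inv, ← mul_div_assoc]
          gcongr
          linarith
      _ ≤ 3 * (p : ℝ) ^ (-(1 / 4) : ℝ) := by
          gcongr
          exact rpow_half_div_self_le hp.ne_zero
  linarith

/-! ### Sieves -/

/-- The positive integers up to `N` with no divisor in `Q`. -/
def sifted (N : ℕ) (Q : Finset ℕ) : Finset ℕ :=
  (Finset.Ioc 0 N).filter fun n ↦ ∀ q ∈ Q, ¬ q ∣ n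

theorem mem_sifted {N n : ℕ} {Q : Finset ℕ} :
    n ∈ sifted N Q ↔ (0 < n ∧ n ≤ N) ∧ ∀ q ∈ Q, ¬ q ∣ n := by
  rw [sifted, Finset.mem_filter, Finset.mem_Ioc]

/-- The number of divisors of `n` in `Q`, as a real number: the random variable to which Turán's
second moment method is applied. -/
noncomputable def numDivisorsIn (Q : Finset ℕ) (n : ℕ) : ℝ := ∑ q ∈ Q, if q ∣ n then 1 else 0

theorem sum_ite_dvd (N d : ℕ) :
    ∑ n ∈ Finset.Ioc 0 N, (if d ∣ n then (1 : ℝ) else 0) = (N / d : ℕ) := by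
  rw [← Finset.sum_filter, Finset.sum_const, nsmul_eq_mul, mul_one, Nat.Ioc_filter_dvd_card_eq_div]

theorem div_lt_natCast_div_add_one (N d : ℕ) : (N : ℝ) / d < (N / d : ℕ) + 1 := by
  simpa [Nat.floor_div_natCast] using Nat.lt_floor_add_one ((N : ℝ) / d)

section Turan

variable {N : ℕ} {Q : Finset ℕ}

theorem sub_le_sum_numDivisorsIn (hQ : Q ⊆ Finset.Ioc 0 N) :
    N * ∑ q ∈ Q, (q : ℝ)⁻¹ - N ≤ ∑ n ∈ Finset.Ioc 0 N, numDivisorsIn Q n := by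
  have hcard : (Q.card : ℝ) ≤ N := by
    have := Finset.card_le_card hQ
    rw [Nat.card_Ioc] at this
    exact_mod_cast this
  calc N * ∑ q ∈ Q, (q : ℝ)⁻¹ - N ≤ ∑ q ∈ Q, ((N : ℝ) / q - 1) := by
        simp only [Finset.sum_sub_distrib, Finset.mul_sum, div_eq_mul_inv, Finset.sum_const,
          nsmul_eq_mul, mul_one]
        linarith
    _ ≤ ∑ q ∈ Q, ((N / q : ℕ) : ℝ) :=
        Finset.sum_le_sum fun q _ ↦ by linarith [div_lt_natCast_div_add_one N q]
    _ = ∑ n ∈ Finset.Ioc 0 N, numDivisorsIn Q n := by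
        simp_rw [numDivisorsIn, ← sum_ite_dvd]
        exact Finset.sum_comm

theorem sum_ite_dvd_and_dvd_le {q r : ℕ} (h : q = r ∨ q.Coprime r) :
    ∑ n ∈ Finset.Ioc 0 N, (if q ∣ n ∧ r ∣ n then (1 : ℝ) else 0) ≤
      N * ((q : ℝ)⁻¹ * (r : ℝ)⁻¹) + if q = r then N * (q : ℝ)⁻¹ else 0 := by
  by_cases hqr : q = r
  · subst hqr
    simp only [and_self, if_true, sum_ite_dvd]
    exact Nat.cast_div_le.trans (le_add_of_nonneg_left (by positivity))
  · have hdvd : ∀ n, q ∣ n ∧ r ∣ n ↔ q * r ∣ n := fun n ↦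
      ⟨fun hn ↦ (h.resolve_left hqr).mul_dvd_of_dvd_of_dvd hn.1 hn.2,
        fun hn ↦ ⟨dvd_of_mul_right_dvd hn, dvd_of_mul_left_dvd hn⟩⟩
    simp only [hdvd, sum_ite_dvd, if_neg hqr, add_zero]
    refine Nat.cast_div_le.trans_eq ?_
    rw [Nat.cast_mul, div_eq_mul_inv, mul_inv]

theorem sum_numDivisorsIn_sq_le (hQ : (Q : Set ℕ).Pairwise Nat.Coprime) :
    ∑ n ∈ Finset.Ioc 0 N, numDivisorsIn Q n ^ 2 ≤
      N * (∑ q ∈ Q, (q : ℝ)⁻¹) ^ 2 + N * ∑ q ∈ Q, (q : ℝ)⁻¹ := by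
  have hexpand : ∀ n, numDivisorsIn Q n ^ 2 =
      ∑ q ∈ Q, ∑ r ∈ Q, if q ∣ n ∧ r ∣ n then (1 : ℝ) else 0 := fun n ↦ by
    simp only [numDivisorsIn, sq, Finset.sum_mul_sum, ite_and, ite_mul, one_mul, zero_mul]
  calc ∑ n ∈ Finset.Ioc 0 N, numDivisorsIn Q n ^ 2
      = ∑ q ∈ Q, ∑ r ∈ Q, ∑ n ∈ Finset.Ioc 0 N, if q ∣ n ∧ r ∣ n then (1 : ℝ) else 0 := by
        simp_rw [hexpand]
        rw [Finset.sum_comm]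
        exact Finset.sum_congr rfl fun q _ ↦ Finset.sum_comm
    _ ≤ ∑ q ∈ Q, ∑ r ∈ Q, (N * ((q : ℝ)⁻¹ * (r : ℝ)⁻¹) + if q = r then N * (q : ℝ)⁻¹ else 0) :=
        Finset.sum_le_sum fun q hq ↦ Finset.sum_le_sum fun r hr ↦
          sum_ite_dvd_and_dvd_le (or_iff_not_imp_left.2 (hQ hq hr))
    _ = N * (∑ q ∈ Q, (q : ℝ)⁻¹) ^ 2 + N * ∑ q ∈ Q, (q : ℝ)⁻¹ := by
        rw [sq, Finset.sum_mul_sum]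
        simp only [Finset.sum_add_distrib, Finset.sum_ite_eq, Finset.mul_sum]
        congr 1
        exact Finset.sum_congr rfl fun q hq ↦ if_pos hq

theorem card_sifted_mul_sum_inv_le (hQ : Q ⊆ Finset.Ioc 0 N)
    (hcop : (Q : Set ℕ).Pairwise Nat.Coprime) :
    (sifted N Q).card * ∑ q ∈ Q, (q : ℝ)⁻¹ ≤ 3 * N := by
  have hmean := sub_le_sum_numDivisorsIn hQ
  have hsquare := sum_numDivisorsIn_sq_le (N := N) hcop
  set S := ∑ q ∈ Q, (q : ℝ)⁻¹
  have hS : 0 ≤ S := Finset.sum_nonneg fun q _ ↦ by positivity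
  rcases hS.eq_or_lt with hzero | hpos
  · rw [← hzero, mul_zero]
    positivity
  have hvariance : ∑ n ∈ Finset.Ioc 0 N, (numDivisorsIn Q n - S) ^ 2 =
      ∑ n ∈ Finset.Ioc 0 N, numDivisorsIn Q n ^ 2 -
        2 * S * ∑ n ∈ Finset.Ioc 0 N, numDivisorsIn Q n + N * S ^ 2 := by
    simp only [sub_sq, Finset.sum_add_distrib, Finset.sum_sub_distrib, Finset.mul_sum,
      Finset.sum_const, Nat.card_Ioc, nsmul_eq_mul, Nat.sub_zero]
    congr! 3
    ring
  have hchebyshev : (sifted N Q).card * S ^ 2 ≤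
      ∑ n ∈ Finset.Ioc 0 N, (numDivisorsIn Q n - S) ^ 2 := by
    calc (sifted N Q).card * S ^ 2 = ∑ n ∈ sifted N Q, (numDivisorsIn Q n - S) ^ 2 := by
          rw [← nsmul_eq_mul, ← Finset.sum_const]
          refine Finset.sum_congr rfl fun n hn ↦ ?_
          have hzero : numDivisorsIn Q n = 0 :=
            Finset.sum_eq_zero fun q hq ↦ if_neg ((mem_sifted.1 hn).2 q hq)
          rw [hzero, zero_sub, neg_sq]
      _ ≤ _ := Finset.sum_le_sum_of_subset_of_nonneg (Finset.filter_subset _ _)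
          fun _ _ _ ↦ sq_nonneg _
  refine le_of_mul_le_mul_right (a := S) ?_ hpos
  nlinarith

end Turan

/-- The Mertens product over the primes up to `y`: the density of the integers without prime
factors up to `y`. -/
noncomputable def mertensProduct (y : ℕ) : ℝ := ∏ q ∈ Nat.primesLE y, (1 - (q : ℝ)⁻¹)

theorem inv_prime_mem_Icc {q : ℕ} (hq : q.Prime) : (q : ℝ)⁻¹ ∈ Set.Icc 0 (1 / 2) := by
  have hq₂ : (2 : ℝ) ≤ q := by exact_mod_cast hq.two_le
  exact ⟨by positivity, by simpa using inv_anti₀ two_pos hq₂⟩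

theorem mertensProduct_pos (y : ℕ) : 0 < mertensProduct y :=
  Finset.prod_pos fun q hq ↦ by
    linarith [(inv_prime_mem_Icc (Nat.prime_of_mem_primesLE hq)).2]

theorem totient_primorial (y : ℕ) :
    ((primorial y).totient : ℝ) = primorial y * mertensProduct y := by
  have h := congrArg (fun x : ℚ ↦ (x : ℝ)) (Nat.totient_eq_mul_prod_factors (primorial y))
  rw [primeFactors_primorial] at h
  push_cast at h
  exact h

theorem sifted_primesLE (N y : ℕ) :
    sifted N (Nat.primesLE y) =
      (Finset.Ico 1 (1 + N)).filter fun n ↦ (primorial y).Coprime n := by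
  ext n
  rw [mem_sifted, Finset.mem_filter, Finset.mem_Ico]
  refine and_congr (by omega) ?_
  rw [primorial, Nat.coprime_prod_left_iff]
  refine forall_congr' fun q ↦ ?_
  rw [Nat.mem_primesLE, Finset.mem_filter, Finset.mem_range, Nat.lt_succ_iff]
  exact forall_congr' fun hq ↦ hq.2.coprime_iff_not_dvd.symm

theorem card_filter_coprime_Ico_mul (P k : ℕ) :
    ((Finset.Ico 1 (1 + P * k)).filter fun n ↦ P.Coprime n).card = P.totient * k := by
  induction k with
  | zero => simp
  | succ k ih =>
    have hunion : Finset.Ico 1 (1 + P * (k + 1)) =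
        Finset.Ico 1 (1 + P * k) ∪ Finset.Ico (1 + P * k) (1 + P * k + P) := by
      rw [Finset.Ico_union_Ico_eq_Ico (by omega) (by omega)]
      ring_nf
    rw [hunion, Finset.filter_union, Finset.card_union_of_disjoint
      (Finset.disjoint_filter_filter (Finset.Ico_disjoint_Ico_consecutive _ _ _)), ih,
      Nat.filter_coprime_Ico_eq_totient, mul_add_one]

theorem abs_card_sifted_primesLE_sub_le (N y : ℕ) :
    |((sifted N (Nat.primesLE y)).card : ℝ) - N * mertensProduct y| ≤ 4 ^ y := by
  rw [sifted_primesLE]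
  have hP_ne := primorial_ne_zero y
  have hP_le : (primorial y : ℝ) ≤ 4 ^ y := by exact_mod_cast primorial_le_four_pow y
  have htotient := totient_primorial y
  set P := primorial y
  set c := ((Finset.Ico 1 (1 + N)).filter fun n ↦ P.Coprime n).card
  have hupper : (c : ℝ) ≤ P.totient * ((N / P : ℕ) + 1) := by
    exact_mod_cast Nat.Ico_filter_coprime_le 1 N hP_ne
  have hlower : P.totient * ((N / P : ℕ) : ℝ) ≤ c := by
    norm_cast
    rw [← card_filter_coprime_Ico_mul]
    refine Finset.card_le_card (Finset.filter_subset_filter _ (Finset.Ico_subset_Ico_right ?_))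
    have := Nat.mul_div_le N P
    omega
  have hdiv_le : ((N / P : ℕ) : ℝ) ≤ N / P := Nat.cast_div_le
  have hlt_div := div_lt_natCast_div_add_one N P
  have hφ_le : (P.totient : ℝ) ≤ P := by exact_mod_cast P.totient_le
  have hmain : N * mertensProduct y = P.totient * (N / P) := by
    rw [htotient]
    field_simp
  rw [hmain, abs_le]
  constructor <;> nlinarith [P.totient.cast_nonneg (α := ℝ)]

/-! ### Mertens' theorems -/

theorem log_factorial_eq_sum_vonMangoldt (N : ℕ) :
    Real.log N.factorial =
      ∑ n ∈ Finset.range (N + 1), ArithmeticFunction.vonMangoldt n * (N / n : ℕ) := by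
  rw [Nat.range_succ_eq_Icc_zero, ← Finset.add_sum_Ioc_eq_sum_Icc N.zero_le,
    ArithmeticFunction.map_zero, zero_mul, zero_add,
    ← ArithmeticFunction.sum_Ioc_mul_zeta_eq_sum, ArithmeticFunction.vonMangoldt_mul_zeta]
  induction N with
  | zero => simp
  | succ N ih =>
    rw [Finset.sum_Ioc_succ_top N.zero_le, ← ih, Nat.factorial_succ, Nat.cast_mul,
      Real.log_mul (by positivity) (by positivity), ArithmeticFunction.log_apply, add_comm]

theorem abs_sum_vonMangoldt_div_sub_log_le {N : ℕ} (hN : N ≠ 0) :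
    |∑ n ∈ Finset.range (N + 1), ArithmeticFunction.vonMangoldt n / n - Real.log N| ≤
      Real.log 4 + 4 := by
  have hN₀ : (0 : ℝ) < N := by positivity
  have hΛ (n : ℕ) : 0 ≤ ArithmeticFunction.vonMangoldt n := ArithmeticFunction.vonMangoldt_nonneg
  set S := ∑ n ∈ Finset.range (N + 1), ArithmeticFunction.vonMangoldt n / n
  have hNS : N * S = ∑ n ∈ Finset.range (N + 1), ArithmeticFunction.vonMangoldt n * (N / n) := by
    rw [Finset.mul_sum]
    exact Finset.sum_congr rfl fun n _ ↦ mul_div_left_comm _ _ _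
  have hupper : Real.log N.factorial ≤ N * S := by
    rw [log_factorial_eq_sum_vonMangoldt, hNS]
    exact Finset.sum_le_sum fun n _ ↦ mul_le_mul_of_nonneg_left Nat.cast_div_le (hΛ n)
  have hlower : N * S - Chebyshev.psi N ≤ Real.log N.factorial := by
    rw [log_factorial_eq_sum_vonMangoldt, hNS, Chebyshev.psi_eq_sum_Icc,
      Nat.floor_natCast, ← Nat.range_succ_eq_Icc_zero, ← Finset.sum_sub_distrib]
    refine Finset.sum_le_sum fun n _ ↦ ?_
    nlinarith [hΛ n, div_lt_natCast_div_add_one N n]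
  have hψ := Chebyshev.psi_le_const_mul_self hN₀.le
  have hfactorial_ge : N * (Real.log N - 1) ≤ Real.log N.factorial := by
    have := Stirling.le_log_factorial_stirling hN
    have := Real.log_natCast_nonneg N
    have := Real.log_nonneg (x := 2 * π) (by linarith [Real.pi_gt_three])
    linarith
  have hfactorial_le : Real.log N.factorial ≤ N * Real.log N := by
    rw [← Real.log_pow]
    exact Real.log_le_log (by positivity) (by exact_mod_cast N.factorial_le_pow)
  have hS_ge : Real.log N - 1 ≤ S := le_of_mul_le_mul_left (by linarith) hN₀
  have hS_le : S ≤ Real.log N + (Real.log 4 + 4) := le_of_mul_le_mul_left (by linarith) hN₀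
  have := Real.log_pos (x := 4) (by norm_num)
  rw [abs_le]
  constructor <;> linarith

theorem abs_log_sub_log_sub_le {x z : ℝ} (hz : 0 < z) (hzx : z ≤ x) :
    |Real.log x - Real.log z - (x - z) / x| ≤ (x - z) ^ 2 / (x * z) := by
  have hx : 0 < x := hz.trans_le hzx
  have hupper := Real.log_le_sub_one_of_pos (x := x / z) (by positivity)
  have hlower := Real.one_sub_inv_le_log_of_pos (x := x / z) (by positivity)
  rw [inv_div] at hlower
  rw [← Real.log_div hx.ne' hz.ne', abs_of_nonneg (by rw [sub_div, div_self hx.ne']; linarith)]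
  calc Real.log (x / z) - (x - z) / x ≤ x / z - 1 - (x - z) / x := by linarith
    _ = (x - z) ^ 2 / (x * z) := by field_simp

theorem summable_log_log_sub_sub_div_log :
    Summable fun n : ℕ ↦ Real.log (Real.log (n + 3 : ℕ)) - Real.log (Real.log (n + 2 : ℕ)) -
      (Real.log (n + 3 : ℕ) - Real.log (n + 2 : ℕ)) / Real.log (n + 3 : ℕ) := by
  refine Summable.of_norm_bounded (((summable_nat_add_iff 2).2
    (Real.summable_one_div_nat_pow.2 one_lt_two)).mul_left 4) fun n ↦ ?_
  have hlog₂ : 1 / 2 ≤ Real.log (n + 2 : ℕ) := by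
    have : Real.log 2 ≤ Real.log (n + 2 : ℕ) :=
      Real.log_le_log two_pos (by exact_mod_cast Nat.le_add_left 2 n)
    linarith [Real.log_two_gt_d9]
  have hmono : Real.log (n + 2 : ℕ) ≤ Real.log (n + 3 : ℕ) :=
    Real.log_le_log (by positivity) (by exact_mod_cast Nat.le_succ (n + 2))
  have hstep : Real.log (n + 3 : ℕ) - Real.log (n + 2 : ℕ) ≤ 1 / (n + 2 : ℕ) := by
    rw [← Real.log_div (by positivity) (by positivity)]
    refine (Real.log_le_sub_one_of_pos (by positivity)).trans_eq ?_
    field_simp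
    push_cast
    ring
  refine (abs_log_sub_log_sub_le (by linarith) hmono).trans ?_
  calc _ ≤ (1 / (n + 2 : ℕ) : ℝ) ^ 2 / (1 / 2 * (1 / 2)) := by
        gcongr
        linarith
    _ = 4 * (1 / ((n + 2 : ℕ) : ℝ) ^ 2) := by
        rw [one_div_pow]
        ring

/-- Partial summation turns the difference into a series to which Dirichlet's test applies. -/
theorem exists_tendsto_sum_sub_log_log {a : ℕ → ℝ} {K : ℝ}
    (ha : ∀ N ≠ 0, |∑ n ∈ Finset.range (N + 1), a n * Real.log n - Real.log N| ≤ K) :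
    ∃ C, Tendsto (fun N : ℕ ↦ ∑ n ∈ Finset.range (N + 1), a n - Real.log (Real.log N))
      atTop (nhds C) := by
  set S : ℕ → ℝ := fun N ↦ ∑ n ∈ Finset.range (N + 1), a n - Real.log (Real.log N)
  set T : ℕ → ℝ := fun N ↦ ∑ n ∈ Finset.range (N + 1), a n * Real.log n - Real.log N
  set w : ℕ → ℝ := fun n ↦ (Real.log (n + 3 : ℕ))⁻¹
  have hlog_pos (n : ℕ) : 0 < Real.log (n + 3 : ℕ) := Real.log_pos (by norm_cast; omega)
  have hw : Antitone w := fun i j hij ↦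
    inv_anti₀ (hlog_pos i) (Real.log_le_log (by positivity) (by gcongr))
  have hw_lim : Tendsto w atTop (nhds 0) := tendsto_inv_atTop_zero.comp
    (Real.tendsto_log_atTop.comp (tendsto_natCast_atTop_atTop.comp (tendsto_add_atTop_nat 3)))
  have hT (N : ℕ) : ‖∑ i ∈ Finset.range N, (T (i + 3) - T (i + 2))‖ ≤ K + K := by
    rw [Finset.sum_range_sub fun i ↦ T (i + 2)]
    exact (norm_sub_le _ _).trans (add_le_add (ha _ (by omega)) (ha _ (by omega)))
  obtain ⟨L, hL⟩ := cauchySeq_tendsto_of_complete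
    (hw.cauchySeq_series_mul_of_tendsto_zero_of_bounded hw_lim hT)
  have hlim := (hL.sub summable_log_log_sub_sub_div_log.hasSum.tendsto_sum_nat).add_const (S 2)
  refine ⟨_, (tendsto_add_atTop_iff_nat 2).1 (hlim.congr fun N ↦ ?_)⟩
  have hstep (i : ℕ) : w i • (T (i + 3) - T (i + 2)) -
      (Real.log (Real.log (i + 3 : ℕ)) - Real.log (Real.log (i + 2 : ℕ)) -
        (Real.log (i + 3 : ℕ) - Real.log (i + 2 : ℕ)) / Real.log (i + 3 : ℕ)) =
      S (i + 3) - S (i + 2) := by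
    have := (hlog_pos i).ne'
    simp only [S, T, w, smul_eq_mul, Finset.sum_range_succ _ (i + 3)]
    field_simp
    ring
  rw [← Finset.sum_sub_distrib, Finset.sum_congr rfl fun i _ ↦ hstep i,
    Finset.sum_range_sub fun i ↦ S (i + 2), sub_add_cancel]

theorem exists_tendsto_sum_logZetaCoeff_div_sub_log_log :
    ∃ C, Tendsto (fun N : ℕ ↦ ∑ n ∈ Finset.range (N + 1), logZetaCoeff n / n -
      Real.log (Real.log N)) atTop (nhds C) := by
  refine exists_tendsto_sum_sub_log_log (K := Real.log 4 + 4) fun N hN ↦ ?_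
  convert abs_sum_vonMangoldt_div_sub_log_le hN using 4 with n
  rcases eq_or_ne (Real.log n) 0 with h | h
  · have hn : ArithmeticFunction.vonMangoldt n = 0 :=
      le_antisymm (h ▸ ArithmeticFunction.vonMangoldt_le_log) ArithmeticFunction.vonMangoldt_nonneg
    rw [h, hn, mul_zero, zero_div]
  · rw [logZetaCoeff]
    field_simp

section LogBlock

variable {a : ℕ → ℝ}

/-- The sum of `a` over the `n` with `⌈log n⌉ = c`, that is, over `e ^ (c - 1) < n ≤ e ^ c`. It
turns a Dirichlet series in `n ^ (-σ)` into a power series in `e ^ (-σ)`. -/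
noncomputable def logBlockSum (a : ℕ → ℝ) (c : ℕ) : ℝ :=
  ∑ n ∈ (Finset.range (⌊Real.exp c⌋₊ + 1)).filter fun n : ℕ ↦ ⌈Real.log n⌉₊ = c, a n

theorem ceil_log_le_iff {n M : ℕ} : ⌈Real.log n⌉₊ ≤ M ↔ n < ⌊Real.exp M⌋₊ + 1 := by
  rcases n.eq_zero_or_pos with rfl | hn
  · simp
  · rw [Nat.ceil_le, Nat.lt_succ_iff, Nat.le_floor_iff (Real.exp_pos _).le,
      Real.log_le_iff_le_exp (by exact_mod_cast hn)]

theorem sum_range_logBlockSum (a : ℕ → ℝ) (M : ℕ) :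
    ∑ c ∈ Finset.range (M + 1), logBlockSum a c =
      ∑ n ∈ Finset.range (⌊Real.exp M⌋₊ + 1), a n := by
  rw [← Finset.sum_fiberwise_of_maps_to (t := Finset.range (M + 1)) (g := fun n : ℕ ↦ ⌈Real.log n⌉₊)
    fun n hn ↦ Finset.mem_range_succ_iff.2 (ceil_log_le_iff.2 (Finset.mem_range.1 hn))]
  refine Finset.sum_congr rfl fun c hc ↦ Finset.sum_congr ?_ fun _ _ ↦ rfl
  ext n
  simp only [Finset.mem_filter, Finset.mem_range, ← ceil_log_le_iff]
  have := Finset.mem_range_succ_iff.1 hc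
  omega

theorem hasSum_logBlockSum_mul_pow {x : ℝ} (hx : Summable fun n : ℕ ↦ a n * x ^ ⌈Real.log n⌉₊) :
    HasSum (fun c ↦ logBlockSum a c * x ^ c) (∑' n : ℕ, a n * x ^ ⌈Real.log n⌉₊) := by
  refine (hx.hasSum.tsum_fiberwise fun n : ℕ ↦ ⌈Real.log n⌉₊).congr_fun fun c ↦ ?_
  rw [tsum_subtype _ fun n : ℕ ↦ a n * x ^ ⌈Real.log n⌉₊,
    tsum_eq_sum (s := Finset.range (⌊Real.exp c⌋₊ + 1)), logBlockSum, Finset.sum_mul,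
    Finset.sum_filter]
  · refine Finset.sum_congr rfl fun n _ ↦ ?_
    by_cases h : ⌈Real.log n⌉₊ = c <;> simp [h]
  · refine fun n hn ↦ Set.indicator_of_notMem (fun h ↦ hn ?_) _
    exact Finset.mem_range.2 (ceil_log_le_iff.1 (le_of_eq h))

end LogBlock

theorem tendsto_log_log_floor_exp_sub_log :
    Tendsto (fun M : ℕ ↦ Real.log (Real.log ⌊Real.exp M⌋₊) - Real.log M) atTop (nhds 0) := by
  have hexp : Tendsto (fun M : ℕ ↦ Real.exp M) atTop atTop :=
    Real.tendsto_exp_atTop.comp tendsto_natCast_atTop_atTop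
  have hfloor : Tendsto (fun M : ℕ ↦ Real.log (⌊Real.exp M⌋₊ / Real.exp M)) atTop (nhds 0) := by
    have := (tendsto_nat_floor_div_atTop (R := ℝ)).comp hexp
    simpa using this.log one_ne_zero
  have hratio : Tendsto (fun M : ℕ ↦ Real.log ⌊Real.exp M⌋₊ / M) atTop (nhds 1) := by
    have := (hfloor.mul tendsto_inv_atTop_nhds_zero_nat).const_add 1
    rw [mul_zero, add_zero] at this
    refine this.congr' ?_
    filter_upwards [eventually_ne_atTop 0] with M hM
    have : ⌊Real.exp M⌋₊ ≠ 0 := (Nat.floor_pos.2 (Real.one_le_exp M.cast_nonneg)).ne'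
    rw [Real.log_div (by positivity) (Real.exp_ne_zero _), Real.log_exp]
    field_simp
    ring
  have hlog := hratio.log one_ne_zero
  rw [Real.log_one] at hlog
  refine hlog.congr' ?_
  filter_upwards [hratio.eventually_ne one_ne_zero] with M hM
  obtain ⟨hnum, hden⟩ := div_ne_zero_iff.1 hM
  exact Real.log_div hnum hden

theorem tendsto_log_one_sub_exp_neg_sub_log :
    Tendsto (fun σ : ℝ ↦ Real.log (1 - Real.exp (-σ)) - Real.log σ)
      (nhdsWithin 0 (Set.Ioi 0)) (nhds 0) := by
  have hderiv : HasDerivAt (fun σ : ℝ ↦ 1 - Real.exp (-σ)) 1 0 := by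
    simpa using ((hasDerivAt_neg (0 : ℝ)).exp).const_sub 1
  have hslope := hderiv.tendsto_slope_zero_right.log one_ne_zero
  rw [Real.log_one] at hslope
  refine hslope.congr' ?_
  filter_upwards [self_mem_nhdsWithin] with σ (hσ : 0 < σ)
  have : Real.exp (-σ) < 1 := Real.exp_lt_one_iff.2 (neg_lt_zero.2 hσ)
  rw [zero_add, neg_zero, Real.exp_zero, sub_self, sub_zero, smul_eq_mul,
    Real.log_mul (inv_ne_zero hσ.ne') (by linarith), Real.log_inv]
  ring

theorem tendsto_exp_neg_nhdsLT_one :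
    Tendsto (fun σ : ℝ ↦ Real.exp (-σ)) (nhdsWithin 0 (Set.Ioi 0)) (nhdsWithin 1 (Set.Iio 1)) := by
  refine tendsto_nhdsWithin_iff.2 ⟨?_, ?_⟩
  · have : Continuous fun σ : ℝ ↦ Real.exp (-σ) := by fun_prop
    simpa using (this.tendsto 0).mono_left nhdsWithin_le_nhds
  · filter_upwards [self_mem_nhdsWithin] with σ (hσ : 0 < σ)
    exact Real.exp_lt_one_iff.2 (neg_lt_zero.2 hσ)

theorem hasSum_inv_mul_exp_neg_pow {σ : ℝ} (hσ : 0 < σ) :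
    HasSum (fun k : ℕ ↦ (k : ℝ)⁻¹ * Real.exp (-σ) ^ k) (-Real.log (1 - Real.exp (-σ))) := by
  have hlt : |Real.exp (-σ)| < 1 := by
    rw [abs_of_pos (Real.exp_pos _)]
    exact Real.exp_lt_one_iff.2 (neg_lt_zero.2 hσ)
  rw [← hasSum_nat_add_iff' 1]
  simpa [div_eq_inv_mul] using Real.hasSum_pow_div_log_of_abs_lt_one hlt

section AbelLimit

variable {a : ℕ → ℝ} (ha : ∀ n, 0 ≤ a n)
  (hsum : ∀ σ > 0, Summable fun n : ℕ ↦ a n * Real.exp (-(σ * Real.log n)))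

theorem exp_neg_pow_ceil_log_mem_Icc {σ : ℝ} (hσ : 0 ≤ σ) (n : ℕ) :
    Real.exp (-σ) ^ ⌈Real.log n⌉₊ ∈ Set.Icc (Real.exp (-σ) * Real.exp (-(σ * Real.log n)))
      (Real.exp (-(σ * Real.log n))) := by
  have hceil_ge : Real.log n ≤ ⌈Real.log n⌉₊ := Nat.le_ceil _
  have hceil_le : (⌈Real.log n⌉₊ : ℝ) < Real.log n + 1 :=
    Nat.ceil_lt_add_one (Real.log_natCast_nonneg n)
  rw [← Real.exp_nat_mul, ← Real.exp_add, Set.mem_Icc, Real.exp_le_exp, Real.exp_le_exp]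
  constructor <;> nlinarith

include ha hsum

theorem summable_mul_exp_neg_pow_ceil_log {σ : ℝ} (hσ : 0 < σ) :
    Summable fun n : ℕ ↦ a n * Real.exp (-σ) ^ ⌈Real.log n⌉₊ :=
  (hsum σ hσ).of_nonneg_of_le (fun n ↦ mul_nonneg (ha n) (by positivity)) fun n ↦
    mul_le_mul_of_nonneg_left (exp_neg_pow_ceil_log_mem_Icc hσ.le n).2 (ha n)

theorem tendsto_tsum_mul_exp_neg_pow_ceil_log_add_log
    (hlim : Tendsto (fun σ : ℝ ↦ ∑' n : ℕ, a n * Real.exp (-(σ * Real.log n)) + Real.log σ)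
      (nhdsWithin 0 (Set.Ioi 0)) (nhds 0)) :
    Tendsto (fun σ : ℝ ↦ ∑' n : ℕ, a n * Real.exp (-σ) ^ ⌈Real.log n⌉₊ + Real.log σ)
      (nhdsWithin 0 (Set.Ioi 0)) (nhds 0) := by
  set F : ℝ → ℝ := fun σ ↦ ∑' n : ℕ, a n * Real.exp (-(σ * Real.log n))
  have hσ_log : Tendsto (fun σ : ℝ ↦ σ * Real.log σ) (nhdsWithin 0 (Set.Ioi 0)) (nhds 0) := by
    simpa [mul_comm] using tendsto_log_mul_rpow_nhdsGT_zero (r := 1) one_pos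
  have hσ_lim : Tendsto (fun σ : ℝ ↦ σ) (nhdsWithin 0 (Set.Ioi 0)) (nhds 0) := nhdsWithin_le_nhds
  have hlower : Tendsto (fun σ : ℝ ↦ F σ + Real.log σ -
      (σ * (F σ + Real.log σ) - σ * Real.log σ)) (nhdsWithin 0 (Set.Ioi 0)) (nhds 0) := by
    simpa using hlim.sub ((hσ_lim.mul hlim).sub hσ_log)
  refine tendsto_of_tendsto_of_tendsto_of_le_of_le' hlower hlim ?_ ?_ <;>
    filter_upwards [self_mem_nhdsWithin] with σ (hσ : 0 < σ)
  · have hF : 0 ≤ F σ := tsum_nonneg fun n ↦ mul_nonneg (ha n) (by positivity)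
    have hle : Real.exp (-σ) * F σ ≤ ∑' n : ℕ, a n * Real.exp (-σ) ^ ⌈Real.log n⌉₊ := by
      rw [← tsum_mul_left]
      refine Summable.tsum_le_tsum (fun n ↦ ?_) ((hsum σ hσ).mul_left _)
        (summable_mul_exp_neg_pow_ceil_log ha hsum hσ)
      rw [mul_left_comm]
      exact mul_le_mul_of_nonneg_left (exp_neg_pow_ceil_log_mem_Icc hσ.le n).1 (ha n)
    nlinarith [Real.add_one_le_exp (-σ)]
  · gcongr
    · exact summable_mul_exp_neg_pow_ceil_log ha hsum hσ
    · exact hsum σ hσ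
    · exact ha _
    · exact (exp_neg_pow_ceil_log_mem_Icc hσ.le _).2

/-- Abel's limit theorem for the power series `∑ (logBlockSum a c - 1 / c) x ^ c`, whose partial
sums tend to `C - γ`, while the series itself tends to `0` as `x → 1`. -/
theorem eq_eulerMascheroniConstant_of_tendsto
    (hlim : Tendsto (fun σ : ℝ ↦ ∑' n : ℕ, a n * Real.exp (-(σ * Real.log n)) + Real.log σ)
      (nhdsWithin 0 (Set.Ioi 0)) (nhds 0)) {C : ℝ}
    (hC : Tendsto (fun N : ℕ ↦ ∑ n ∈ Finset.range (N + 1), a n - Real.log (Real.log N))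
      atTop (nhds C)) :
    C = Real.eulerMascheroniConstant := by
  have hfloor : Tendsto (fun M : ℕ ↦ ⌊Real.exp M⌋₊) atTop atTop :=
    tendsto_nat_floor_atTop.comp (Real.tendsto_exp_atTop.comp tendsto_natCast_atTop_atTop)
  have hpartial : Tendsto (fun M ↦ ∑ c ∈ Finset.range M, (logBlockSum a c - (c : ℝ)⁻¹)) atTop
      (nhds (C - Real.eulerMascheroniConstant)) := by
    rw [← tendsto_add_atTop_iff_nat 1]
    have := ((hC.comp hfloor).add tendsto_log_log_floor_exp_sub_log).sub
      Real.tendsto_harmonic_sub_log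
    rw [add_zero] at this
    refine this.congr fun M ↦ ?_
    rw [Finset.sum_sub_distrib, sum_range_logBlockSum,
      Finset.sum_range_succ' fun c : ℕ ↦ (c : ℝ)⁻¹, harmonic]
    simp
  have hAbel := (Real.tendsto_tsum_powerSeries_nhdsWithin_lt hpartial).comp
    tendsto_exp_neg_nhdsLT_one
  have hzero := (tendsto_tsum_mul_exp_neg_pow_ceil_log_add_log ha hsum hlim).add
    tendsto_log_one_sub_exp_neg_sub_log
  rw [add_zero] at hzero
  refine sub_eq_zero.1 (tendsto_nhds_unique (hAbel.congr' ?_) hzero)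
  filter_upwards [self_mem_nhdsWithin] with σ (hσ : 0 < σ)
  have hseries := (hasSum_logBlockSum_mul_pow (summable_mul_exp_neg_pow_ceil_log ha hsum hσ)).sub
    (hasSum_inv_mul_exp_neg_pow hσ)
  simp only [Function.comp_apply, sub_mul, hseries.tsum_eq]
  ring

end AbelLimit

theorem hasSum_log_norm_riemannZeta {σ : ℝ} (hσ : 0 < σ) :
    HasSum (fun n : ℕ ↦ logZetaCoeff n / n * Real.exp (-(σ * Real.log n)))
      (Real.log ‖riemannZeta (1 + σ : ℝ)‖) := by
  have h := hasSum_log_norm_LFunction (1 : DirichletCharacter ℂ 1) (s := 1 + σ) (by linarith)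
  rw [DirichletCharacter.LFunction_modOne_eq] at h
  refine h.congr_fun fun n ↦ ?_
  rcases eq_or_ne n 0 with rfl | hn
  · simp [logZetaCoeff]
  · rw [Subsingleton.elim (n : ZMod 1) 1, map_one, one_mul, Complex.ofReal_re, rpow_neg_one_add hn]
    ring

theorem tendsto_log_norm_riemannZeta_add_log :
    Tendsto (fun σ : ℝ ↦ Real.log ‖riemannZeta (1 + σ : ℝ)‖ + Real.log σ)
      (nhdsWithin 0 (Set.Ioi 0)) (nhds 0) := by
  have hto_one : Tendsto (fun σ : ℝ ↦ ((1 + σ : ℝ) : ℂ)) (nhdsWithin 0 (Set.Ioi 0))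
      (nhdsWithin 1 {1}ᶜ) := by
    refine tendsto_nhdsWithin_iff.2 ⟨?_, ?_⟩
    · have : Continuous fun σ : ℝ ↦ ((1 + σ : ℝ) : ℂ) := by fun_prop
      simpa using (this.tendsto 0).mono_left nhdsWithin_le_nhds
    · filter_upwards [self_mem_nhdsWithin] with σ (hσ : 0 < σ)
      simp [hσ.ne']
  have hresidue := (riemannZeta_residue_one.comp hto_one).norm
  rw [norm_one] at hresidue
  have hlog := hresidue.log one_ne_zero
  rw [Real.log_one] at hlog
  refine hlog.congr' ?_
  filter_upwards [self_mem_nhdsWithin] with σ (hσ : 0 < σ)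
  have hζ := riemannZeta_ne_zero_of_one_lt_re (s := (1 + σ : ℝ)) (by simpa)
  have hsub : ((1 + σ : ℝ) : ℂ) - 1 = (σ : ℂ) := by
    push_cast
    ring
  rw [Function.comp_apply, hsub, norm_mul, Complex.norm_real, Real.norm_of_nonneg hσ.le,
    Real.log_mul hσ.ne' (norm_ne_zero_iff.2 hζ), add_comm]

theorem tendsto_sum_logZetaCoeff_div_sub_log_log :
    Tendsto (fun N : ℕ ↦ ∑ n ∈ Finset.range (N + 1), logZetaCoeff n / n - Real.log (Real.log N))
      atTop (nhds Real.eulerMascheroniConstant) := by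
  obtain ⟨C, hC⟩ := exists_tendsto_sum_logZetaCoeff_div_sub_log_log
  suffices C = Real.eulerMascheroniConstant by rwa [← this]
  refine eq_eulerMascheroniConstant_of_tendsto
    (fun n ↦ div_nonneg (logZetaCoeff_nonneg n) n.cast_nonneg)
    (fun σ hσ ↦ (hasSum_log_norm_riemannZeta hσ).summable) ?_ hC
  refine tendsto_log_norm_riemannZeta_add_log.congr' ?_
  filter_upwards [self_mem_nhdsWithin] with σ hσ
  rw [(hasSum_log_norm_riemannZeta hσ).tsum_eq]

theorem hasSum_logZetaCoeff_div_minFac {p : ℕ} (hp : p.Prime) :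
    HasSum (fun n : ℕ ↦ if n.minFac = p then logZetaCoeff n / n else 0)
      (-Real.log (1 - (p : ℝ)⁻¹)) := by
  have hinj : Function.Injective fun k : ℕ ↦ p ^ (k + 1) :=
    fun i j hij ↦ Nat.succ_injective (Nat.pow_right_injective hp.two_le hij)
  obtain ⟨hinv_nonneg, hinv_le⟩ := inv_prime_mem_Icc hp
  refine (hinj.hasSum_iff fun n hn ↦ ?_).1 ?_
  · refine ite_eq_right_iff.2 fun hmin ↦ ?_
    have hn_pow : ¬ IsPrimePow n := fun h ↦ by
      obtain ⟨q, k, hq, hk, rfl⟩ := (isPrimePow_nat_iff n).1 h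
      rw [hq.pow_minFac hk.ne'] at hmin
      exact hn ⟨k - 1, by simp only [Nat.sub_add_cancel hk, hmin]⟩
    rw [logZetaCoeff, ArithmeticFunction.vonMangoldt_eq_zero_iff.2 hn_pow, zero_div, zero_div]
  · refine (Real.hasSum_pow_div_log_of_abs_lt_one (x := (p : ℝ)⁻¹) ?_).congr_fun fun k ↦ ?_
    · rw [abs_of_nonneg hinv_nonneg]
      linarith
    · have := hp.log_ne_zero
      rw [Function.comp_apply, if_pos (hp.pow_minFac k.succ_ne_zero), logZetaCoeff,
        ArithmeticFunction.vonMangoldt_apply_pow k.succ_ne_zero,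
        ArithmeticFunction.vonMangoldt_apply_prime hp, Nat.cast_pow, Real.log_pow]
      rw [inv_pow]
      push_cast
      field_simp

theorem hasSum_neg_log_mertensProduct (y : ℕ) :
    HasSum (fun n : ℕ ↦ if n.minFac ∈ Nat.primesLE y then logZetaCoeff n / n else 0)
      (-Real.log (mertensProduct y)) := by
  have h := hasSum_sum fun p (hp : p ∈ Nat.primesLE y) ↦
    hasSum_logZetaCoeff_div_minFac (Nat.prime_of_mem_primesLE hp)
  rw [Finset.sum_neg_distrib, ← Real.log_prod] at h
  · refine h.congr_fun fun n ↦ ?_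
    rw [Finset.sum_ite_eq _ _ fun _ ↦ logZetaCoeff n / n]
  · exact fun q hq ↦ by linarith [(inv_prime_mem_Icc (Nat.prime_of_mem_primesLE hq)).2]

theorem hasSum_neg_log_mertensProduct_sub_sum (y : ℕ) :
    HasSum (fun n : ℕ ↦ if (n + (y + 1)).minFac ∈ Nat.primesLE y then
        logZetaCoeff (n + (y + 1)) / (n + (y + 1) : ℕ) else 0)
      (-Real.log (mertensProduct y) - ∑ n ∈ Finset.range (y + 1), logZetaCoeff n / n) := by
  have hrange : ∑ n ∈ Finset.range (y + 1), logZetaCoeff n / n = ∑ n ∈ Finset.range (y + 1),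
      if n.minFac ∈ Nat.primesLE y then logZetaCoeff n / n else 0 := by
    refine Finset.sum_congr rfl fun n hn ↦ ?_
    split_ifs with hmin
    · rfl
    · have hn₁ : n = 0 ∨ n = 1 := by
        by_contra! h
        exact hmin (Nat.mem_primesLE.2 ⟨(Nat.minFac_le (Nat.pos_of_ne_zero h.1)).trans
          (Finset.mem_range_succ_iff.1 hn), Nat.minFac_prime h.2⟩)
      rcases hn₁ with rfl | rfl <;> simp [logZetaCoeff]
  have h := hasSum_neg_log_mertensProduct y
  rw [← hasSum_nat_add_iff' (y + 1)] at h
  rwa [hrange]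

/-- The difference is the sum over the prime powers `p ^ k > y` with `p ≤ y`, none of which is a
prime. -/
theorem tendsto_neg_log_mertensProduct_sub_sum :
    Tendsto (fun y : ℕ ↦ -Real.log (mertensProduct y) -
      ∑ n ∈ Finset.range (y + 1), logZetaCoeff n / n) atTop (nhds 0) := by
  have htail := (tendsto_sum_nat_add
    fun n : ℕ ↦ if n.Prime then 0 else logZetaCoeff n / n).comp (tendsto_add_atTop_nat 1)
  have hnonneg (n : ℕ) : 0 ≤ logZetaCoeff n / n := div_nonneg (logZetaCoeff_nonneg n) n.cast_nonneg
  refine tendsto_of_tendsto_of_tendsto_of_le_of_le tendsto_const_nhds htail (fun y ↦ ?_) fun y ↦ ?_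
  · refine (hasSum_neg_log_mertensProduct_sub_sum y).nonneg fun n ↦ ?_
    split_ifs
    exacts [hnonneg _, le_rfl]
  · refine hasSum_le (fun n ↦ ?_) (hasSum_neg_log_mertensProduct_sub_sum y)
      ((summable_nat_add_iff (y + 1)).2 summable_nonprime_logZetaCoeff_div).hasSum
    split_ifs with hmin hprime
    · rw [hprime.minFac_eq, Nat.mem_primesLE] at hmin
      omega
    · exact le_rfl
    · exact le_rfl
    · exact hnonneg _

/-- Mertens' third theorem. -/
theorem tendsto_log_mul_mertensProduct :
    Tendsto (fun y : ℕ ↦ Real.log y * mertensProduct y) atTop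
      (nhds (Real.exp (-Real.eulerMascheroniConstant))) := by
  have hlim := (tendsto_neg_log_mertensProduct_sub_sum.add
    tendsto_sum_logZetaCoeff_div_sub_log_log).neg
  rw [zero_add] at hlim
  refine ((Real.continuous_exp.tendsto _).comp hlim).congr' ?_
  filter_upwards [eventually_ge_atTop 2] with y hy
  have hlog : 0 < Real.log y := Real.log_pos (by exact_mod_cast hy)
  rw [Function.comp_apply, sub_add_sub_cancel, neg_sub, sub_neg_eq_add, Real.exp_add,
    Real.exp_log hlog, Real.exp_log (mertensProduct_pos y)]

/-! ### Counting cyclic numbers -/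

theorem natCast_zmod_eq_one_iff {p q : ℕ} (hq : 1 ≤ q) : (q : ZMod p) = 1 ↔ p ∣ q - 1 := by
  rw [← ZMod.natCast_eq_zero_iff, Nat.cast_sub hq, Nat.cast_one, sub_eq_zero]

theorem prime_dvd_totient_iff {n p : ℕ} (hn : n ≠ 0) (hp : p.Prime) (hpn : p ∣ n) :
    p ∣ Nat.totient n ↔ p * p ∣ n ∨ ∃ q, q.Prime ∧ q ∣ n ∧ (q : ZMod p) = 1 := by
  refine ⟨fun h ↦ ?_, ?_⟩
  · rw [Nat.totient_eq_div_primeFactors_mul] at h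
    rcases hp.dvd_mul.1 h with h | h
    · have hrad : p ∣ ∏ q ∈ n.primeFactors, q :=
        Finset.dvd_prod_of_mem (fun q ↦ q) (Nat.mem_primeFactors.2 ⟨hp, hpn, hn⟩)
      have := mul_dvd_mul h hrad
      rw [Nat.div_mul_cancel (Nat.prod_primeFactors_dvd n)] at this
      exact Or.inl this
    · obtain ⟨q, hq, hpq⟩ := (Prime.dvd_finsetProd_iff hp.prime _).1 h
      have hq_prime := Nat.prime_of_mem_primeFactors hq
      exact Or.inr ⟨q, hq_prime, Nat.dvd_of_mem_primeFactors hq,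
        (natCast_zmod_eq_one_iff hq_prime.one_le).2 hpq⟩
  · rintro (h | ⟨q, hq, hqn, hmod⟩)
    · refine dvd_trans ?_ (Nat.totient_dvd_of_dvd h)
      rw [Nat.totient_mul_of_prime_of_dvd hp dvd_rfl]
      exact dvd_mul_right _ _
    · refine ((natCast_zmod_eq_one_iff hq.one_le).1 hmod).trans ?_
      rw [← Nat.totient_prime hq]
      exact Nat.totient_dvd_of_dvd hqn

theorem isCyclicNum_iff {n : ℕ} : IsCyclicNum n ↔
    Squarefree n ∧ ∀ p q, p.Prime → p ∣ n → q.Prime → q ∣ n → (q : ZMod p) ≠ 1 := by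
  rcases eq_or_ne n 0 with rfl | hn
  · simp [IsCyclicNum]
  have hcoprime : IsCyclicNum n ↔ ∀ p, p.Prime → p ∣ n → ¬ p ∣ Nat.totient n := by
    rw [IsCyclicNum, and_iff_right (Nat.pos_of_ne_zero hn), ← Nat.coprime_iff_gcd_eq_one]
    exact ⟨fun h p hp hpn hpt ↦ Nat.not_coprime_of_dvd_of_dvd hp.one_lt hpn hpt h,
      Nat.coprime_of_dvd⟩
  rw [hcoprime, Nat.squarefree_iff_prime_squarefree]
  refine ⟨fun h ↦ ⟨fun p hp hsq ↦ ?_, fun p q hp hpn hq hqn hmod ↦ ?_⟩,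
    fun ⟨hsq, hmod⟩ p hp hpn hpt ↦ ?_⟩
  · have hpn := (dvd_mul_right p p).trans hsq
    exact h p hp hpn ((prime_dvd_totient_iff hn hp hpn).2 (Or.inl hsq))
  · exact h p hp hpn ((prime_dvd_totient_iff hn hp hpn).2 (Or.inr ⟨q, hq, hqn, hmod⟩))
  · rcases (prime_dvd_totient_iff hn hp hpn).1 hpt with hpp | ⟨q, hq, hqn, hq_mod⟩
    exacts [hsq p hp hpp, hmod p q hp hpn hq hqn hq_mod]

theorem cyclicCount_natCast (N : ℕ) :
    cyclicCount N = ((Finset.Ioc 0 N).filter IsCyclicNum).card := by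
  rw [cyclicCount, Nat.floor_natCast]
  congr 1
  ext n
  simp only [Finset.mem_filter, Finset.mem_range, Finset.mem_Ioc, Nat.lt_succ_iff]
  exact ⟨fun h ↦ ⟨⟨h.2.1, h.1⟩, h.2⟩, fun h ↦ ⟨h.1.2, h.2⟩⟩

/-- A cyclic number with a prime factor `p` has no prime factor congruent to `1` modulo `p`. -/
theorem cyclicCount_le_card_sifted_add (N y : ℕ) :
    cyclicCount N ≤ (sifted N (Nat.primesLE y)).card +
      ∑ p ∈ Nat.primesLE y, (sifted (N / p) (primesModOne p (N / p))).card := by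
  have hsub : (Finset.Ioc 0 N).filter IsCyclicNum ⊆ sifted N (Nat.primesLE y) ∪
      (Nat.primesLE y).biUnion fun p ↦
        (sifted (N / p) (primesModOne p (N / p))).image fun m ↦ p * m := by
    intro n hn
    obtain ⟨hnN, hcyc⟩ := Finset.mem_filter.1 hn
    rw [Finset.mem_Ioc] at hnN
    by_cases hrough : n ∈ sifted N (Nat.primesLE y)
    · exact Finset.mem_union_left _ hrough
    rw [mem_sifted, and_iff_right hnN] at hrough
    push Not at hrough
    obtain ⟨p, hp, m, rfl⟩ := hrough
    have hp_prime := Nat.prime_of_mem_primesLE hp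
    refine Finset.mem_union_right _ (Finset.mem_biUnion.2 ⟨p, hp, Finset.mem_image_of_mem _ ?_⟩)
    refine mem_sifted.2 ⟨⟨Nat.pos_of_mul_pos_left hnN.1, ?_⟩, fun q hq hqm ↦ ?_⟩
    · rw [Nat.le_div_iff_mul_le hp_prime.pos, mul_comm]
      exact hnN.2
    · obtain ⟨-, hq_prime, hmod⟩ := mem_primesModOne.1 hq
      exact (isCyclicNum_iff.1 hcyc).2 p q hp_prime (dvd_mul_right p m) hq_prime
        (hqm.mul_left p) hmod
  rw [cyclicCount_natCast]
  refine (Finset.card_le_card hsub).trans ((Finset.card_union_le _ _).trans ?_)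
  gcongr
  exact Finset.card_biUnion_le.trans (Finset.sum_le_sum fun p _ ↦ Finset.card_image_le)

theorem card_sifted_primesModOne_le {p M : ℕ} {s : ℝ} (hp : p ≠ 0) (hs : 0 < s)
    (h : s / (4 * p) ≤ sumInvPrimesModOne p M) :
    ((sifted M (primesModOne p M)).card : ℝ) ≤ 12 * (p * M) / s := by
  have hturan := card_sifted_mul_sum_inv_le (N := M) (Q := primesModOne p M)
    (fun q hq ↦ Finset.mem_Ioc.2 ⟨(mem_primesModOne.1 hq).2.1.pos, (mem_primesModOne.1 hq).1⟩)
    fun q hq r hr hqr ↦ (Nat.coprime_primes (mem_primesModOne.1 hq).2.1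
      (mem_primesModOne.1 hr).2.1).2 hqr
  rw [le_div_iff₀ hs]
  calc ((sifted M (primesModOne p M)).card : ℝ) * s
      = (sifted M (primesModOne p M)).card * (s / (4 * p)) * (4 * p) := by field_simp
    _ ≤ (sifted M (primesModOne p M)).card * sumInvPrimesModOne p M * (4 * p) := by gcongr
    _ ≤ 3 * M * (4 * p) := by gcongr ?_ * _; exact hturan
    _ = 12 * (p * M) := by ring

theorem half_log_log_le_log_log_div {N p : ℕ} (hp : 1 ≤ p) (hlog : 4 ≤ Real.log N)
    (hpN : 2 * (p : ℝ) ≤ √N) :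
    Real.log (Real.log N) / 2 ≤ Real.log (Real.log (N / p : ℕ)) := by
  have hp_one : (1 : ℝ) ≤ p := by exact_mod_cast hp
  have hsqrt_pos : 0 < √(N : ℝ) := by linarith
  have hsqrt : √(N : ℝ) ≤ (N / p : ℕ) := by
    have htwo : 2 * √(N : ℝ) ≤ N / p := by
      rw [le_div_iff₀ (by linarith)]
      nlinarith [Real.mul_self_sqrt N.cast_nonneg]
    linarith [div_lt_natCast_div_add_one N p]
  have hlog_half : Real.log N / 2 ≤ Real.log (N / p : ℕ) := by
    rw [← Real.log_sqrt N.cast_nonneg]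
    exact Real.log_le_log hsqrt_pos hsqrt
  rw [← Real.log_sqrt (by linarith)]
  refine Real.log_le_log (Real.sqrt_pos.2 (by linarith)) (le_trans ?_ hlog_half)
  rw [Real.sqrt_le_left (by linarith)]
  nlinarith

theorem logLevel_mono {m n : ℕ} (hm : m ≠ 0) (hmn : m ≤ n) : logLevel m ≤ logLevel n := by
  have : Real.log m ≤ Real.log n :=
    Real.log_le_log (by exact_mod_cast Nat.pos_of_ne_zero hm) (by exact_mod_cast hmn)
  unfold logLevel
  linarith

theorem exists_card_sifted_div_le : ∃ C > 0, ∀ N p : ℕ, p.Prime → 4 ≤ Real.log N →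
    C * p * logLevel p ≤ Real.log (Real.log N) / 2 → 2 * (p : ℝ) ≤ √N →
    ((sifted (N / p) (primesModOne p (N / p))).card : ℝ) ≤ 24 * N / Real.log (Real.log N) := by
  obtain ⟨C, hC, hprimes⟩ := exists_le_sumInvPrimesModOne
  refine ⟨C, hC, fun N p hp hlog hlevel hpN ↦ ?_⟩
  have ht : 0 < Real.log (Real.log N) := Real.log_pos (by linarith)
  have hhalf := half_log_log_le_log_log_div hp.one_le hlog hpN
  have hsum := hprimes p (N / p) hp (hlevel.trans hhalf)
  have hmul : (p : ℝ) * (N / p : ℕ) ≤ N := by exact_mod_cast Nat.mul_div_le N p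
  calc ((sifted (N / p) (primesModOne p (N / p))).card : ℝ)
      ≤ 12 * (p * (N / p : ℕ)) / Real.log (Real.log (N / p : ℕ)) :=
        card_sifted_primesModOne_le hp.ne_zero (by linarith) hsum
    _ ≤ 12 * N / (Real.log (Real.log N) / 2) := by gcongr
    _ = 24 * N / Real.log (Real.log N) := by ring

theorem card_primesLE_le (y : ℕ) : (Nat.primesLE y).card ≤ y := by
  have hsub : Nat.primesLE y ⊆ Finset.Ioc 0 y := fun p hp ↦ Finset.mem_Ioc.2
    ⟨(Nat.prime_of_mem_primesLE hp).pos, Nat.le_of_mem_primesLE hp⟩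
  exact (Finset.card_le_card hsub).trans_eq (Nat.card_Ioc 0 y)

theorem exists_cyclicCount_le : ∃ C > 0, ∀ N y : ℕ, 4 ≤ Real.log N →
    C * y * logLevel y ≤ Real.log (Real.log N) / 2 → 2 * (y : ℝ) ≤ √N →
    (cyclicCount N : ℝ) ≤ N * mertensProduct y + 4 ^ y + 24 * N * y / Real.log (Real.log N) := by
  obtain ⟨C, hC, hsift⟩ := exists_card_sifted_div_le
  refine ⟨C, hC, fun N y hlog hlevel hyN ↦ ?_⟩
  have ht : 0 < Real.log (Real.log N) := Real.log_pos (by linarith)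
  have hterm (p : ℕ) (hp : p ∈ Nat.primesLE y) :
      ((sifted (N / p) (primesModOne p (N / p))).card : ℝ) ≤ 24 * N / Real.log (Real.log N) := by
    have hp_prime := Nat.prime_of_mem_primesLE hp
    have hpy : (p : ℝ) ≤ y := by exact_mod_cast Nat.le_of_mem_primesLE hp
    have hlevel_le : C * p * logLevel p ≤ C * y * logLevel y := by
      have := one_le_logLevel p
      gcongr
      exact logLevel_mono hp_prime.ne_zero (Nat.le_of_mem_primesLE hp)
    exact hsift N p hp_prime hlog (hlevel_le.trans hlevel) (by linarith)
  have hcount : (cyclicCount N : ℝ) ≤ (sifted N (Nat.primesLE y)).card +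
      ∑ p ∈ Nat.primesLE y, ((sifted (N / p) (primesModOne p (N / p))).card : ℝ) := by
    exact_mod_cast cyclicCount_le_card_sifted_add N y
  have hsum : ∑ p ∈ Nat.primesLE y, ((sifted (N / p) (primesModOne p (N / p))).card : ℝ) ≤
      24 * N * y / Real.log (Real.log N) := by
    calc _ ≤ (Nat.primesLE y).card • (24 * N / Real.log (Real.log N)) :=
          Finset.sum_le_card_nsmul _ _ _ hterm
      _ ≤ y * (24 * N / Real.log (Real.log N)) := by
          rw [nsmul_eq_mul]
          gcongr
          exact card_primesLE_le y
      _ = 24 * N * y / Real.log (Real.log N) := by ring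
  linarith [(abs_le.1 (abs_card_sifted_primesLE_sub_le N y)).2]

theorem natCast_zmod_self_ne_one {p : ℕ} (hp : p ≠ 1) : (p : ZMod p) ≠ 1 := by
  rw [ZMod.natCast_self, Ne, eq_comm, ← Nat.cast_one, ZMod.natCast_eq_zero_iff, Nat.dvd_one]
  exact hp

theorem exists_prime_mul_dvd_of_not_isCyclicNum {n : ℕ} (h : ¬ IsCyclicNum n) :
    ∃ p q, p.Prime ∧ (q = p ∨ q.Prime ∧ (q : ZMod p) = 1) ∧ p * q ∣ n := by
  rw [isCyclicNum_iff, Nat.squarefree_iff_prime_squarefree, not_and_or] at h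
  push Not at h
  rcases h with ⟨p, hp, hsq⟩ | ⟨p, q, hp, hpn, hq, hqn, hmod⟩
  · exact ⟨p, p, hp, Or.inl rfl, hsq⟩
  · have hpq : p ≠ q := by
      rintro rfl
      exact natCast_zmod_self_ne_one hp.ne_one hmod
    exact ⟨p, q, hp, Or.inr ⟨hq, hmod⟩,
      ((Nat.coprime_primes hp hq).2 hpq).mul_dvd_of_dvd_of_dvd hpn hqn⟩

theorem sifted_primesLE_subset (N z : ℕ) :
    sifted N (Nat.primesLE z) ⊆ (Finset.Ioc 0 N).filter IsCyclicNum ∪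
      ((Finset.Ioc z N).filter Nat.Prime).biUnion fun p ↦ (insert p (primesModOne p N)).biUnion
        fun q ↦ (Finset.Ioc 0 N).filter (p * q ∣ ·) := by
  intro n hn
  obtain ⟨hnN, hrough⟩ := mem_sifted.1 hn
  have hmem := Finset.mem_Ioc.2 hnN
  by_cases hcyc : IsCyclicNum n
  · exact Finset.mem_union_left _ (Finset.mem_filter.2 ⟨hmem, hcyc⟩)
  obtain ⟨p, q, hp, hq, hpq⟩ := exists_prime_mul_dvd_of_not_isCyclicNum hcyc
  have hpn := (dvd_mul_right p q).trans hpq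
  have hpN : p ≤ N := (Nat.le_of_dvd hnN.1 hpn).trans hnN.2
  have hqN : q ≤ N := (Nat.le_of_dvd hnN.1 ((dvd_mul_left q p).trans hpq)).trans hnN.2
  have hzp : z < p := by
    by_contra! h
    exact hrough p (Nat.mem_primesLE.2 ⟨h, hp⟩) hpn
  refine Finset.mem_union_right _ (Finset.mem_biUnion.2
    ⟨p, Finset.mem_filter.2 ⟨Finset.mem_Ioc.2 ⟨hzp, hpN⟩, hp⟩, Finset.mem_biUnion.2
      ⟨q, Finset.mem_insert.2 (hq.imp_right fun h ↦ ?_), Finset.mem_filter.2 ⟨hmem, hpq⟩⟩⟩)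
  exact mem_primesModOne.2 ⟨hqN, h⟩

theorem sum_insert_card_filter_mul_dvd_le {p : ℕ} (hp : p.Prime) (N : ℕ) :
    ∑ q ∈ insert p (primesModOne p N), (((Finset.Ioc 0 N).filter (p * q ∣ ·)).card : ℝ) ≤
      N * (((p : ℝ) ^ 2)⁻¹ + (p : ℝ)⁻¹ * sumInvPrimesModOne p N) := by
  have hp_notMem : p ∉ primesModOne p N := fun h ↦
    natCast_zmod_self_ne_one hp.ne_one (mem_primesModOne.1 h).2.2
  calc ∑ q ∈ insert p (primesModOne p N), (((Finset.Ioc 0 N).filter (p * q ∣ ·)).card : ℝ)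
      ≤ ∑ q ∈ insert p (primesModOne p N), N * ((p : ℝ)⁻¹ * (q : ℝ)⁻¹) := by
        refine Finset.sum_le_sum fun q _ ↦ ?_
        rw [Nat.Ioc_filter_dvd_card_eq_div, ← mul_inv, ← div_eq_mul_inv, ← Nat.cast_mul]
        exact Nat.cast_div_le
    _ = N * (((p : ℝ) ^ 2)⁻¹ + (p : ℝ)⁻¹ * sumInvPrimesModOne p N) := by
        rw [Finset.sum_insert hp_notMem, sumInvPrimesModOne, Finset.mul_sum, mul_add,
          Finset.mul_sum, sq, mul_inv]

theorem card_sifted_primesLE_le_cyclicCount_add (N z : ℕ) :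
    ((sifted N (Nat.primesLE z)).card : ℝ) ≤ cyclicCount N +
      ∑ p ∈ (Finset.Ioc z N).filter Nat.Prime,
        N * (((p : ℝ) ^ 2)⁻¹ + (p : ℝ)⁻¹ * sumInvPrimesModOne p N) := by
  have hcard : (sifted N (Nat.primesLE z)).card ≤ cyclicCount N +
      ∑ p ∈ (Finset.Ioc z N).filter Nat.Prime, ∑ q ∈ insert p (primesModOne p N),
        ((Finset.Ioc 0 N).filter (p * q ∣ ·)).card := by
    rw [cyclicCount_natCast]
    refine (Finset.card_le_card (sifted_primesLE_subset N z)).trans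
      ((Finset.card_union_le _ _).trans ?_)
    gcongr
    exact Finset.card_biUnion_le.trans (Finset.sum_le_sum fun p _ ↦ Finset.card_biUnion_le)
  calc ((sifted N (Nat.primesLE z)).card : ℝ)
      ≤ cyclicCount N + ∑ p ∈ (Finset.Ioc z N).filter Nat.Prime,
        ∑ q ∈ insert p (primesModOne p N), (((Finset.Ioc 0 N).filter (p * q ∣ ·)).card : ℝ) := by
        exact_mod_cast hcard
    _ ≤ _ := by
        gcongr with p hp
        exact sum_insert_card_filter_mul_dvd_le (Finset.mem_filter.1 hp).2 N

theorem sum_Ioc_inv_sq_le {z : ℕ} (hz : z ≠ 0) (N : ℕ) :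
    ∑ n ∈ Finset.Ioc z N, ((n : ℝ) ^ 2)⁻¹ ≤ (z : ℝ)⁻¹ := by
  rcases le_total z N with h | h
  · have : (0 : ℝ) ≤ (N : ℝ)⁻¹ := by positivity
    linarith [sum_Ioc_inv_sq_le_sub (α := ℝ) hz h]
  · rw [Finset.Ioc_eq_empty_of_le h, Finset.sum_empty]
    positivity

theorem sum_Ioc_rpow_le {z : ℕ} (hz : z ≠ 0) (N : ℕ) {a b : ℝ} (ha : 1 < a) (hb : 0 ≤ b) :
    ∑ n ∈ Finset.Ioc z N, (n : ℝ) ^ (-(a + b)) ≤ (∑' n : ℕ, (n : ℝ) ^ (-a)) * (z : ℝ) ^ (-b) := by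
  have hz_pos : (0 : ℝ) < z := by exact_mod_cast Nat.pos_of_ne_zero hz
  calc ∑ n ∈ Finset.Ioc z N, (n : ℝ) ^ (-(a + b))
      ≤ ∑ n ∈ Finset.Ioc z N, (n : ℝ) ^ (-a) * (z : ℝ) ^ (-b) := by
        refine Finset.sum_le_sum fun n hn ↦ ?_
        have hzn : (z : ℝ) ≤ n := by exact_mod_cast (Finset.mem_Ioc.1 hn).1.le
        rw [neg_add, Real.rpow_add (hz_pos.trans_le hzn)]
        exact mul_le_mul_of_nonneg_left (Real.rpow_le_rpow_of_nonpos hz_pos hzn (by linarith))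
          (by positivity)
    _ ≤ (∑' n : ℕ, (n : ℝ) ^ (-a)) * (z : ℝ) ^ (-b) := by
        rw [← Finset.sum_mul]
        gcongr
        exact (summable_rpow_neg ha).sum_le_tsum _ fun n _ ↦ by positivity

theorem exists_inv_mul_sumInvPrimesModOne_le : ∃ C > 0, ∀ p N : ℕ, p.Prime →
    1 ≤ Real.log (Real.log N) → (p : ℝ)⁻¹ * sumInvPrimesModOne p N ≤
      C * (Real.log (Real.log N) * ((p : ℝ) ^ 2)⁻¹ + (p : ℝ) ^ (-(9 / 8 + 1 / 8) : ℝ)) := by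
  obtain ⟨C, hC, hprimes⟩ := exists_sumInvPrimesModOne_le
  refine ⟨C, hC, fun p N hp ht ↦ ?_⟩
  have hp_pos : (0 : ℝ) < p := by exact_mod_cast hp.pos
  have hrpow : (p : ℝ)⁻¹ * (p : ℝ) ^ (-(1 / 4) : ℝ) = (p : ℝ) ^ (-(9 / 8 + 1 / 8) : ℝ) := by
    rw [← Real.rpow_neg_one, ← Real.rpow_add hp_pos]
    norm_num
  calc (p : ℝ)⁻¹ * sumInvPrimesModOne p N
      ≤ (p : ℝ)⁻¹ * (C * (Real.log (Real.log N) / p + (p : ℝ) ^ (-(1 / 4) : ℝ))) := by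
        gcongr
        exact hprimes p N hp ht
    _ = C * (Real.log (Real.log N) * ((p : ℝ) ^ 2)⁻¹ +
          (p : ℝ)⁻¹ * (p : ℝ) ^ (-(1 / 4) : ℝ)) := by field_simp
    _ = _ := by rw [hrpow]

theorem exists_sum_inv_mul_sumInvPrimesModOne_le : ∃ C > 0, ∀ N z : ℕ, z ≠ 0 →
    1 ≤ Real.log (Real.log N) →
    ∑ p ∈ (Finset.Ioc z N).filter Nat.Prime, (p : ℝ)⁻¹ * sumInvPrimesModOne p N ≤
      C * (Real.log (Real.log N) / z + (z : ℝ) ^ (-(1 / 8) : ℝ)) := by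
  obtain ⟨C, hC, hprimes⟩ := exists_inv_mul_sumInvPrimesModOne_le
  set K := ∑' n : ℕ, (n : ℝ) ^ (-(9 / 8) : ℝ)
  have : 0 ≤ K := tsum_nonneg fun n ↦ by positivity
  refine ⟨C * (1 + K), by positivity, fun N z hz ht ↦ ?_⟩
  set t := Real.log (Real.log N)
  calc ∑ p ∈ (Finset.Ioc z N).filter Nat.Prime, (p : ℝ)⁻¹ * sumInvPrimesModOne p N
      ≤ ∑ p ∈ (Finset.Ioc z N).filter Nat.Prime,
          C * (t * ((p : ℝ) ^ 2)⁻¹ + (p : ℝ) ^ (-(9 / 8 + 1 / 8) : ℝ)) :=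
        Finset.sum_le_sum fun p hp ↦ hprimes p N (Finset.mem_filter.1 hp).2 ht
    _ ≤ ∑ n ∈ Finset.Ioc z N, C * (t * ((n : ℝ) ^ 2)⁻¹ + (n : ℝ) ^ (-(9 / 8 + 1 / 8) : ℝ)) :=
        Finset.sum_le_sum_of_subset_of_nonneg (Finset.filter_subset _ _) fun _ _ _ ↦ by positivity
    _ ≤ C * (t * (z : ℝ)⁻¹ + K * (z : ℝ) ^ (-(1 / 8) : ℝ)) := by
        rw [← Finset.mul_sum, Finset.sum_add_distrib, ← Finset.mul_sum]
        gcongr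
        · exact sum_Ioc_inv_sq_le hz N
        · exact sum_Ioc_rpow_le hz N (by norm_num) (by norm_num)
    _ ≤ C * (1 + K) * (t / z + (z : ℝ) ^ (-(1 / 8) : ℝ)) := by
        have hz_rpow : 0 ≤ (z : ℝ) ^ (-(1 / 8) : ℝ) := by positivity
        have hKt : 0 ≤ K * (t / z) := by positivity
        rw [mul_assoc, ← div_eq_mul_inv]
        gcongr
        linarith

theorem exists_le_cyclicCount_add : ∃ C > 0, ∀ N z : ℕ, z ≠ 0 → 1 ≤ Real.log (Real.log N) →
    N * mertensProduct z ≤ cyclicCount N + 4 ^ z +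
      N * (C * (Real.log (Real.log N) / z + (z : ℝ) ^ (-(1 / 8) : ℝ))) := by
  obtain ⟨C, hC, hprimes⟩ := exists_sum_inv_mul_sumInvPrimesModOne_le
  refine ⟨1 + C, by positivity, fun N z hz ht ↦ ?_⟩
  set t := Real.log (Real.log N)
  have hinv_sq : ∑ p ∈ (Finset.Ioc z N).filter Nat.Prime, ((p : ℝ) ^ 2)⁻¹ ≤
      t / z + (z : ℝ) ^ (-(1 / 8) : ℝ) := by
    calc ∑ p ∈ (Finset.Ioc z N).filter Nat.Prime, ((p : ℝ) ^ 2)⁻¹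
        ≤ ∑ n ∈ Finset.Ioc z N, ((n : ℝ) ^ 2)⁻¹ :=
          Finset.sum_le_sum_of_subset_of_nonneg (Finset.filter_subset _ _)
            fun _ _ _ ↦ by positivity
      _ ≤ 1 / z := by rw [one_div]; exact sum_Ioc_inv_sq_le hz N
      _ ≤ t / z := by gcongr
      _ ≤ _ := le_add_of_nonneg_right (by positivity)
  have hexceptional : ∑ p ∈ (Finset.Ioc z N).filter Nat.Prime,
      N * (((p : ℝ) ^ 2)⁻¹ + (p : ℝ)⁻¹ * sumInvPrimesModOne p N) ≤
        N * ((1 + C) * (t / z + (z : ℝ) ^ (-(1 / 8) : ℝ))) := by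
    rw [← Finset.mul_sum, Finset.sum_add_distrib, one_add_mul]
    gcongr
    exact hprimes N z hz ht
  linarith [(abs_le.1 (abs_card_sifted_primesLE_sub_le N z)).1,
    card_sifted_primesLE_le_cyclicCount_add N z]

/-! ### Sieving levels -/

theorem isEquivalent_log_mul_log_zpow (k : ℤ) :
    (fun t : ℝ ↦ Real.log (t * Real.log t ^ k)) ~[atTop] Real.log := by
  have hsmall : (fun t : ℝ ↦ k * Real.log (Real.log t)) =o[atTop] Real.log :=
    (Real.isLittleO_log_id_atTop.comp_tendsto Real.tendsto_log_atTop).const_mul_left _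
  refine (IsEquivalent.refl.add_isLittleO hsmall).congr_left ?_
  filter_upwards [eventually_gt_atTop 1] with t ht
  have hlog := Real.log_pos ht
  rw [Pi.add_apply, Real.log_mul (by positivity) (by positivity), Real.log_zpow]

theorem tendsto_mul_log_zpow_atTop (k : ℤ) :
    Tendsto (fun t : ℝ ↦ t * Real.log t ^ k) atTop atTop := by
  have hlog := (isEquivalent_log_mul_log_zpow k).symm.tendsto_atTop Real.tendsto_log_atTop
  refine (Real.tendsto_exp_atTop.comp hlog).congr' ?_
  filter_upwards [eventually_gt_atTop 1] with t ht
  have := Real.log_pos ht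
  exact Real.exp_log (by positivity)

section Level

variable {g : ℝ → ℕ} {k : ℤ}

theorem tendsto_log_mul_mertensProduct_of_isEquivalent
    (hg : (fun t ↦ (g t : ℝ)) ~[atTop] fun t ↦ t * Real.log t ^ k) :
    Tendsto (fun t ↦ Real.log t * mertensProduct (g t)) atTop
      (nhds (Real.exp (-Real.eulerMascheroniConstant))) := by
  have htop : Tendsto g atTop atTop :=
    tendsto_natCast_atTop_iff.1 (hg.symm.tendsto_atTop (tendsto_mul_log_zpow_atTop k))
  have hlog : (fun t ↦ Real.log (g t)) ~[atTop] Real.log :=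
    (hg.log (tendsto_mul_log_zpow_atTop k)).trans (isEquivalent_log_mul_log_zpow k)
  exact (hlog.mul IsEquivalent.refl).tendsto_nhds (tendsto_log_mul_mertensProduct.comp htop)

theorem eventually_le_sq_of_isEquivalent
    (hg : (fun t ↦ (g t : ℝ)) ~[atTop] fun t ↦ t * Real.log t ^ k) :
    ∀ᶠ t in atTop, (g t : ℝ) ≤ t ^ 2 := by
  have hsmall : (fun t : ℝ ↦ t * Real.log t ^ k) =o[atTop] fun t ↦ t ^ 2 := by
    have hone : (fun _ : ℝ ↦ (1 : ℝ)) =o[atTop] fun t ↦ t * Real.log t ^ (-k) :=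
      (isLittleO_one_left_iff ℝ).2
        (tendsto_norm_atTop_atTop.comp (tendsto_mul_log_zpow_atTop (-k)))
    refine ((isBigO_refl (fun t : ℝ ↦ t * Real.log t ^ k) _).mul_isLittleO hone).congr'
      (.of_forall fun t ↦ mul_one _) ?_
    filter_upwards [eventually_gt_atTop 1] with t ht
    have := Real.log_pos ht
    rw [zpow_neg]
    field_simp
  filter_upwards [(hg.trans_isLittleO hsmall).bound one_pos] with t ht
  simpa using ht

theorem tendsto_log_mul_four_pow_div_exp_exp (hg : ∀ᶠ t in atTop, (g t : ℝ) ≤ t ^ 2) :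
    Tendsto (fun t ↦ Real.log t * 4 ^ g t / Real.exp (Real.exp t)) atTop (nhds 0) := by
  refine squeeze_zero' ?_ ?_ (Real.tendsto_exp_atBot.comp tendsto_neg_atTop_atBot)
  · filter_upwards [eventually_ge_atTop 1] with t ht
    have := Real.log_nonneg ht
    positivity
  filter_upwards [hg, (Real.tendsto_exp_div_pow_atTop 3).eventually_ge_atTop 1,
    eventually_ge_atTop 4] with t hgt hexp ht
  rw [le_div_iff₀ (by positivity), one_mul] at hexp
  have hlog : Real.log t ≤ Real.exp t := by
    linarith [Real.log_le_sub_one_of_pos (by linarith : 0 < t), Real.add_one_le_exp t]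
  have hfour : (4 : ℝ) ^ g t ≤ Real.exp (2 * t ^ 2) := by
    have hexp_two : (4 : ℝ) ≤ Real.exp 2 := by
      linarith [Real.quadratic_le_exp_of_nonneg (x := 2) (by norm_num)]
    calc (4 : ℝ) ^ g t ≤ Real.exp 2 ^ g t := by gcongr
      _ = Real.exp (g t * 2) := by rw [← Real.exp_nat_mul]
      _ ≤ Real.exp (2 * t ^ 2) := Real.exp_le_exp.2 (by linarith)
  calc Real.log t * 4 ^ g t / Real.exp (Real.exp t)
      ≤ Real.exp t * Real.exp (2 * t ^ 2) / Real.exp (Real.exp t) := by gcongr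
    _ = Real.exp (t + 2 * t ^ 2 - Real.exp t) := by rw [← Real.exp_add, ← Real.exp_sub]
    _ ≤ Real.exp (-t) := Real.exp_le_exp.2 (by nlinarith [sq_nonneg t])

end Level

theorem two_mul_log_le {u : ℝ} (hu : 0 < u) : 2 * Real.log u ≤ u := by
  have hlog := Real.log_le_sub_one_of_pos (Real.sqrt_pos.2 hu)
  rw [Real.log_sqrt hu.le] at hlog
  nlinarith [Real.sq_sqrt hu.le, sq_nonneg (√u - 2)]

theorem two_mul_log_log_le_sqrt {x : ℝ} (hx : 1 < x) : 2 * Real.log (Real.log x) ≤ √x := by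
  calc 2 * Real.log (Real.log x) ≤ Real.log x := two_mul_log_le (Real.log_pos hx)
    _ = 2 * Real.log √x := by rw [Real.log_sqrt (by linarith)]; ring
    _ ≤ √x := two_mul_log_le (Real.sqrt_pos.2 (by linarith))

/-! ### The distribution of cyclic numbers -/

theorem tendsto_log_natCast_atTop : Tendsto (fun N : ℕ ↦ Real.log N) atTop atTop :=
  Real.tendsto_log_atTop.comp tendsto_natCast_atTop_atTop

theorem tendsto_log_log_natCast_atTop :
    Tendsto (fun N : ℕ ↦ Real.log (Real.log N)) atTop atTop :=
  Real.tendsto_log_atTop.comp tendsto_log_natCast_atTop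

/-- The sieving level `t / (log t) ^ 2`, for `t = log (log N)`, at which the upper bound for the
number of cyclic numbers up to `N` is taken. -/
noncomputable def upperBoundLevel (t : ℝ) : ℕ := ⌊t * Real.log t ^ (-2 : ℤ)⌋₊

/-- The sieving level `t (log t) ^ 2`, for `t = log (log N)`, at which the lower bound for the
number of cyclic numbers up to `N` is taken. -/
noncomputable def lowerBoundLevel (t : ℝ) : ℕ := ⌈t * Real.log t ^ (2 : ℤ)⌉₊

theorem isEquivalent_upperBoundLevel :
    (fun t ↦ (upperBoundLevel t : ℝ)) ~[atTop] fun t ↦ t * Real.log t ^ (-2 : ℤ) :=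
  isEquivalent_nat_floor.comp_tendsto (tendsto_mul_log_zpow_atTop (-2))

theorem isEquivalent_lowerBoundLevel :
    (fun t ↦ (lowerBoundLevel t : ℝ)) ~[atTop] fun t ↦ t * Real.log t ^ (2 : ℤ) :=
  isEquivalent_nat_ceil.comp_tendsto (tendsto_mul_log_zpow_atTop 2)

theorem upperBoundLevel_mul_le {t : ℝ} (ht : 0 ≤ t) (hlog : 0 < Real.log t) :
    upperBoundLevel t * Real.log t ^ 2 ≤ t := by
  have hfloor : (upperBoundLevel t : ℝ) ≤ t * Real.log t ^ (-2 : ℤ) :=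
    Nat.floor_le (by positivity)
  calc upperBoundLevel t * Real.log t ^ 2 ≤ t * Real.log t ^ (-2 : ℤ) * Real.log t ^ 2 := by gcongr
    _ = t := by
      rw [zpow_neg]
      norm_cast
      field_simp

theorem mul_le_lowerBoundLevel (t : ℝ) : t * Real.log t ^ 2 ≤ lowerBoundLevel t := by
  exact_mod_cast Nat.le_ceil _

theorem logLevel_le_two_mul_log {n : ℕ} {t : ℝ} (hn : (n : ℝ) ≤ t) (hlog : 1 ≤ Real.log t) :
    logLevel n ≤ 2 * Real.log t := by
  have : Real.log n ≤ Real.log t := by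
    rcases eq_or_ne n 0 with rfl | hn_zero
    · rw [Nat.cast_zero, Real.log_zero]
      linarith
    · exact Real.log_le_log (by exact_mod_cast Nat.pos_of_ne_zero hn_zero) hn
  unfold logLevel
  linarith

theorem upperBoundLevel_le {t : ℝ} (ht : 0 ≤ t) (hlog : 1 ≤ Real.log t) :
    (upperBoundLevel t : ℝ) ≤ t :=
  (le_mul_of_one_le_right (Nat.cast_nonneg _) (one_le_pow₀ hlog)).trans
    (upperBoundLevel_mul_le ht (by linarith))

theorem mul_upperBoundLevel_mul_logLevel_le {C t : ℝ} (ht : 0 ≤ t) (hlog : 1 ≤ Real.log t)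
    (hC : 4 * C ≤ Real.log t) :
    C * upperBoundLevel t * logLevel (upperBoundLevel t) ≤ t / 2 := by
  have hlogLevel_one := one_le_logLevel (upperBoundLevel t)
  calc C * upperBoundLevel t * logLevel (upperBoundLevel t)
      ≤ Real.log t / 4 * upperBoundLevel t * (2 * Real.log t) := by
        gcongr
        · linarith
        · exact logLevel_le_two_mul_log (upperBoundLevel_le ht hlog) hlog
    _ = upperBoundLevel t * Real.log t ^ 2 / 2 := by ring
    _ ≤ t / 2 := by
        gcongr
        exact upperBoundLevel_mul_le ht (by linarith)

theorem eventually_cyclicCount_mul_log_div_le :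
    ∀ᶠ t : ℝ in atTop, ∀ N : ℕ, (N : ℝ) = Real.exp (Real.exp t) →
      cyclicCount N * Real.log t / N ≤ Real.log t * mertensProduct (upperBoundLevel t) +
        Real.log t * 4 ^ upperBoundLevel t / Real.exp (Real.exp t) + 24 * (Real.log t)⁻¹ := by
  obtain ⟨C, -, hcount⟩ := exists_cyclicCount_le
  filter_upwards [eventually_ge_atTop 3, Real.tendsto_log_atTop.eventually_ge_atTop 1,
    Real.tendsto_log_atTop.eventually_ge_atTop (4 * C)] with t ht hlog hlogC N hN
  have hN_pos : (0 : ℝ) < N := hN ▸ Real.exp_pos _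
  have hlogN : Real.log N = Real.exp t := by rw [hN, Real.log_exp]
  have hloglogN : Real.log (Real.log N) = t := by rw [hlogN, Real.log_exp]
  have hsqrt : 2 * (upperBoundLevel t : ℝ) ≤ √N := by
    have hN_one : (1 : ℝ) < N := hN ▸ Real.one_lt_exp_iff.2 (Real.exp_pos t)
    have := two_mul_log_log_le_sqrt hN_one
    linarith [upperBoundLevel_le (by linarith) hlog]
  have hbound := hcount N (upperBoundLevel t) (by linarith [Real.add_one_le_exp t])
    (by rw [hloglogN]; exact mul_upperBoundLevel_mul_logLevel_le (by linarith) hlog hlogC) hsqrt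
  rw [hloglogN] at hbound
  rw [← hN]
  calc cyclicCount N * Real.log t / N
      ≤ (N * mertensProduct (upperBoundLevel t) + 4 ^ upperBoundLevel t +
          24 * N * upperBoundLevel t / t) * Real.log t / N := by gcongr
    _ = Real.log t * mertensProduct (upperBoundLevel t) + Real.log t * 4 ^ upperBoundLevel t / N +
          24 * (upperBoundLevel t * Real.log t ^ 2 / t) * (Real.log t)⁻¹ := by
        field_simp
    _ ≤ Real.log t * mertensProduct (upperBoundLevel t) + Real.log t * 4 ^ upperBoundLevel t / N +
          24 * 1 * (Real.log t)⁻¹ := by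
        gcongr
        exact (div_le_one (by linarith)).2 (upperBoundLevel_mul_le (by linarith) (by linarith))
    _ = _ := by rw [mul_one]

theorem exists_eventually_le_cyclicCount_mul_log_div : ∃ C : ℝ,
    ∀ᶠ t : ℝ in atTop, ∀ N : ℕ, (N : ℝ) = Real.exp (Real.exp t) →
      Real.log t * mertensProduct (lowerBoundLevel t) -
        Real.log t * 4 ^ lowerBoundLevel t / Real.exp (Real.exp t) -
        C * ((Real.log t)⁻¹ + Real.log t / t ^ (1 / 8 : ℝ)) ≤ cyclicCount N * Real.log t / N := by
  obtain ⟨C, hC, hcount⟩ := exists_le_cyclicCount_add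
  refine ⟨C, ?_⟩
  filter_upwards [eventually_ge_atTop 1, Real.tendsto_log_atTop.eventually_ge_atTop 1]
    with t ht hlog N hN
  have hN_pos : (0 : ℝ) < N := hN ▸ Real.exp_pos _
  have hloglogN : Real.log (Real.log N) = t := by rw [hN, Real.log_exp, Real.log_exp]
  have hlevel_mul := mul_le_lowerBoundLevel t
  have hlevel : t ≤ lowerBoundLevel t :=
    (le_mul_of_one_le_right (by linarith) (one_le_pow₀ hlog)).trans hlevel_mul
  have hlevel_pos : (0 : ℝ) < lowerBoundLevel t := by linarith
  have hdiv : t / lowerBoundLevel t ≤ (Real.log t ^ 2)⁻¹ := by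
    rw [div_le_iff₀ hlevel_pos, inv_mul_eq_div, le_div_iff₀ (by positivity)]
    exact hlevel_mul
  have hrpow : (lowerBoundLevel t : ℝ) ^ (-(1 / 8) : ℝ) ≤ (t ^ (1 / 8 : ℝ))⁻¹ := by
    rw [← Real.rpow_neg (by linarith)]
    exact Real.rpow_le_rpow_of_nonpos (by linarith) hlevel (by norm_num)
  have hbound := hcount N (lowerBoundLevel t) (by exact_mod_cast hlevel_pos.ne') (by rwa [hloglogN])
  rw [hloglogN] at hbound
  rw [← hN, sub_sub, sub_le_iff_le_add]
  calc Real.log t * mertensProduct (lowerBoundLevel t)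
      = N * mertensProduct (lowerBoundLevel t) * (Real.log t / N) := by field_simp
    _ ≤ (cyclicCount N + 4 ^ lowerBoundLevel t +
          N * (C * ((Real.log t ^ 2)⁻¹ + (t ^ (1 / 8 : ℝ))⁻¹))) * (Real.log t / N) := by
        refine mul_le_mul_of_nonneg_right (hbound.trans ?_) (by positivity)
        gcongr
    _ = _ := by
        field_simp
        ring

/-- With `t = log (log N)`, both sieve bounds are controlled by Mertens' product at a level whose
logarithm is `log t` up to a factor tending to `1`. -/
theorem tendsto_cyclicCount_mul_log_log_log_div :
    Tendsto (fun N : ℕ ↦ cyclicCount N * Real.log (Real.log (Real.log N)) / N) atTop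
      (nhds (Real.exp (-Real.eulerMascheroniConstant))) := by
  obtain ⟨C, hlower⟩ := exists_eventually_le_cyclicCount_mul_log_div
  have hinv : Tendsto (fun t ↦ (Real.log t)⁻¹) atTop (nhds 0) :=
    tendsto_inv_atTop_zero.comp Real.tendsto_log_atTop
  have hrpow : Tendsto (fun t : ℝ ↦ Real.log t / t ^ (1 / 8 : ℝ)) atTop (nhds 0) :=
    (isLittleO_log_rpow_atTop (by norm_num)).tendsto_div_nhds_zero
  have hlower_lim := ((tendsto_log_mul_mertensProduct_of_isEquivalent
    isEquivalent_lowerBoundLevel).sub (tendsto_log_mul_four_pow_div_exp_exp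
      (eventually_le_sq_of_isEquivalent isEquivalent_lowerBoundLevel))).sub
        ((hinv.add hrpow).const_mul C)
  have hupper_lim := ((tendsto_log_mul_mertensProduct_of_isEquivalent
    isEquivalent_upperBoundLevel).add (tendsto_log_mul_four_pow_div_exp_exp
      (eventually_le_sq_of_isEquivalent isEquivalent_upperBoundLevel))).add (hinv.const_mul 24)
  rw [add_zero, mul_zero, sub_zero, sub_zero] at hlower_lim
  rw [mul_zero, add_zero, add_zero] at hupper_lim
  have hexp : ∀ᶠ N : ℕ in atTop, (N : ℝ) = Real.exp (Real.exp (Real.log (Real.log N))) := by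
    filter_upwards [eventually_gt_atTop 1] with N hN
    have hN_one : (1 : ℝ) < N := by exact_mod_cast hN
    rw [Real.exp_log (Real.log_pos hN_one), Real.exp_log (by linarith)]
  refine tendsto_of_tendsto_of_tendsto_of_le_of_le'
    (hlower_lim.comp tendsto_log_log_natCast_atTop)
    (hupper_lim.comp tendsto_log_log_natCast_atTop) ?_ ?_
  · filter_upwards [hexp, tendsto_log_log_natCast_atTop.eventually hlower] with N hN h using h N hN
  · filter_upwards [hexp, tendsto_log_log_natCast_atTop.eventually
      eventually_cyclicCount_mul_log_div_le] with N hN h using h N hN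

theorem infinite_isCyclicNum : (Set.ofPred IsCyclicNum).Infinite := by
  refine Nat.infinite_setOfPred_prime.mono fun p (hp : p.Prime) ↦ ⟨hp.pos, ?_⟩
  rw [Nat.totient_prime hp]
  exact (Nat.coprime_self_sub_right hp.one_le).2 (Nat.coprime_one_right p)

theorem cyclicCount_cyclicNum {n : ℕ} (hn : 1 ≤ n) : cyclicCount (cyclicNum n) = n := by
  have h := Nat.count_nth_succ_of_infinite infinite_isCyclicNum (n - 1)
  rw [Nat.count_eq_card_filter_range, Nat.sub_add_cancel hn] at h
  rwa [cyclicCount, Nat.floor_natCast]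

theorem tendsto_cyclicNum_atTop : Tendsto cyclicNum atTop atTop :=
  (Nat.nth_strictMono infinite_isCyclicNum).tendsto_atTop.comp (tendsto_sub_atTop_nat 1)

theorem isLittleO_log_log_log_log_log :
    (fun x ↦ Real.log (Real.log (Real.log (Real.log x)))) =o[atTop] Real.log := by
  have hlog : Real.log =o[atTop] fun x ↦ x := Real.isLittleO_log_id_atTop
  have hlog₂ := hlog.comp_tendsto Real.tendsto_log_atTop
  have hlog₃ := hlog₂.comp_tendsto Real.tendsto_log_atTop
  exact ((hlog₃.comp_tendsto Real.tendsto_log_atTop).trans hlog₃).trans hlog₂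

section Inversion

variable {a : ℕ → ℝ} {A : ℝ}

theorem isEquivalent_log_of_tendsto_mul_log_log_log_div (hA : 0 < A) (ha : Tendsto a atTop atTop)
    (h : Tendsto (fun n : ℕ ↦ n * Real.log (Real.log (Real.log (a n))) / a n) atTop (nhds A)) :
    (fun n : ℕ ↦ Real.log n) ~[atTop] fun n ↦ Real.log (a n) := by
  have hlog_a : Tendsto (fun n ↦ Real.log (a n)) atTop atTop := Real.tendsto_log_atTop.comp ha
  have hlog_quotient := ((h.log hA.ne').isBigO_one ℝ).trans_isLittleO
    ((isLittleO_const_left (c := (1 : ℝ))).2 (.inr (tendsto_norm_atTop_atTop.comp hlog_a)))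
  refine (hlog_quotient.sub (isLittleO_log_log_log_log_log.comp_tendsto ha)).congr' ?_ .rfl
  filter_upwards [eventually_gt_atTop 0, ha.eventually_gt_atTop 0,
    (Real.tendsto_log_atTop.comp (Real.tendsto_log_atTop.comp hlog_a)).eventually_gt_atTop 0]
    with n hn ha_pos hlog_pos
  have hn_ne : (n : ℝ) ≠ 0 := by positivity
  have hlog_ne : Real.log (Real.log (Real.log (a n))) ≠ 0 := hlog_pos.ne'
  simp only [Function.comp_apply, Pi.sub_apply]
  rw [Real.log_div (mul_ne_zero hn_ne hlog_ne) ha_pos.ne', Real.log_mul hn_ne hlog_ne]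
  ring

theorem isEquivalent_of_tendsto_mul_log_log_log_div (hA : 0 < A) (ha : Tendsto a atTop atTop)
    (h : Tendsto (fun n : ℕ ↦ n * Real.log (Real.log (Real.log (a n))) / a n) atTop (nhds A)) :
    a ~[atTop] fun n ↦ A⁻¹ * n * Real.log (Real.log (Real.log n)) := by
  have hlog_a : Tendsto (fun n ↦ Real.log (a n)) atTop atTop := Real.tendsto_log_atTop.comp ha
  have hlog_log_a := Real.tendsto_log_atTop.comp hlog_a
  have hlog₃ : (fun n : ℕ ↦ Real.log (Real.log (Real.log n))) ~[atTop]
      fun n ↦ Real.log (Real.log (Real.log (a n))) :=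
    ((isEquivalent_log_of_tendsto_mul_log_log_log_div hA ha h).log hlog_a).log hlog_log_a
  have hquotient := ((isEquivalent_const_iff_tendsto hA.ne').2 h).inv
  have hmul := (hquotient.mul (.refl (u := fun n : ℕ ↦ (n : ℝ)))).mul hlog₃.symm
  refine hmul.congr_left ?_
  filter_upwards [eventually_gt_atTop 0, ha.eventually_gt_atTop 0,
    (Real.tendsto_log_atTop.comp hlog_log_a).eventually_gt_atTop 0] with n hn ha_pos hlog_pos
  have hlog_ne : Real.log (Real.log (Real.log (a n))) ≠ 0 := hlog_pos.ne'
  simp only [Pi.mul_apply, Pi.inv_apply]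
  field_simp

end Inversion

end CyclicNumber

theorem cyclicNum_isEquivalent :
    (fun n : ℕ => (cyclicNum n : ℝ)) ~[atTop]
      (fun n : ℕ => Real.exp Real.eulerMascheroniConstant * (n : ℝ) *
        Real.log (Real.log (Real.log n))) := by
  have hcyclicNum : Tendsto (fun n ↦ (cyclicNum n : ℝ)) atTop atTop :=
    tendsto_natCast_atTop_atTop.comp CyclicNumber.tendsto_cyclicNum_atTop
  have hcount : Tendsto
      (fun n : ℕ ↦ n * Real.log (Real.log (Real.log (cyclicNum n))) / cyclicNum n) atTop
      (nhds (Real.exp (-Real.eulerMascheroniConstant))) := by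
    refine (CyclicNumber.tendsto_cyclicCount_mul_log_log_log_div.comp
      CyclicNumber.tendsto_cyclicNum_atTop).congr' ?_
    filter_upwards [eventually_ge_atTop 1] with n hn
    rw [Function.comp_apply, CyclicNumber.cyclicCount_cyclicNum hn]
  simpa only [Real.exp_neg, inv_inv] using
    CyclicNumber.isEquivalent_of_tendsto_mul_log_log_log_div (Real.exp_pos _) hcyclicNum hcount
end

section
/- If c_1 < c_2 < c_3 < ... is the increasing enumeration of the cyclic numbers, then the ratio c_{n+1}/c_n tends to 1 as n → ∞. -/
open Filter Asymptotics Real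

/-!
A product of distinct primes whose pairwise ratios are all less than `3 / 2` is cyclic: `p ∣ q - 1`
with `q < 3 * p / 2` would force `q = p + 1`, that is `p = 2` and `q = 3`, whose ratio is too large.
So it suffices to find, for `c > 1` and large `x`, a product of distinct primes of pairwise ratios
less than `c` in the interval `(x, c * x]`.

By Chebyshev's lower bound for `π` and the pigeonhole principle, there is a set `T` of many primes
up to `N` whose ratios are less than `c`. Starting from the product of the `K` largest elements of
`T`, replace the factors one at a time by the `K` smallest ones: the product changes by a factor
less than `c` at each step, so it meets `(x, c * x]` if `x` lies between the two extreme products.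
As `T` has at least `3 * m` elements, its `m` smallest elements lie below some `u` and its `m`
largest ones at or above `u + m`; the ranges `[u ^ K, (u + m) ^ K)` overlap once
`(1 + m / u) ^ K ≥ u`, so together they contain all `x` in a long interval. For `N = s ^ 8` and
`m = s ^ 6` it contains `[2 ^ s ^ 4, 2 ^ s ^ 6)`, and these intervals cover all large `x`.
-/

theorem isCyclicNum_prod_of_not_dvd_sub_one {S : Finset ℕ} (hprime : ∀ p ∈ S, p.Prime)
    (hdvd : ∀ p ∈ S, ∀ q ∈ S, ¬ p ∣ q - 1) : IsCyclicNum (∏ p ∈ S, p) := by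
  have hpos : 0 < ∏ p ∈ S, p := Finset.prod_pos fun p hp => (hprime p hp).pos
  have htotient : Nat.totient (∏ p ∈ S, p) = ∏ q ∈ S, (q - 1) := by
    have h := Nat.totient_eq_div_primeFactors_mul (∏ p ∈ S, p)
    rwa [Nat.primeFactors_prod hprime, Nat.div_self hpos, one_mul] at h
  refine ⟨hpos, ?_⟩
  rw [htotient]
  exact Nat.Coprime.prod_left fun p hp => Nat.Coprime.prod_right fun q hq =>
    (hprime p hp).coprime_iff_not_dvd.2 (hdvd p hp q hq)

theorem not_dvd_sub_one_of_two_mul_lt_three_mul {p q : ℕ} (hp : p.Prime) (hq : q.Prime)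
    (hlt : 2 * q < 3 * p) : ¬ p ∣ q - 1 := by
  rintro ⟨k, hk⟩
  have hq_two := hq.two_le
  have hk_one : k = 1 := by
    have hk_pos : k ≠ 0 := by rintro rfl; omega
    have hk_lt : k < 2 := by
      by_contra! hk_ge
      have := Nat.mul_le_mul_left p hk_ge
      omega
    omega
  subst hk_one
  rcases hp.eq_two_or_odd with h | h <;> rcases hq.eq_two_or_odd with h' | h' <;> omega

theorem exists_subset_lt_prod_le_mul_of_card_eq {ι R : Type*} [CommSemiring R] [LinearOrder R]
    [IsOrderedRing R] {f : ι → R} {T S₀ S₁ : Finset ι} {c x : R}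
    (hf : ∀ i ∈ T, 0 ≤ f i) (hc : 0 ≤ c) (hratio : ∀ i ∈ T, ∀ j ∈ T, f i ≤ c * f j)
    (hS₀ : S₀ ⊆ T) (hS₁ : S₁ ⊆ T) (hcard : S₀.card = S₁.card)
    (hlow : ∏ i ∈ S₀, f i ≤ x) (hhigh : x < ∏ i ∈ S₁, f i) :
    ∃ S ⊆ T, x < ∏ i ∈ S, f i ∧ ∏ i ∈ S, f i ≤ c * x := by
  classical
  induction h : (S₁ \ S₀).card generalizing S₁ with
  | zero =>
    have : S₁ = S₀ := Finset.eq_of_subset_of_card_le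
      (Finset.sdiff_eq_empty_iff_subset.1 (Finset.card_eq_zero.1 h)) hcard.le
    exact absurd hhigh (this ▸ hlow).not_gt
  | succ d ih =>
    obtain ⟨i, hi⟩ : (S₁ \ S₀).Nonempty := Finset.card_pos.1 (by omega)
    obtain ⟨j, hj⟩ : (S₀ \ S₁).Nonempty :=
      Finset.card_pos.1 (by rw [Finset.card_sdiff_comm hcard]; omega)
    rw [Finset.mem_sdiff] at hi hj
    have hj_erase : j ∉ S₁.erase i := fun hmem => hj.2 (Finset.mem_of_mem_erase hmem)
    set S := insert j (S₁.erase i)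
    have hS : S ⊆ T :=
      Finset.insert_subset (hS₀ hj.1) ((Finset.erase_subset _ _).trans hS₁)
    by_cases hxS : x < ∏ k ∈ S, f k
    · refine ih hS ?_ hxS ?_
      · rw [hcard, Finset.card_insert_of_notMem hj_erase, Finset.card_erase_add_one hi.1]
      · rw [Finset.insert_sdiff_of_mem _ hj.1, Finset.erase_sdiff_comm,
          Finset.card_erase_of_mem (Finset.mem_sdiff.2 hi), h, Nat.add_sub_cancel]
    · refine ⟨S₁, hS₁, hhigh, ?_⟩
      have hrest : 0 ≤ ∏ k ∈ S₁.erase i, f k :=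
        Finset.prod_nonneg fun k hk => hf k (hS₁ (Finset.mem_of_mem_erase hk))
      calc ∏ k ∈ S₁, f k = f i * ∏ k ∈ S₁.erase i, f k := (Finset.mul_prod_erase _ _ hi.1).symm
        _ ≤ c * f j * ∏ k ∈ S₁.erase i, f k := by gcongr; exact hratio i (hS₁ hi.1) j (hS₀ hj.1)
        _ = c * ∏ k ∈ S, f k := by rw [Finset.prod_insert hj_erase, mul_assoc]
        _ ≤ c * x := by gcongr; exact not_lt.1 hxS

theorem exists_mem_card_filter_lt_eq {T : Finset ℕ} {m : ℕ} (hm : m < T.card) :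
    ∃ u ∈ T, (T.filter (· < u)).card = m := by
  have hfin : ∀ hf : (Set.ofPred (· ∈ T)).Finite, m < hf.toFinset.card := fun hf => by
    rwa [show hf.toFinset = T by ext; simp]
  refine ⟨Nat.nth (· ∈ T) m, Nat.nth_mem m hfin, ?_⟩
  conv_rhs => rw [← Nat.count_nth hfin, Nat.count_eq_card_filter_range]
  congr 1
  ext
  simp [and_comm]

theorem card_le_card_filter_lt_add_add_card_filter_le (T : Finset ℕ) (u m : ℕ) :
    T.card ≤ (T.filter (· < u)).card + m + (T.filter (u + m ≤ ·)).card := by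
  have hcover : T ⊆ T.filter (· < u) ∪ Finset.Ico u (u + m) ∪ T.filter (u + m ≤ ·) := by
    intro p hp
    simp only [Finset.mem_union, Finset.mem_filter, Finset.mem_Ico, hp, true_and]
    omega
  calc T.card ≤ _ := Finset.card_le_card hcover
    _ ≤ _ := Finset.card_union_le _ _
    _ ≤ (T.filter (· < u)).card + (Finset.Ico u (u + m)).card + (T.filter (u + m ≤ ·)).card := by
      gcongr; exact Finset.card_union_le _ _
    _ = _ := by rw [Nat.card_Ico, Nat.add_sub_cancel_left]

theorem pow_succ_le_add_pow {u m r j K : ℕ} (hr : u ≤ r * m) (hj : u ≤ 2 ^ j) (hK : r * j ≤ K) :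
    u ^ (K + 1) ≤ (u + m) ^ K := by
  rcases u.eq_zero_or_pos with rfl | hu
  · simp
  have hr_ne : r ≠ 0 := by
    rintro rfl
    omega
  have hdouble : 2 * u ^ r ≤ (u + m) ^ r := by
    calc 2 * u ^ r = u ^ r + u ^ (r - 1) * u := by rw [pow_sub_one_mul hr_ne, two_mul]
      _ ≤ u ^ r + u ^ (r - 1) * (r * m) := by gcongr
      _ = u ^ r + r * u ^ (r - 1) * m := by ring
      _ ≤ (u + m) ^ r := pow_add_mul_le_add_pow u.zero_le (by positivity) r
  obtain ⟨d, rfl⟩ := Nat.exists_eq_add_of_le hK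
  calc u ^ (r * j + d + 1) = u * (u ^ r) ^ j * u ^ d := by ring
    _ ≤ 2 ^ j * (u ^ r) ^ j * (u + m) ^ d := by gcongr; omega
    _ = (2 * u ^ r) ^ j * (u + m) ^ d := by rw [mul_pow]
    _ ≤ ((u + m) ^ r) ^ j * (u + m) ^ d := by gcongr
    _ = (u + m) ^ (r * j + d) := by ring

theorem exists_pow_le_lt_add_pow {u m r j x : ℕ} (hu : 2 ≤ u) (hr : u ≤ r * m) (hj : u ≤ 2 ^ j)
    (hlow : 2 ^ (r * j ^ 2) ≤ x) (hhigh : x < 2 ^ m) :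
    ∃ K ≤ m, u ^ K ≤ x ∧ x < (u + m) ^ K := by
  have hx : x ≠ 0 := ((Nat.two_pow_pos _).trans_le hlow).ne'
  have hK_low : u ^ Nat.log u x ≤ x := Nat.pow_log_le_self u hx
  refine ⟨Nat.log u x, ?_, hK_low, ?_⟩
  · refine ((Nat.pow_lt_pow_iff_right one_lt_two).1 ?_).le
    calc 2 ^ Nat.log u x ≤ u ^ Nat.log u x := by gcongr
      _ ≤ x := hK_low
      _ < 2 ^ m := hhigh
  · have hK_ge : r * j ≤ Nat.log u x := by
      refine Nat.le_log_of_pow_le hu ?_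
      calc u ^ (r * j) ≤ (2 ^ j) ^ (r * j) := by gcongr
        _ = 2 ^ (r * j ^ 2) := by ring
        _ ≤ x := hlow
    exact (Nat.lt_pow_succ_log_self hu x).trans_le (pow_succ_le_add_pow hr hj hK_ge)

theorem exists_subset_lt_prod_le_mul_of_three_mul_le_card {T : Finset ℕ} {c : ℝ} {m r j x : ℕ}
    (hc : 0 ≤ c) (hratio : ∀ p ∈ T, ∀ q ∈ T, (p : ℝ) ≤ c * q) (hcard : 3 * m ≤ T.card)
    (htwo : ∀ p ∈ T, 2 ≤ p) (hr : ∀ p ∈ T, p ≤ r * m) (hj : ∀ p ∈ T, p ≤ 2 ^ j)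
    (hlow : 2 ^ (r * j ^ 2) ≤ x) (hhigh : x < 2 ^ m) :
    ∃ S ⊆ T, x < ∏ p ∈ S, p ∧ ((∏ p ∈ S, p : ℕ) : ℝ) ≤ c * x := by
  have hm : m ≠ 0 := by
    rintro rfl
    have := (Nat.two_pow_pos _).trans_le hlow
    omega
  obtain ⟨u, hu, hcard_low⟩ := exists_mem_card_filter_lt_eq (show m < T.card by omega)
  have hcard_high : m ≤ (T.filter (u + m ≤ ·)).card := by
    have := card_le_card_filter_lt_add_add_card_filter_le T u m
    omega
  obtain ⟨K, hK, hK_low, hK_high⟩ :=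
    exists_pow_le_lt_add_pow (htwo u hu) (hr u hu) (hj u hu) hlow hhigh
  obtain ⟨S₀, hS₀, hcard₀⟩ := Finset.exists_subset_card_eq (hK.trans hcard_low.ge)
  obtain ⟨S₁, hS₁, hcard₁⟩ := Finset.exists_subset_card_eq (hK.trans hcard_high)
  have hprod₀ : ∏ p ∈ S₀, p ≤ x := by
    refine (Finset.prod_le_pow_card S₀ _ u fun p hp => ?_).trans (hcard₀ ▸ hK_low)
    exact (Finset.mem_filter.1 (hS₀ hp)).2.le
  have hprod₁ : x < ∏ p ∈ S₁, p := by
    refine (hcard₁ ▸ hK_high).trans_le (Finset.pow_card_le_prod S₁ _ (u + m) fun p hp => ?_)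
    exact (Finset.mem_filter.1 (hS₁ hp)).2
  obtain ⟨S, hS, hxS, hSx⟩ := exists_subset_lt_prod_le_mul_of_card_eq (f := ((↑) : ℕ → ℝ))
    (x := (x : ℝ)) (fun p _ => p.cast_nonneg) hc hratio (hS₀.trans (Finset.filter_subset _ _))
    (hS₁.trans (Finset.filter_subset _ _)) (hcard₀.trans hcard₁.symm)
    (by rw [← Nat.cast_prod]; exact_mod_cast hprod₀)
    (by rw [← Nat.cast_prod]; exact_mod_cast hprod₁)
  rw [← Nat.cast_prod] at hxS hSx
  exact ⟨S, hS, mod_cast hxS, hSx⟩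

theorem exists_subset_le_card_forall_lt_mul {A : Finset ℕ} {c : ℝ} {N k : ℕ} (hc : 1 < c)
    (hpos : ∀ p ∈ A, 0 < p) (hle : ∀ p ∈ A, p ≤ N)
    (hcard : (⌊logb c N⌋₊ + 1) * k ≤ A.card) :
    ∃ T ⊆ A, k ≤ T.card ∧ ∀ p ∈ T, ∀ q ∈ T, (p : ℝ) < c * q := by
  have hmaps : ∀ p ∈ A, ⌊logb c p⌋₊ ∈ Finset.range (⌊logb c N⌋₊ + 1) := by
    intro p hp
    rw [Finset.mem_range, Nat.lt_succ_iff]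
    have := hpos p hp
    gcongr
    exact hle p hp
  obtain ⟨i, -, hi⟩ := Finset.exists_le_card_fiber_of_mul_le_card_of_maps_to hmaps
    (by simp) (by rwa [Finset.card_range])
  refine ⟨_, Finset.filter_subset _ _, hi, fun p hp q hq => ?_⟩
  rw [Finset.mem_filter] at hp hq
  have hp_pos : (0 : ℝ) < p := mod_cast hpos p hp.1
  have hq_one : (1 : ℝ) ≤ q := mod_cast hpos q hq.1
  have hp_lt : logb c p < i + 1 := hp.2 ▸ Nat.lt_floor_add_one _
  have hq_le : i ≤ logb c q := hq.2 ▸ Nat.floor_le (logb_nonneg hc hq_one)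
  rw [← logb_lt_logb_iff hc hp_pos (by positivity), logb_mul (by positivity) (by positivity),
    logb_self_eq_one hc]
  linarith

theorem eventually_log_natCast_le_mul {a : ℝ} (ha : 0 < a) :
    ∀ᶠ n : ℕ in atTop, log n ≤ a * n := by
  filter_upwards [(isLittleO_log_id_atTop.comp_tendsto tendsto_natCast_atTop_atTop).bound ha]
    with n hn
  simpa [abs_of_nonneg (log_natCast_nonneg n)] using hn

theorem eventually_half_le_primeCounting_mul_log :
    ∀ᶠ n : ℕ in atTop, (n : ℝ) / 2 ≤ Nat.primeCounting n * log n := by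
  have hlog := (tendsto_add_atTop_nat 1).eventually
    (eventually_log_natCast_le_mul (show (0 : ℝ) < 1 / 16 by norm_num))
  filter_upwards [hlog, eventually_ge_atTop 1] with n hlog hn
  push_cast at hlog
  have hn_one : (1 : ℝ) ≤ n := mod_cast hn
  calc (n : ℝ) / 2 ≤ n * log 2 - log (n + 1) := by nlinarith [log_two_gt_d9]
    _ ≤ Chebyshev.psi n := Chebyshev.psi_ge n
    _ ≤ Nat.primeCounting n * log n := Chebyshev.psi_le_primeCounting_mul_log n

theorem eventually_mul_pow_six_le_primeCounting_pow_eight {c : ℝ} (hc : 1 < c) :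
    ∀ᶠ s : ℕ in atTop,
      (⌊logb c (s ^ 8 : ℕ)⌋₊ + 1) * (3 * s ^ 6) ≤ Nat.primeCounting (s ^ 8) := by
  have hlogc : 0 < log c := log_pos hc
  filter_upwards [eventually_log_natCast_le_mul (show 0 < log c / 16 by positivity),
    eventually_log_natCast_le_mul (show (0 : ℝ) < 1 / 48 by norm_num),
    (tendsto_pow_atTop (n := 8) (by norm_num)).eventually eventually_half_le_primeCounting_mul_log,
    eventually_ge_atTop 2] with s hlog_cell hlog hcount hs
  have hs_two : (2 : ℝ) ≤ s := mod_cast hs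
  have hlog_pos : 0 < 8 * log s := mul_pos (by norm_num) (log_pos (by linarith))
  have hcells : (⌊logb c (s ^ 8 : ℕ)⌋₊ + 1 : ℝ) ≤ s := by
    have hlogb : logb c (s ^ 8 : ℕ) ≤ s / 2 := by
      rw [logb, div_le_iff₀ hlogc]
      push_cast [log_pow]
      linarith
    have hfloor := Nat.floor_le (logb_nonneg hc (by exact_mod_cast Nat.one_le_pow _ _ (by omega)) :
      0 ≤ logb c (s ^ 8 : ℕ))
    linarith
  push_cast [log_pow] at hcount
  suffices ((⌊logb c (s ^ 8 : ℕ)⌋₊ + 1 : ℝ) * (3 * s ^ 6)) ≤ Nat.primeCounting (s ^ 8) by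
    exact_mod_cast this
  refine le_of_mul_le_mul_right ?_ hlog_pos
  calc (⌊logb c (s ^ 8 : ℕ)⌋₊ + 1 : ℝ) * (3 * s ^ 6) * (8 * log s)
      ≤ s * (3 * s ^ 6) * (8 * (1 / 48 * s)) := by gcongr
    _ = (s : ℝ) ^ 8 / 2 := by ring
    _ ≤ Nat.primeCounting (s ^ 8) * (8 * log s) := hcount

theorem eventually_exists_isCyclicNum_of_mem_Ico_two_pow {c : ℝ} (hc : 1 < c) (hc' : c ≤ 3 / 2) :
    ∀ᶠ s : ℕ in atTop, ∀ x ∈ Set.Ico (2 ^ s ^ 4) (2 ^ s ^ 6),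
      ∃ n, IsCyclicNum n ∧ x < n ∧ (n : ℝ) ≤ c * x := by
  have hpow : ∀ᶠ s : ℕ in atTop, s ^ 8 ≤ 2 ^ s := by
    filter_upwards [(tendsto_pow_const_div_const_pow_of_one_lt 8 one_lt_two).eventually_le_const
      one_pos] with s hs
    rw [div_le_one (by positivity)] at hs
    exact_mod_cast hs
  filter_upwards [hpow, eventually_mul_pow_six_le_primeCounting_pow_eight hc] with
    s hpow hcount x ⟨hlow, hhigh⟩
  rw [← Nat.primesLE_card_eq_primeCounting] at hcount
  obtain ⟨T, hT, hcard, hratio⟩ := exists_subset_le_card_forall_lt_mul hc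
    (fun p hp => (Nat.prime_of_mem_primesLE hp).pos) (fun p hp => (Nat.mem_primesLE.1 hp).1) hcount
  have hprime : ∀ p ∈ T, p.Prime := fun p hp => Nat.prime_of_mem_primesLE (hT hp)
  have hle : ∀ p ∈ T, p ≤ s ^ 8 := fun p hp => (Nat.mem_primesLE.1 (hT hp)).1
  obtain ⟨S, hS, hxS, hSx⟩ := exists_subset_lt_prod_le_mul_of_three_mul_le_card
    (m := s ^ 6) (r := s ^ 2) (j := s) (x := x) (by linarith)
    (fun p hp q hq => (hratio p hp q hq).le) hcard
    (fun p hp => (hprime p hp).two_le) (fun p hp => (hle p hp).trans_eq (by ring))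
    (fun p hp => (hle p hp).trans hpow) (by rwa [← pow_add]) hhigh
  refine ⟨_, isCyclicNum_prod_of_not_dvd_sub_one (fun p hp => hprime p (hS hp)) ?_, hxS, hSx⟩
  intro p hp q hq
  refine not_dvd_sub_one_of_two_mul_lt_three_mul (hprime p (hS hp)) (hprime q (hS hq)) ?_
  have hlt : (q : ℝ) < 3 / 2 * p := (hratio q (hS hq) p (hS hp)).trans_le (by gcongr)
  have : (2 * q : ℝ) < 3 * p := by linarith
  exact_mod_cast this

theorem eventually_exists_isCyclicNum_lt_le_mul {c : ℝ} (hc : 1 < c) :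
    ∀ᶠ x : ℕ in atTop, ∃ n, IsCyclicNum n ∧ x < n ∧ (n : ℝ) ≤ c * x := by
  obtain ⟨s₀, hs₀⟩ := eventually_atTop.1 <| eventually_exists_isCyclicNum_of_mem_Ico_two_pow
    (lt_min hc (by norm_num : (1 : ℝ) < 3 / 2)) (min_le_right _ _)
  filter_upwards [eventually_ge_atTop (2 ^ (max s₀ 4) ^ 4)] with x hx
  have hx_ne : x ≠ 0 := ((Nat.two_pow_pos _).trans_le hx).ne'
  set s := Nat.nthRoot 4 (Nat.log 2 x)
  have hs_ge : max s₀ 4 ≤ s :=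
    (Nat.le_nthRoot_iff four_ne_zero).2 (Nat.le_log_of_pow_le one_lt_two hx)
  have hs_four : 4 ≤ s := (le_max_right _ _).trans hs_ge
  have hlow : 2 ^ s ^ 4 ≤ x :=
    Nat.pow_le_of_le_log hx_ne ((Nat.le_nthRoot_iff four_ne_zero).1 le_rfl)
  have hhigh : x < 2 ^ s ^ 6 := by
    refine Nat.lt_pow_of_log_lt one_lt_two ?_
    calc Nat.log 2 x < (s + 1) ^ 4 := Nat.lt_pow_nthRoot_add_one four_ne_zero _
      _ ≤ (2 * s) ^ 4 := by gcongr; omega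
      _ = 4 ^ 2 * s ^ 4 := by ring
      _ ≤ s ^ 2 * s ^ 4 := by gcongr
      _ = s ^ 6 := by ring
  obtain ⟨n, hn, hxn, hnx⟩ := hs₀ s ((le_max_left _ _).trans hs_ge) x ⟨hlow, hhigh⟩
  exact ⟨n, hn, hxn, hnx.trans (by gcongr; exact min_le_left _ _)⟩

theorem tendsto_nth_succ_div_nth {P : ℕ → Prop}
    (h : ∀ c : ℝ, 1 < c → ∀ᶠ x : ℕ in atTop, ∃ n, P n ∧ x < n ∧ (n : ℝ) ≤ c * x) :
    Tendsto (fun k => (Nat.nth P (k + 1) : ℝ) / Nat.nth P k) atTop (nhds 1) := by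
  have hinf : (Set.ofPred P).Infinite := by
    refine Nat.frequently_atTop_iff_infinite.1 (frequently_atTop.2 fun a => ?_)
    obtain ⟨x, ⟨n, hn, hxn, -⟩, hax⟩ := ((h 2 one_lt_two).and (eventually_ge_atTop a)).exists
    exact ⟨n, hax.trans hxn.le, hn⟩
  have hmono := Nat.nth_strictMono hinf
  refine tendsto_order.2 ⟨fun b hb => ?_, fun b hb => ?_⟩
  · filter_upwards [hmono.tendsto_atTop.eventually_gt_atTop 0] with k hk
    refine hb.trans_le ((one_le_div (by exact_mod_cast hk)).2 ?_)
    exact_mod_cast (hmono k.lt_succ_self).le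
  · obtain ⟨c, hc, hcb⟩ := exists_between hb
    filter_upwards [hmono.tendsto_atTop.eventually (h c hc),
      hmono.tendsto_atTop.eventually_gt_atTop 0] with k ⟨n, hn, hlt, hle⟩ hk
    have hnth_le : Nat.nth P (k + 1) ≤ n := by
      by_contra! hcon
      exact (Nat.le_nth_of_lt_nth_succ hcon hn).not_gt hlt
    refine lt_of_le_of_lt ((div_le_iff₀ (by exact_mod_cast hk)).2 ?_) hcb
    exact le_trans (by exact_mod_cast hnth_le) hle

theorem cyclicNum_succ_div_tendsto_one :
    Tendsto (fun n : ℕ => (cyclicNum (n + 1) : ℝ) / (cyclicNum n : ℝ)) atTop (nhds 1) := by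
  rw [← tendsto_add_atTop_iff_nat 1]
  exact tendsto_nth_succ_div_nth fun _ => eventually_exists_isCyclicNum_lt_le_mul
end
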